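/- arXiv:1709.05685 — 3 statements merged into one kernel-verified Lean document; each statement's English description precedes it below -/
import Mathlib

section
/- Let R be the t×n Hankel determinantal ring over a field F (2 ≤ t ≤ n), and Δ the image in R of the determinant of the top-left (t-1)×(t-1) submatrix of the Hankel matrix. Then the localization R_Δ equals the localization at Δ of the subring F[x_1,...,x_{2t-2}], and the images of x_1,...,x_{2t-2} in R are algebraically independent over F. -/
set_option synthInstance.maxHeartbeats 1000000
set_option maxHeartbeats 1000000

open MvPolynomial Matrix

theorem hk_det_mem {F B : Type*} [Field F] [CommRing B] [Algebra F B] (A : Subalgebra F B)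
    {m : ℕ} (M : Matrix (Fin m) (Fin m) B) (h : ∀ i j, M i j ∈ A) : M.det ∈ A := by
  rw [Matrix.det_apply]
  refine Subalgebra.sum_mem _ fun σ _ => ?_
  rw [Units.smul_def]
  exact Subalgebra.zsmul_mem _ (Subalgebra.prod_mem _ fun i _ => h _ _) _

theorem hk_step {F B : Type*} [Field F] [CommRing B] [Algebra F B] (A : Subalgebra F B)
    (x : ℕ → B) (m k : ℕ) (hk : 2 * m ≤ k) (hx : ∀ i < k, x i ∈ A)
    (h0 : (Matrix.of fun (i j : Fin (m + 1)) =>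
      x ((i : ℕ) + if (j : ℕ) < m then (j : ℕ) else k - m)).det = 0)
    (d : B) (hd : d ∈ A) (hd1 : d * (Matrix.of fun (i j : Fin m) => x ((i : ℕ) + j)).det = 1) :
    x k ∈ A := by
  rw [Matrix.det_succ_row _ (Fin.last m), Fin.sum_univ_castSucc] at h0
  have e : (Matrix.of fun (i j : Fin (m + 1)) =>
      x ((i : ℕ) + if (j : ℕ) < m then (j : ℕ) else k - m)).submatrix
      (Fin.last m).succAbove (Fin.last m).succAbove
      = Matrix.of fun (i j : Fin m) => x ((i : ℕ) + j) := by
    ext i j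
    simp
  rw [e] at h0
  have hs : ((-1 : B)) ^ ((Fin.last m : ℕ) + (Fin.last m : ℕ)) = 1 := by
    rw [← two_mul, pow_mul]; simp
  rw [hs] at h0
  have hl : (Matrix.of fun (i j : Fin (m + 1)) =>
      x ((i : ℕ) + if (j : ℕ) < m then (j : ℕ) else k - m)) (Fin.last m) (Fin.last m) = x k := by
    simp only [Matrix.of_apply, Fin.val_last, lt_irrefl, if_false]
    congr 1; omega
  rw [hl] at h0
  set S : B := ∑ i : Fin m, _ with hS
  have hSA : S ∈ A := by
    refine Subalgebra.sum_mem _ fun j _ => ?_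
    refine Subalgebra.mul_mem _ (Subalgebra.mul_mem _ ?_ ?_) ?_
    · exact Subalgebra.pow_mem _ (Subalgebra.neg_mem _ (Subalgebra.one_mem _)) _
    · simp only [Matrix.of_apply]
      apply hx
      have := j.2
      simp; omega
    · apply hk_det_mem
      intro i l
      simp only [Matrix.submatrix_apply, Matrix.of_apply]
      apply hx
      have := i.2
      have : ((Fin.last m).succAbove i : ℕ) = i := by simp
      rw [this]
      split_ifs <;> omega
  have : x k = - (d * S) := by linear_combination (-x k) * hd1 + d * h0
  rw [this]
  exact Subalgebra.neg_mem _ (Subalgebra.mul_mem _ hd hSA)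

theorem hk_delta_ne {F : Type*} [Field F] (m : ℕ) :
    (Matrix.of fun (i j : Fin m) =>
      (X ⟨(i : ℕ) + j, by omega⟩ : MvPolynomial (Fin (2 * m)) F)).det ≠ 0 := by
  intro h
  have h2 := congrArg (aeval (fun k : Fin (2 * m) => if (k : ℕ) + 1 = m then (1 : F) else 0)) h
  rw [AlgHom.map_det, map_zero] at h2
  have : (aeval (fun k : Fin (2 * m) => if (k : ℕ) + 1 = m then (1 : F) else 0)).mapMatrix
     (Matrix.of fun (i j : Fin m) =>
      (X ⟨(i : ℕ) + j, by omega⟩ : MvPolynomial (Fin (2 * m)) F))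
      = (1 : Matrix (Fin m) (Fin m) F).submatrix Fin.revPerm id := by
    ext i j
    simp only [AlgHom.mapMatrix_apply, Matrix.map_apply, Matrix.of_apply, aeval_X,
      Matrix.submatrix_apply, Matrix.one_apply, id, Fin.revPerm_apply, Fin.ext_iff, Fin.val_rev]
    congr 1
    apply propext
    omega
  rw [this, Matrix.det_permute, Matrix.det_one, mul_one] at h2
  have hu : IsUnit (((Equiv.Perm.sign (Fin.revPerm : Equiv.Perm (Fin m)) : ℤˣ) : ℤ) : F) :=
    ((Equiv.Perm.sign (Fin.revPerm : Equiv.Perm (Fin m))).isUnit).map (Int.castRingHom F)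
  exact hu.ne_zero h2

theorem hk_seq (F : Type*) [Field F] (m : ℕ) :
    ∃ (z : ℕ → FractionRing (MvPolynomial (Fin (2 * m)) F))
      (c : Fin m → FractionRing (MvPolynomial (Fin (2 * m)) F)),
      AlgebraicIndependent F (fun i : Fin (2 * m) => z i) ∧
      ∀ k, z (k + m) = ∑ j, c j * z (k + j) := by
  set K := FractionRing (MvPolynomial (Fin (2 * m)) F) with hK
  set φ := algebraMap (MvPolynomial (Fin (2 * m)) F) K with hφ
  have hinj : Function.Injective φ := IsFractionRing.injective _ _
  set M : Matrix (Fin m) (Fin m) K := Matrix.of fun i j => φ (X ⟨(i : ℕ) + j, by omega⟩) with hM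
  have hdet : IsUnit M.det := by
    rw [isUnit_iff_ne_zero]
    have : M = φ.mapMatrix (Matrix.of fun (i j : Fin m) =>
      (X ⟨(i : ℕ) + j, by omega⟩ : MvPolynomial (Fin (2 * m)) F)) := by
      ext i j; simp [hM]
    rw [this, ← RingHom.map_det]
    exact (map_ne_zero_iff _ hinj).2 (hk_delta_ne m)
  set v : Fin m → K := fun i => φ (X ⟨(i : ℕ) + m, by omega⟩) with hv
  set c : Fin m → K := M⁻¹ *ᵥ v with hc
  have hMc : M *ᵥ c = v := by
    rw [hc, Matrix.mulVec_mulVec, Matrix.mul_nonsing_inv _ hdet, Matrix.one_mulVec]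
  set E : LinearRecurrence K := ⟨m, c⟩ with hE
  set z : ℕ → K := E.mkSol (fun i : Fin m => φ (X ⟨(i : ℕ), by omega⟩)) with hz
  have hsol : ∀ k, z (k + m) = ∑ j, c j * z (k + j) := E.is_sol_mkSol _
  have hinit : ∀ i (hi : i < 2 * m), z i = φ (X ⟨i, hi⟩) := by
    intro i
    induction i using Nat.strong_induction_on with
    | _ i ih =>
      intro hi
      by_cases him : i < m
      · exact E.mkSol_eq_init (fun i : Fin m => φ (X ⟨(i : ℕ), by omega⟩)) ⟨i, him⟩
      · obtain ⟨l, rfl⟩ : ∃ l, i = l + m := ⟨i - m, by omega⟩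
        have hl : l < m := by omega
        rw [hsol]
        have := congrFun hMc ⟨l, hl⟩
        simp only [hv] at this
        rw [← this]
        simp only [Matrix.mulVec, dotProduct]
        refine Finset.sum_congr rfl fun j _ => ?_
        rw [ih (l + j) (by omega) (by omega), mul_comm]
        rfl
  refine ⟨z, c, ?_, hsol⟩
  have h1 : (fun i : Fin (2 * m) => z i) =
      (IsScalarTower.toAlgHom F (MvPolynomial (Fin (2 * m)) F) K) ∘ X := by
    ext i
    simp [hinit i i.2, hφ]
  rw [h1]
  exact (MvPolynomial.algebraicIndependent_X (Fin (2 * m)) F).map' hinj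

/-- In the `t×n` Hankel determinantal ring `R` the images of `x_1,...,x_{2t-2}` are
algebraically independent over `F`, and the localization `R_Δ` at
`Δ = [1 ... t-1 | 1 ... t-1]` coincides with the localization of `F[x_1,...,x_{2t-2}]` at `Δ`:
i.e. `R_Δ` is generated as an `F`-algebra by the images of `x_1,...,x_{2t-2}` together with
`Δ⁻¹`. -/
theorem hankel_localization_delta (F : Type*) [Field F] (t n : ℕ) (ht : 2 ≤ t) (htn : t ≤ n)
    (H : Matrix (Fin t) (Fin n) (MvPolynomial (Fin (n + t - 1)) F))
    (hH : ∀ a b, H a b = X ⟨(a : ℕ) + (b : ℕ), by have := a.2; have := b.2; omega⟩)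
    (I : Ideal (MvPolynomial (Fin (n + t - 1)) F))
    (hI : I = Ideal.span (Set.range fun g : Fin t → Fin n => (H.submatrix id g).det))
    (Δ : MvPolynomial (Fin (n + t - 1)) F ⧸ I)
    (hΔ : Δ = Ideal.Quotient.mk I
      ((H.submatrix (fun i : Fin (t - 1) => (⟨i.1, by have := i.2; omega⟩ : Fin t))
        (fun j : Fin (t - 1) => (⟨j.1, by have := j.2; omega⟩ : Fin n))).det)) :
    AlgebraicIndependent F (fun i : Fin (2 * t - 2) =>
      Ideal.Quotient.mk I (X (⟨i.1, by have := i.2; omega⟩ : Fin (n + t - 1)))) ∧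
    Algebra.adjoin F
      ({y : Localization.Away Δ | ∃ i : Fin (2 * t - 2),
          y = algebraMap _ _ (Ideal.Quotient.mk I
            (X (⟨i.1, by have := i.2; omega⟩ : Fin (n + t - 1))))} ∪
        {IsLocalization.Away.invSelf (S := Localization.Away Δ) Δ}) = ⊤ := by
  obtain ⟨m, rfl⟩ : ∃ m, t = m + 1 := ⟨t - 1, by omega⟩
  constructor
  · obtain ⟨z, c, hz, hrec⟩ := hk_seq F m
    set f := aeval (R := F) (fun i : Fin (n + (m + 1) - 1) => z i) with hf
    have hfI : ∀ a ∈ I, f a = 0 := by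
      have : I ≤ RingHom.ker f := by
        rw [hI, Ideal.span_le]
        rintro _ ⟨g, rfl⟩
        simp only [SetLike.mem_coe, RingHom.mem_ker]
        rw [AlgHom.map_det]
        rw [← Matrix.exists_vecMul_eq_zero_iff]
        refine ⟨Fin.snoc (α := fun _ => _) c (-1), ?_, ?_⟩
        · intro h
          have := congrFun h (Fin.last m)
          simp at this
        · ext j
          simp only [Matrix.vecMul, dotProduct, Fin.sum_univ_castSucc, Fin.snoc_castSucc,
            Fin.snoc_last, AlgHom.mapMatrix_apply, Matrix.map_apply, Matrix.submatrix_apply, hH,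
            id, hf, aeval_X, Fin.val_castSucc, Fin.val_last, Pi.zero_apply]
          have := hrec (g j)
          rw [add_comm m, this]
          simp [add_comm]
      exact fun a ha => this ha
    refine AlgebraicIndependent.of_comp (Ideal.Quotient.liftₐ I f hfI) ?_
    have key : ∀ i : Fin (2 * (m + 1) - 2), Ideal.Quotient.liftₐ I f hfI (Ideal.Quotient.mk I
      (X (⟨i.1, by have := i.2; omega⟩ : Fin (n + (m + 1) - 1)))) = z i := by
      intro i
      have h3 : f (X (⟨i.1, by have := i.2; omega⟩ : Fin (n + (m + 1) - 1))) = z i := by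
        simp [hf]
      exact h3
    have key2 := funext key
    have hz2 : AlgebraicIndependent F (fun i : Fin (2 * (m + 1) - 2) => z i) := hz
    rw [← key2] at hz2
    exact hz2
  · set A : Subalgebra F (Localization.Away Δ) := Algebra.adjoin F _ with hA
    have hdA : IsLocalization.Away.invSelf (S := Localization.Away Δ) Δ ∈ A :=
      Algebra.subset_adjoin (Or.inr rfl)
    set ψ : MvPolynomial (Fin (n + (m + 1) - 1)) F →ₐ[F] Localization.Away Δ :=
      (IsScalarTower.toAlgHom F (MvPolynomial (Fin (n + (m + 1) - 1)) F ⧸ I)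
        (Localization.Away Δ)).comp (Ideal.Quotient.mkₐ F I) with hψ
    have hψa : ∀ p, ψ p = algebraMap _ (Localization.Away Δ) (Ideal.Quotient.mk I p) :=
      fun p => rfl
    set x : ℕ → Localization.Away Δ := fun k =>
      if h : k < n + (m + 1) - 1 then ψ (X ⟨k, h⟩) else 0 with hx
    have hxv : ∀ k (h : k < n + (m + 1) - 1), x k = ψ (X ⟨k, h⟩) := fun k h => by
      simp only [hx, dif_pos h]
    have hxA : ∀ k, x k ∈ A := by
      intro k
      induction k using Nat.strong_induction_on with
      | _ k ih =>
        by_cases hk : k < n + (m + 1) - 1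
        swap
        · simp only [hx, dif_neg hk]
          exact A.zero_mem
        by_cases hk2 : k < 2 * m
        · rw [hxv k hk]
          exact Algebra.subset_adjoin (Or.inl ⟨⟨k, by omega⟩, rfl⟩)
        refine hk_step A x m k (by omega) ih ?_ _ hdA ?_
        · set g : Fin (m + 1) → Fin n := fun j =>
            ⟨if (j : ℕ) < m then (j : ℕ) else k - m, by split_ifs <;> omega⟩ with hg
          have h1 : ψ (H.submatrix id g).det = 0 := by
            rw [hψa, Ideal.Quotient.eq_zero_iff_mem.2, map_zero]
            rw [hI]
            exact Ideal.subset_span ⟨g, rfl⟩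
          rw [AlgHom.map_det] at h1
          rw [← h1]
          congr 1
          ext i j
          simp only [AlgHom.mapMatrix_apply, Matrix.map_apply, Matrix.submatrix_apply, hH,
            id, Matrix.of_apply, hg]
          exact hxv _ _
        · have h2 : (Matrix.of fun (i j : Fin m) => x ((i : ℕ) + j)).det
              = algebraMap _ (Localization.Away Δ) Δ := by
            refine Eq.trans ?_ (congrArg (algebraMap _ (Localization.Away Δ)) hΔ).symm
            rw [← hψa, AlgHom.map_det]
            change _ = Matrix.det (n := Fin m) _
            congr 1
            ext i j
            simp only [AlgHom.mapMatrix_apply, Matrix.map_apply, Matrix.submatrix_apply, hH,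
              Matrix.of_apply]
            exact hxv _ _
          rw [h2, mul_comm]
          exact IsLocalization.Away.mul_invSelf Δ
    have hψA : ∀ p, ψ p ∈ A := by
      intro p
      induction p using MvPolynomial.induction_on with
      | C a =>
        have : ψ (C a) = algebraMap F _ a := ψ.commutes a
        rw [this]
        exact A.algebraMap_mem a
      | add p q hp hq => rw [map_add]; exact A.add_mem hp hq
      | mul_X p i hp =>
        rw [map_mul]
        refine A.mul_mem hp ?_
        have := hxA i
        rwa [hxv i i.2] at this
    rw [eq_top_iff]
    rintro y -
    obtain ⟨k, a, ha⟩ := IsLocalization.Away.surj Δ y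
    obtain ⟨p, rfl⟩ := Ideal.Quotient.mk_surjective a
    have hy : y = ψ p * (IsLocalization.Away.invSelf (S := Localization.Away Δ) Δ) ^ k := by
      rw [hψa, ← ha, mul_assoc, ← mul_pow, IsLocalization.Away.mul_invSelf, one_pow, mul_one]
    rw [hy]
    exact A.mul_mem (hψA p) (A.pow_mem hdA k)
end

section
/- Let F be a field of characteristic p ≥ t, and let R = F[x_1,...,x_{n+t-1}]/I_t(H) with H a t×n Hankel matrix, t ≤ n. Then R is F-rational; i.e., the ideal generated by some (equivalently, every) homogeneous system of parameters of R is tightly closed. In particular, for characteristic zero F, R has rational singularities. -/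
set_option synthInstance.maxHeartbeats 1000000
set_option maxHeartbeats 1000000

open MvPolynomial Matrix

/-- The `q`-th Frobenius power of an ideal: the ideal generated by `q`-th powers of its
elements. -/
def frobeniusPower {R : Type*} [CommRing R] (q : ℕ) (I : Ideal R) : Ideal R :=
  Ideal.span ((fun x => x ^ q) '' (I : Set R))

theorem coset_avoid {R : Type*} [CommRing R] (C : Ideal R) (f0 : R) :
    ∀ (s : ℕ) (Ps : Finset (Ideal R)), Ps.card = s → (∀ P ∈ Ps, P.IsPrime) →
      (∀ P ∈ Ps, ¬ (f0 ∈ P ∧ C ≤ P)) → ∃ c ∈ C, ∀ P ∈ Ps, f0 + c ∉ P := by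
  classical
  intro s
  induction s with
  | zero =>
    intro Ps hc _ _
    rw [Finset.card_eq_zero] at hc
    subst hc
    exact ⟨0, C.zero_mem, by simp⟩
  | succ s ih =>
    intro Ps hc hp hn
    have hne : Ps.Nonempty := Finset.card_pos.mp (by omega)
    obtain ⟨P, hP⟩ := Ps.exists_minimal hne
    have hPm := hP.1
    obtain ⟨c, hcC, hc'⟩ := ih (Ps.erase P) (by rw [Finset.card_erase_of_mem hPm]; omega)
      (fun Q hQ => hp Q (Finset.mem_of_mem_erase hQ)) (fun Q hQ => hn Q (Finset.mem_of_mem_erase hQ))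
    by_cases h : f0 + c ∈ P
    · have hCP : ¬ C ≤ P := fun hle => hn P hPm ⟨by
        have := P.sub_mem h (hle hcC)
        simpa using this, hle⟩
      have hprime := hp P hPm
      have hI : ¬ (C * ∏ Q ∈ Ps.erase P, Q) ≤ P := by
        intro hle
        rcases hprime.mul_le.mp hle with h1 | h1
        · exact hCP h1
        · obtain ⟨Q, hQ, hQP⟩ := (Ideal.IsPrime.prod_le (s := Ps.erase P) (f := fun Q => Q) hprime).mp h1
          have := hP.2 (Finset.mem_of_mem_erase hQ) hQP
          exact (Finset.ne_of_mem_erase hQ) (le_antisymm hQP this)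
      obtain ⟨c', hc'I, hc'P⟩ := SetLike.not_le_iff_exists.mp hI
      refine ⟨c + c', C.add_mem hcC (Ideal.mul_le_left hc'I), ?_⟩
      intro Q hQ
      by_cases hQP : Q = P
      · subst hQP
        intro h2
        apply hc'P
        have := Q.sub_mem h2 h
        simpa [add_assoc] using this
      · have hQe : Q ∈ Ps.erase P := Finset.mem_erase.mpr ⟨hQP, hQ⟩
        have : c' ∈ Q := by
          have h3 : c' ∈ ∏ Q ∈ Ps.erase P, Q := Ideal.mul_le_right hc'I
          have h4 := Ideal.prod_le_inf (s := Ps.erase P) (f := fun Q => Q) h3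
          exact (Finset.inf_le (f := fun Q : Ideal R => Q) hQe) h4
        intro h2
        apply hc' Q hQe
        have := Q.sub_mem h2 this
        have h5 : f0 + (c + c') - c' = f0 + c := by ring
        rwa [h5] at this
    · refine ⟨c, hcC, fun Q hQ => ?_⟩
      by_cases hQP : Q = P
      · subst hQP; exact h
      · exact hc' Q (Finset.mem_erase.mpr ⟨hQP, hQ⟩)

theorem nzd_of_assoc {R : Type*} [CommRing R] [IsNoetherianRing R] (q : Ideal R) (a : R)
    (h : ∀ P ∈ associatedPrimes R (R ⧸ q), a ∉ P) : ∀ r, a * r ∈ q → r ∈ q := by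
  intro r hr
  by_contra hrq
  have hz : a ∈ {r : R | ∃ x : R ⧸ q, x ≠ 0 ∧ r • x = 0} := by
    refine ⟨Ideal.Quotient.mk q r, ?_, ?_⟩
    · rwa [Ne, Ideal.Quotient.eq_zero_iff_mem]
    · rw [← Ideal.Quotient.mk_eq_mk, ← Submodule.Quotient.mk_smul, Ideal.Quotient.mk_eq_mk, Ideal.Quotient.eq_zero_iff_mem]
      exact hr
  rw [← biUnion_associatedPrimes_eq_zero_divisors R (R ⧸ q)] at hz
  simp only [Set.mem_iUnion] at hz
  obtain ⟨P, hP, haP⟩ := hz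
  exact h P hP haP

theorem assoc_le {R : Type*} [CommRing R] [IsNoetherianRing R] (q : Ideal R) (g : R) 
    (h : ∀ r, g * r ∈ q → r ∈ q) : ∀ P ∈ associatedPrimes R (R ⧸ q), g ∉ P ∧ q ≤ P := by
  intro P hP
  constructor
  · intro hg
    have hz : g ∈ ⋃ p ∈ associatedPrimes R (R ⧸ q), (p : Set R) := by
      simp only [Set.mem_iUnion]; exact ⟨P, hP, hg⟩
    rw [biUnion_associatedPrimes_eq_zero_divisors R (R ⧸ q)] at hz
    obtain ⟨x, hx, hgx⟩ := hz
    obtain ⟨r, rfl⟩ := Ideal.Quotient.mk_surjective x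
    rw [Ne, Ideal.Quotient.eq_zero_iff_mem] at hx
    apply hx
    apply h
    rwa [← Ideal.Quotient.mk_eq_mk, ← Submodule.Quotient.mk_smul, Ideal.Quotient.mk_eq_mk, Ideal.Quotient.eq_zero_iff_mem] at hgx
  · have := AssociatedPrimes.mem_iff.mp hP
    have h2 := this.annihilator_le
    rwa [Submodule.annihilator_top, Ideal.annihilator_quotient] at h2

/-- linkage -/
theorem linkage {R : Type*} [CommRing R] [IsNoetherianRing R] :
    ∀ (d : ℕ) (b : Ideal R) (f g : Fin d → R),
      (∀ i, g i ∈ b ⊔ Ideal.span (Set.range f)) →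
      (∀ i r, g i * r ∈ b ⊔ Ideal.span (g '' {j | j < i}) → r ∈ b ⊔ Ideal.span (g '' {j | j < i})) →
      ∀ x, (∀ y, (∀ i, f i * y ∈ b ⊔ Ideal.span (Set.range g)) → x * y ∈ b ⊔ Ideal.span (Set.range g)) →
      x ∈ b ⊔ Ideal.span (Set.range f) := by
  classical
  intro d
  induction d with
  | zero =>
    intro b f g _ _ x hx
    have := hx 1 (fun i => i.elim0)
    simpa using this
  | succ d ih =>
    intro b f g hgf hreg x hx
    set J := b ⊔ Ideal.span (Set.range f) with hJ
    let q : Fin (d + 1) → Ideal R := fun i => b ⊔ Ideal.span (g '' {j | j < i})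
    -- choose f'
    let Ps : Finset (Ideal R) := Finset.univ.biUnion fun i : Fin (d+1) =>
      (associatedPrimes.finite R (R ⧸ q i)).toFinset
    have hJsplit : J = b ⊔ Ideal.span {f 0} ⊔ Ideal.span (Set.range (f ∘ Fin.succ)) := by
      rw [hJ, sup_assoc, ← Ideal.span_union]
      congr 2
      ext z
      simp only [Set.mem_range, Set.mem_union, Set.mem_singleton_iff, Function.comp]
      constructor
      · rintro ⟨i, rfl⟩
        refine Fin.cases ?_ (fun i => ?_) i
        · left; rfl
        · right; exact ⟨i, rfl⟩
      · rintro (rfl | ⟨i, rfl⟩)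
        · exact ⟨_, rfl⟩
        · exact ⟨_, rfl⟩
    obtain ⟨c, hcC, hc⟩ := coset_avoid (Ideal.span (Set.range (f ∘ Fin.succ))) (f 0) _ Ps rfl
      (by
        intro P hP
        simp only [Ps, Finset.mem_biUnion, Finset.mem_univ, true_and, Set.Finite.mem_toFinset] at hP
        obtain ⟨i, hi⟩ := hP
        exact hi.isPrime)
      (by
        intro P hP
        simp only [Ps, Finset.mem_biUnion, Finset.mem_univ, true_and, Set.Finite.mem_toFinset] at hP
        obtain ⟨i, hi⟩ := hP
        obtain ⟨h1, h2⟩ := assoc_le (q i) (g i) (hreg i) P hi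
        rintro ⟨h3, h4⟩
        apply h1
        have : J ≤ P := by
          rw [hJsplit]
          refine sup_le (sup_le (le_trans le_sup_left h2) ?_) h4
          rw [Ideal.span_le]; simpa using h3
        exact this (hgf i))
    set f' := f 0 + c with hf'
    have hf'reg : ∀ i r, f' * r ∈ q i → r ∈ q i := by
      intro i
      apply nzd_of_assoc
      intro P hP
      apply hc
      simp only [Ps, Finset.mem_biUnion, Finset.mem_univ, true_and, Set.Finite.mem_toFinset]
      exact ⟨i, hP⟩
    have hJ' : J = (b ⊔ Ideal.span {f'}) ⊔ Ideal.span (Set.range (f ∘ Fin.succ)) := by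
      rw [hJsplit]
      apply le_antisymm
      · refine sup_le (sup_le (le_trans le_sup_left le_sup_left) ?_) le_sup_right
        rw [Ideal.span_le, Set.singleton_subset_iff]
        have : f 0 = f' - c := by rw [hf']; ring
        rw [this]
        exact Ideal.sub_mem _ (Ideal.mem_sup_left (Ideal.mem_sup_right (Ideal.mem_span_singleton_self f'))) (le_sup_right (a := b ⊔ Ideal.span {f'}) hcC)
      · refine sup_le (sup_le (le_trans le_sup_left le_sup_left) ?_) le_sup_right
        rw [Ideal.span_le, Set.singleton_subset_iff]
        exact Ideal.add_mem _ (Ideal.mem_sup_left (Ideal.mem_sup_right (Ideal.mem_span_singleton_self (f 0)))) (le_sup_right (a := b ⊔ Ideal.span {f 0}) hcC)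
    have hf'J : f' ∈ J := by
      rw [hJ']; exact Ideal.mem_sup_left (Ideal.mem_sup_right (Ideal.mem_span_singleton_self f'))
    -- decomposition helper
    have hmem : ∀ (I : Ideal R) (a z : R), z ∈ I ⊔ Ideal.span {a} ↔ ∃ w, z - a * w ∈ I := by
      intro I a z
      rw [Submodule.mem_sup]
      constructor
      · rintro ⟨y, hy, u, hu, rfl⟩
        obtain ⟨w, rfl⟩ := Ideal.mem_span_singleton'.mp hu
        exact ⟨w, by convert hy using 1; ring⟩
      · rintro ⟨w, hw⟩
        exact ⟨_, hw, a * w, Ideal.mem_span_singleton'.mpr ⟨w, mul_comm _ _⟩, by ring⟩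
    have hqcs : ∀ i : Fin d, b ⊔ Ideal.span ((g ∘ Fin.castSucc) '' {j | j < i}) = q i.castSucc := by
      intro i
      simp only [q]
      congr 2
      ext z
      simp only [Set.mem_image, Set.mem_ofPred_eq, Function.comp]
      constructor
      · rintro ⟨j, hj, rfl⟩; exact ⟨j.castSucc, by simpa using hj, rfl⟩
      · rintro ⟨j, hj, rfl⟩
        refine ⟨⟨j, by have := i.2; have : (j:ℕ) < i := hj; omega⟩, by simpa [Fin.lt_def] using hj, rfl⟩
    have hqsucc : ∀ (i : Fin (d+1)) (I : Ideal R), I = b ⊔ Ideal.span (g '' {j | j ≤ i}) → I = q i ⊔ Ideal.span {g i} := by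
      rintro i I rfl
      simp only [q]
      rw [sup_assoc, ← Ideal.span_union]
      congr 2
      ext z
      simp only [Set.mem_image, Set.mem_ofPred_eq, Set.mem_union, Set.mem_singleton_iff]
      constructor
      · rintro ⟨j, hj, rfl⟩
        rcases hj.lt_or_eq with h | rfl
        · left; exact ⟨j, h, rfl⟩
        · right; rfl
      · rintro (⟨j, hj, rfl⟩ | rfl)
        · exact ⟨j, hj.le, rfl⟩
        · exact ⟨i, le_rfl, rfl⟩
    have hlast : b ⊔ Ideal.span (Set.range g) = q (Fin.last d) ⊔ Ideal.span {g (Fin.last d)} := by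
      apply hqsucc
      congr 2
      ext z; simp [Fin.le_last]
    have hlast' : b ⊔ Ideal.span (Set.range (g ∘ Fin.castSucc)) = q (Fin.last d) := by
      simp only [q]
      congr 2
      ext z
      simp only [Set.mem_range, Function.comp, Set.mem_image, Set.mem_ofPred_eq]
      constructor
      · rintro ⟨j, rfl⟩; exact ⟨_, Fin.castSucc_lt_last j, rfl⟩
      · rintro ⟨j, hj, rfl⟩; exact ⟨⟨j, hj⟩, rfl⟩
    have hstep : ∀ i : Fin d, q i.succ = q i.castSucc ⊔ Ideal.span {g i.castSucc} := by
      intro i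
      apply hqsucc
      simp only [q]
      congr 3
      ext j
      simp only [Set.mem_ofPred_eq, Fin.lt_def, Fin.le_def, Fin.val_succ, Fin.val_castSucc]
      omega
    rw [hJ']
    apply ih (b ⊔ Ideal.span {f'}) (f ∘ Fin.succ) (g ∘ Fin.castSucc)
    · intro i; rw [← hJ']; exact hgf _
    · intro i r
      rw [sup_right_comm, hqcs, hmem, hmem]
      rintro ⟨z, hz⟩
      simp only [Function.comp] at hz
      have h1 : f' * z ∈ q i.succ := by
        rw [hstep, hmem]
        refine ⟨r, ?_⟩
        have := Ideal.neg_mem_iff _ |>.mpr hz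
        convert this using 1; ring
      have h2 := hf'reg _ _ h1
      rw [hstep, hmem] at h2
      obtain ⟨w, hw⟩ := h2
      refine ⟨w, hreg i.castSucc _ ?_⟩
      have := Ideal.add_mem _ hz (Ideal.mul_mem_left _ f' hw)
      convert this using 1; ring
    · intro y hy
      rw [sup_right_comm, hlast', hmem]
      have hy' : ∀ j ∈ J, j * y ∈ q (Fin.last d) ⊔ Ideal.span {f'} := by
        intro j hj
        have hJle : J ≤ Submodule.comap (LinearMap.mulRight R y) (q (Fin.last d) ⊔ Ideal.span {f'}) := by
          rw [hJ']
          refine sup_le (sup_le ?_ ?_) ?_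
          · intro u hu
            exact Ideal.mul_mem_right _ _ (Ideal.mem_sup_left (Ideal.mem_sup_left hu))
          · rw [Ideal.span_le, Set.singleton_subset_iff]
            exact Ideal.mul_mem_right _ _ (le_sup_right (a := q (Fin.last d)) (Ideal.mem_span_singleton_self f'))
          · rw [Ideal.span_le]
            rintro _ ⟨i, rfl⟩
            have := hy i
            rw [sup_right_comm, hlast'] at this
            exact this
        exact hJle hj
      obtain ⟨z, hz⟩ := (hmem _ _ _).mp (hy' _ (hgf (Fin.last d)))
      have hxz : x * z ∈ b ⊔ Ideal.span (Set.range g) := by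
        apply hx
        intro i
        have hfi : f i ∈ J := le_sup_right (a := b) (Ideal.subset_span ⟨i, rfl⟩)
        rw [hlast, hmem]
        obtain ⟨w, hw⟩ := (hmem _ _ _).mp (hy' _ hfi)
        refine ⟨w, hf'reg _ _ ?_⟩
        have := Ideal.sub_mem _ (Ideal.mul_mem_left _ (g (Fin.last d)) hw) (Ideal.mul_mem_left _ (f i) hz)
        convert this using 1; ring
      rw [hlast, hmem] at hxz
      obtain ⟨v, hv⟩ := hxz
      refine ⟨v, hreg (Fin.last d) _ ?_⟩
      have := Ideal.add_mem _ (Ideal.mul_mem_left _ x hz) (Ideal.mul_mem_left _ f' hv)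
      convert this using 1; ring

theorem pow_eq_expand {σ K : Type*} [Field K] (p : ℕ) [Fact p.Prime] [CharP K p] (e : ℕ)
    (u : MvPolynomial σ K) :
    u ^ p ^ e = expand (p ^ e) (map (iterateFrobenius K p e) u) := by
  have : iterateFrobenius (MvPolynomial σ K) p e =
      ((expand (p ^ e) : MvPolynomial σ K →ₐ[K] MvPolynomial σ K) : MvPolynomial σ K →+* MvPolynomial σ K).comp
        (map (iterateFrobenius K p e)) := by
    apply MvPolynomial.ringHom_ext
    · intro r
      simp [iterateFrobenius_def]
    · intro i
      simp [iterateFrobenius_def]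
  have h := congrArg (fun φ => φ u) this
  simpa [iterateFrobenius_def] using h

open Classical in
/-- coefficient extraction along `α + q β` -/
noncomputable def extr {σ K : Type*} [Field K] (q : ℕ) (α : σ →₀ ℕ) :
    MvPolynomial σ K →ₗ[K] MvPolynomial σ K :=
  (basisMonomials σ K).constr K fun m =>
    if h : ∃ β, m = α + q • β then monomial h.choose 1 else 0

theorem extr_pos {σ K : Type*} [Field K] {q : ℕ} (hq : 0 < q) (α β : σ →₀ ℕ) (a : K) :
    extr q α (monomial (α + q • β) a) = monomial β a := by
  have h : ∃ γ, α + q • β = α + q • γ := ⟨β, rfl⟩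
  have hc : h.choose = β := by
    have := h.choose_spec
    have h2 := add_left_cancel this
    ext i
    have h3 := DFunLike.congr_fun h2 i
    simp only [Finsupp.smul_apply, smul_eq_mul] at h3
    exact (Nat.eq_of_mul_eq_mul_left hq h3).symm
  have : monomial (α + q • β) a = a • (basisMonomials σ K) (α + q • β) := by
    simp [smul_monomial]
  rw [this, map_smul, extr, Module.Basis.constr_basis, dif_pos h, hc]
  simp [smul_monomial]

theorem extr_neg {σ K : Type*} [Field K] {q : ℕ} (α m : σ →₀ ℕ) (a : K)
    (h : ¬ ∃ β, m = α + q • β) :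
    extr q α (monomial m a) = 0 := by
  have : monomial m a = a • (basisMonomials σ K) m := by
    simp [smul_monomial]
  rw [this, map_smul, extr, Module.Basis.constr_basis, dif_neg h, smul_zero]

theorem extr_mul {σ K : Type*} [Field K] {q : ℕ} (hq : 0 < q) (α : σ →₀ ℕ)
    (hα : ∀ i, α i < q) (h v : MvPolynomial σ K) :
    extr q α (h * expand q v) = extr q α h * v := by
  induction v using MvPolynomial.induction_on' with
  | add v w hv hw => rw [map_add, mul_add, map_add, hv, hw, mul_add]
  | monomial γ a =>
    induction h using MvPolynomial.induction_on' with
    | add v w hv hw => rw [add_mul, map_add, hv, hw, map_add, add_mul]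
    | monomial m b =>
      rw [expand_monomial, monomial_mul]
      by_cases hm : ∃ β, m = α + q • β
      · obtain ⟨β, rfl⟩ := hm
        rw [add_assoc, ← smul_add, extr_pos hq, extr_pos hq, monomial_mul]
      · rw [extr_neg _ _ _ hm, zero_mul, extr_neg]
        rintro ⟨β, hβ⟩
        apply hm
        refine ⟨β - γ, ?_⟩
        ext i
        have h1 := DFunLike.congr_fun hβ i
        simp only [Finsupp.add_apply, Finsupp.smul_apply, smul_eq_mul, Finsupp.tsub_apply] at h1 ⊢
        have h2 := hα i
        have h3 : γ i ≤ β i := by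
          by_contra hlt
          push Not at hlt
          have : q * (β i + 1) ≤ q * γ i := Nat.mul_le_mul_left q hlt
          rw [mul_add] at this
          omega
        rw [Nat.mul_sub]
        have := Nat.mul_le_mul_left q h3
        omega

theorem poly_tight {σ ι K : Type*} [Field K] (p : ℕ) [hp : Fact p.Prime] [CharP K p]
    [PerfectRing K p] (f : ι → MvPolynomial σ K) (c x : MvPolynomial σ K) (hc : c ≠ 0)
    (h : ∀ e : ℕ, c * x ^ p ^ e ∈ Ideal.span (Set.range fun i => f i ^ p ^ e)) :
    x ∈ Ideal.span (Set.range f) := by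
  classical
  obtain ⟨e, he⟩ : ∃ e, c.totalDegree < p ^ e := ⟨c.totalDegree, Nat.lt_pow_self hp.1.one_lt⟩
  set q := p ^ e with hqdef
  have hq : 0 < q := pow_pos hp.1.pos e
  obtain ⟨α, hα⟩ := MvPolynomial.ne_zero_iff.mp hc
  have hdeg : ∀ m, coeff m c ≠ 0 → ∀ i, m i < q := by
    intro m hm i
    refine lt_of_le_of_lt ?_ he
    have := le_totalDegree (mem_support_iff.mpr hm)
    refine le_trans ?_ this
    by_cases hi : i ∈ m.support
    · exact Finset.single_le_sum (f := fun i => m i) (fun _ _ => Nat.zero_le _) hi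
    · simp only [Finsupp.mem_support_iff, not_not] at hi
      omega
  have hcα : extr q α c = C (coeff α c) := by
    conv_lhs => rw [c.as_sum]
    rw [map_sum, Finset.sum_eq_single α]
    · have := extr_pos hq α 0 (coeff α c)
      simpa using this
    · intro m hm hne
      apply extr_neg
      rintro ⟨β, rfl⟩
      apply hne
      have : β = 0 := by
        ext i
        have h1 := hdeg _ (mem_support_iff.mp hm) i
        simp only [Finsupp.add_apply, Finsupp.smul_apply, smul_eq_mul] at h1
        by_contra h2
        have : q * 1 ≤ q * β i := Nat.mul_le_mul_left q (Nat.one_le_iff_ne_zero.mpr h2)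
        omega
      simp [this]
    · intro hn
      rw [notMem_support_iff.mp hn]; simp
  let F := iterateFrobenius K p e
  let G : K →+* K := (iterateFrobeniusEquiv K p e).symm
  have hGF : ∀ u : MvPolynomial σ K, map G (map F u) = u := by
    intro u
    rw [MvPolynomial.map_map]
    have : G.comp F = RingHom.id K := by
      ext a
      simp only [RingHom.comp_apply, RingHom.id_apply, G, F]
      exact (iterateFrobeniusEquiv K p e).symm_apply_apply a
    rw [this, MvPolynomial.map_id]
  have key : ∀ z ∈ Ideal.span (Set.range fun i => f i ^ q), map G (extr q α z) ∈ Ideal.span (Set.range f) := by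
    intro z hz
    refine Submodule.span_induction ?_ ?_ ?_ ?_ (p := fun z _ => ∀ r, map G (extr q α (r * z)) ∈ Ideal.span (Set.range f)) hz 1 |> fun h => by simpa using h
    · rintro _ ⟨i, rfl⟩ r
      simp only
      rw [hqdef, pow_eq_expand, ← hqdef, extr_mul hq α (hdeg α hα), map_mul, hGF]
      exact Ideal.mul_mem_left _ _ (Ideal.subset_span ⟨i, rfl⟩)
    · intro r; simp
    · intro a b _ _ ha hb r
      rw [mul_add, map_add, map_add]
      exact Ideal.add_mem _ (ha r) (hb r)
    · intro a b _ hb r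
      rw [smul_eq_mul, ← mul_assoc]
      exact hb _
  have h1 := key _ (h e)
  rw [pow_eq_expand, ← hqdef, extr_mul hq α (hdeg α hα), map_mul, hGF, hcα, map_C] at h1
  have hu : G (coeff α c) ≠ 0 := by simpa using hα
  have := Ideal.mul_mem_left _ (C (G (coeff α c))⁻¹) h1
  rwa [← mul_assoc, ← C_mul, inv_mul_cancel₀ hu, C_1, one_mul] at this

set_option linter.unusedSectionVars false
section rem
variable {V F : Type*} [Fintype V] [DecidableEq V] [Field F]

lemma coeff_prod_aeval (q : V → Polynomial F) (m : V →₀ ℕ) :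
    coeff m (∏ v, Polynomial.aeval (X v : MvPolynomial V F) (q v)) = ∏ v, (q v).coeff (m v) := by
  have h1 : ∀ v, Polynomial.aeval (X v : MvPolynomial V F) (q v)
      = ∑ i ∈ Finset.range ((q v).natDegree + 1), C ((q v).coeff i) * X v ^ i := by
    intro v
    rw [Polynomial.aeval_eq_sum_range]
    simp [MvPolynomial.smul_eq_C_mul]
  simp_rw [h1]
  rw [Finset.prod_univ_sum, coeff_sum]
  have h2 : ∀ f : V → ℕ, (∏ v, (C ((q v).coeff (f v)) * X v ^ (f v) : MvPolynomial V F))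
      = monomial (Finsupp.equivFunOnFinite.symm f) (∏ v, (q v).coeff (f v)) := by
    intro f
    rw [Finset.prod_mul_distrib, monomial_eq, map_prod, Finsupp.prod_fintype _ _ (by simp)]
    simp
  simp_rw [h2, coeff_monomial]
  by_cases hm : ∀ v, m v ∈ Finset.range ((q v).natDegree + 1)
  · rw [Finset.sum_eq_single (fun v => m v)]
    · rw [if_pos]
      ext v; simp
    · intro b _ hb
      rw [if_neg]
      rintro rfl
      exact hb (by ext v; simp)
    · intro h
      exact absurd (by simpa [Fintype.mem_piFinset] using hm) h
  · push Not at hm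
    obtain ⟨v, hv⟩ := hm
    rw [Finset.sum_eq_zero, Finset.prod_eq_zero (Finset.mem_univ v)]
    · apply Polynomial.coeff_eq_zero_of_natDegree_lt
      simp at hv; omega
    · intro f hf
      rw [if_neg]
      rintro rfl
      rw [Fintype.mem_piFinset] at hf
      exact hv (by simpa using hf v)

/-- simultaneous remainder modulo the `G v` in the variable `v` -/
noncomputable def remG (G : V → Polynomial F) : MvPolynomial V F →ₗ[F] MvPolynomial V F :=
  (basisMonomials V F).constr F (fun m => ∏ v, Polynomial.aeval (X v) ((Polynomial.X ^ (m v)) %ₘ G v))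

lemma remG_monomial (G : V → Polynomial F) (m : V →₀ ℕ) :
    remG G (monomial m 1) = ∏ v, Polynomial.aeval (X v) ((Polynomial.X ^ (m v)) %ₘ G v) := by
  have := Module.Basis.constr_basis (basisMonomials V F) F (fun m : V →₀ ℕ => (∏ v, Polynomial.aeval (X v) ((Polynomial.X ^ (m v)) %ₘ G v) : MvPolynomial V F)) m
  simpa [remG, coe_basisMonomials] using this

lemma mono_induct (Pr : MvPolynomial V F → Prop) (h0 : ∀ m, Pr (monomial m 1))
    (ha : ∀ a b, Pr a → Pr b → Pr (a + b)) (hs : ∀ (c : F) a, Pr a → Pr (c • a)) : ∀ f, Pr f := by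
  intro f
  induction f using MvPolynomial.induction_on' with
  | monomial m a =>
    have := hs a _ (h0 m)
    simpa [smul_monomial] using this
  | add p q hp hq => exact ha _ _ hp hq

lemma remG_sub (G : V → Polynomial F) (f : MvPolynomial V F) :
    f - remG G f ∈ Ideal.span (Set.range fun v => Polynomial.aeval (X v : MvPolynomial V F) (G v)) := by
  revert f
  apply mono_induct
  · intro m
    rw [remG_monomial, ← Ideal.Quotient.eq, map_prod]
    have : (monomial m (1:F)) = ∏ v, X v ^ m v := by
      rw [monomial_eq, Finsupp.prod_fintype _ _ (by simp)]; simp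
    rw [this, map_prod]
    refine Finset.prod_congr rfl fun v _ => ?_
    rw [Ideal.Quotient.eq]
    have h := Polynomial.modByMonic_add_div (Polynomial.X ^ m v) (G v)
    have h2 := congrArg (Polynomial.aeval (X v : MvPolynomial V F)) h
    simp only [map_add, map_mul, map_pow, Polynomial.aeval_X] at h2
    rw [← h2, add_sub_cancel_left]
    exact Ideal.mul_mem_right _ _ (Ideal.subset_span ⟨v, rfl⟩)
  · intro a b ha hb
    rw [map_add, add_sub_add_comm]
    exact add_mem ha hb
  · intro c a ha
    rw [map_smul, ← smul_sub]
    exact Submodule.smul_of_tower_mem _ c ha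

lemma remG_mul_aux (G : V → Polynomial F) (w : V) (m : V →₀ ℕ) (q : Polynomial F) :
    remG G (Polynomial.aeval (X w) q * monomial m 1) =
      Polynomial.aeval (X w) ((q * Polynomial.X ^ (m w)) %ₘ G w) *
        ∏ v ∈ Finset.univ.erase w, Polynomial.aeval (X v) ((Polynomial.X ^ (m v)) %ₘ G v) := by
  induction q using Polynomial.induction_on' with
  | add p q hp hq =>
    simp only [map_add, add_mul, Polynomial.add_modByMonic, hp, hq]
  | monomial n a =>
    have h1 : Polynomial.aeval (X w : MvPolynomial V F) (Polynomial.monomial n a) * monomial m 1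
      = a • monomial (m + Finsupp.single w n) 1 := by
      rw [Polynomial.aeval_monomial, algebraMap_eq, X_pow_eq_monomial, mul_assoc, monomial_mul,
        smul_eq_C_mul, add_comm]
      simp
    have h2 : Polynomial.monomial n a * Polynomial.X ^ (m w) = a • Polynomial.X ^ (m w + n) := by
      rw [← Polynomial.C_mul_X_pow_eq_monomial, mul_assoc, ← pow_add, Polynomial.smul_eq_C_mul, add_comm]
    rw [h1, h2, Polynomial.smul_modByMonic, map_smul, map_smul, remG_monomial,
      ← Finset.mul_prod_erase _ _ (Finset.mem_univ w), smul_mul_assoc]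
    congr 2
    · simp
    · refine Finset.prod_congr rfl fun v hv => ?_
      have : w ≠ v := fun h => by simp [h] at hv
      simp [this]

lemma remG_mul_eq_zero (G : V → Polynomial F) (hG : ∀ v, G v = 0 ∨ (G v).Monic) (w : V)
    (h : MvPolynomial V F) : remG G (Polynomial.aeval (X w) (G w) * h) = 0 := by
  revert h
  apply mono_induct
  · intro m
    rw [remG_mul_aux]
    have : (G w * Polynomial.X ^ (m w)) %ₘ G w = 0 := by
      rcases hG w with h | h
      · simp [h]
      · rw [Polynomial.modByMonic_eq_zero_iff_dvd h]; exact dvd_mul_right _ _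
    simp [this]
  · intro a b ha hb
    rw [mul_add, map_add, ha, hb, add_zero]
  · intro c a ha
    rw [mul_smul_comm, map_smul, ha, smul_zero]

lemma remG_mem (G : V → Polynomial F) (hG : ∀ v, G v = 0 ∨ (G v).Monic)
    (f : MvPolynomial V F)
    (hf : f ∈ Ideal.span (Set.range fun v => Polynomial.aeval (X v : MvPolynomial V F) (G v))) :
    remG G f = 0 := by
  obtain ⟨c, rfl⟩ := (Ideal.mem_span_range_iff_exists_fun).1 hf
  rw [map_sum]
  refine Finset.sum_eq_zero fun v _ => ?_
  rw [mul_comm, remG_mul_eq_zero G hG]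

lemma remG_comm (G : V → Polynomial F) (w : V) (hw : G w = 0) (q : Polynomial F)
    (h : MvPolynomial V F) :
    remG G (Polynomial.aeval (X w) q * h) = Polynomial.aeval (X w) q * remG G h := by
  revert h
  apply mono_induct
  · intro m
    rw [remG_mul_aux, remG_monomial, ← Finset.mul_prod_erase _ _ (Finset.mem_univ w), hw]
    simp [mul_assoc]
  · intro a b ha hb
    rw [mul_add, map_add, ha, hb, map_add, mul_add]
  · intro c a ha
    rw [mul_smul_comm, map_smul, ha, map_smul, mul_smul_comm]

lemma coeff_modX (G : Polynomial F) (hG : G = 0 ∨ G.Monic) (n i : ℕ)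
    (h : ((Polynomial.X ^ n) %ₘ G).coeff i ≠ 0) :
    i ≤ n ∧ (G = 0 → i = n) ∧ (G ≠ 0 → i < G.natDegree) := by
  rcases hG with h0 | hm
  · subst h0
    rw [Polynomial.modByMonic_zero, Polynomial.coeff_X_pow] at h
    have : i = n := by by_contra h'; simp [h'] at h
    simp [this]
  · have hi := Polynomial.le_natDegree_of_ne_zero h
    have h1 : i < G.natDegree := by
      have := Polynomial.degree_modByMonic_lt (Polynomial.X ^ n) hm
      have h2 := Polynomial.le_degree_of_ne_zero h
      have h3 := lt_of_le_of_lt h2 this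
      rw [Polynomial.degree_eq_natDegree hm.ne_zero] at h3
      exact_mod_cast h3
    refine ⟨?_, fun h => absurd h hm.ne_zero, fun _ => h1⟩
    by_cases hn : n < G.natDegree
    · rw [(Polynomial.modByMonic_eq_self_iff hm).2] at h
      · rw [Polynomial.coeff_X_pow] at h
        have : i = n := by by_contra h'; simp [h'] at h
        exact this.le
      · rw [Polynomial.degree_X_pow, Polynomial.degree_eq_natDegree hm.ne_zero]
        exact_mod_cast hn
    · omega

end rem

set_option linter.unusedSectionVars false
section rem2
variable {V F : Type*} [Fintype V] [DecidableEq V] [Field F]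

lemma span_reg (G : V → Polynomial F) (hG : ∀ v, G v = 0 ∨ (G v).Monic) (w : V) (hw : G w = 0)
    (Q : Polynomial F) (hQ : Q.Monic) (r : MvPolynomial V F)
    (h : Polynomial.aeval (X w) Q * r ∈
      Ideal.span (Set.range fun v => Polynomial.aeval (X v : MvPolynomial V F) (G v))) :
    r ∈ Ideal.span (Set.range fun v => Polynomial.aeval (X v : MvPolynomial V F) (G v)) := by
  have h1 := remG_mem G hG _ h
  rw [remG_comm G w hw] at h1
  have h2 : Polynomial.aeval (X w : MvPolynomial V F) Q ≠ 0 := by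
    intro h0
    have := (MvPolynomial.transcendental_X (R := F) w)
    exact this ⟨Q, hQ.ne_zero, h0⟩
  have h3 := (mul_eq_zero.1 h1).resolve_left h2
  have := remG_sub G r
  rwa [h3, sub_zero] at this

lemma coeff_remG (G : V → Polynomial F) (h : MvPolynomial V F) (m : V →₀ ℕ) :
    coeff m (remG G h) = ∑ m' ∈ h.support, coeff m' h * ∏ v, ((Polynomial.X ^ (m' v)) %ₘ G v).coeff (m v) := by
  conv_lhs => rw [h.as_sum, map_sum, coeff_sum]
  refine Finset.sum_congr rfl fun m' _ => ?_
  have : monomial m' (coeff m' h) = coeff m' h • monomial m' (1:F) := by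
    simp [smul_monomial]
  rw [this, map_smul, remG_monomial, coeff_smul, coeff_prod_aeval, smul_eq_mul]

lemma supp_remG (G : V → Polynomial F) (hG : ∀ v, G v = 0 ∨ (G v).Monic) (h : MvPolynomial V F)
    (m : V →₀ ℕ) (hm : coeff m (remG G h) ≠ 0) :
    ∃ m', coeff m' h ≠ 0 ∧ (∀ v, m v ≤ m' v) ∧ (∀ v, G v = 0 → m v = m' v) ∧
      (∀ v, G v ≠ 0 → m v < (G v).natDegree) := by
  rw [coeff_remG] at hm
  obtain ⟨m', hm', h2⟩ := Finset.exists_ne_zero_of_sum_ne_zero hm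
  have h3 := fun v => coeff_modX (G v) (hG v) _ _
    ((Finset.prod_ne_zero_iff.1 (right_ne_zero_of_mul h2)) v (Finset.mem_univ v))
  exact ⟨m', left_ne_zero_of_mul h2, fun v => (h3 v).1, fun v => (h3 v).2.1, fun v => (h3 v).2.2⟩

lemma deg_eq_sum (m : V →₀ ℕ) : Finsupp.degree m = ∑ v, m v := by
  rw [Finsupp.degree_eq_sum]

lemma coeff_remG_top (G : V → Polynomial F) (hG : ∀ v, G v = 0 ∨ (G v).Monic) (h : MvPolynomial V F)
    (m : V →₀ ℕ) (hd : h.totalDegree ≤ m.degree) (hm : ∀ v, G v ≠ 0 → m v < (G v).natDegree) :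
    coeff m (remG G h) = coeff m h := by
  rw [coeff_remG]
  have h1 : (∏ v, ((Polynomial.X ^ (m v)) %ₘ G v).coeff (m v)) = 1 := by
    refine Finset.prod_eq_one fun v _ => ?_
    have : (Polynomial.X ^ (m v)) %ₘ G v = Polynomial.X ^ (m v) := by
      rcases hG v with h0 | h0
      · rw [h0, Polynomial.modByMonic_zero]
      · rw [Polynomial.modByMonic_eq_self_iff h0, Polynomial.degree_X_pow,
          Polynomial.degree_eq_natDegree h0.ne_zero]
        exact_mod_cast hm v h0.ne_zero
    rw [this, Polynomial.coeff_X_pow, if_pos rfl]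
  rw [Finset.sum_eq_single m, h1, mul_one]
  · intro m' hm' hne
    by_contra h2
    have h3 := fun v => coeff_modX (G v) (hG v) _ _
      ((Finset.prod_ne_zero_iff.1 (right_ne_zero_of_mul h2)) v (Finset.mem_univ v))
    apply hne
    have h4 : m'.degree ≤ m.degree := by
      refine le_trans ?_ hd
      rw [Finsupp.degree_apply]
      exact le_totalDegree hm'
    rw [deg_eq_sum, deg_eq_sum] at h4
    have h5 := (Finset.sum_eq_sum_iff_of_le (fun v _ => (h3 v).1)).1
      (le_antisymm (Finset.sum_le_sum fun v _ => (h3 v).1) h4)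
    ext v; exact (h5 v (Finset.mem_univ v)).symm
  · intro h2
    rw [notMem_support_iff.1 h2, zero_mul]

lemma mem_mono (J : Finset V) (k : V → ℕ) (f : MvPolynomial V F) :
    f ∈ Ideal.span ((fun v => (X v : MvPolynomial V F) ^ k v) '' (J : Set V)) ↔
      ∀ m, coeff m f ≠ 0 → ∃ v ∈ J, k v ≤ m v := by
  have : ((fun v => (X v : MvPolynomial V F) ^ k v) '' (J : Set V))
      = (fun s => monomial s (1:F)) '' ((fun v => Finsupp.single v (k v)) '' (J : Set V)) := by
    rw [Set.image_image]
    simp only [X_pow_eq_monomial]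
  rw [this, mem_ideal_span_monomial_image]
  simp only [mem_support_iff, Set.exists_mem_image, Finset.mem_coe]
  simp only [Finsupp.single_le_iff]

lemma top_mem (J : Finset V) (G : V → Polynomial F) (hJ : ∀ v ∈ J, (G v).Monic)
    (hJ' : ∀ v ∉ J, G v = 0) (D : ℕ) (h : MvPolynomial V F) (hd : h.totalDegree ≤ D)
    (hh : h ∈ Ideal.span (Set.range fun v => Polynomial.aeval (X v : MvPolynomial V F) (G v))) :
    homogeneousComponent D h ∈
      Ideal.span ((fun v => (X v : MvPolynomial V F) ^ (G v).natDegree) '' (J : Set V)) := by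
  have hG : ∀ v, G v = 0 ∨ (G v).Monic := fun v => by
    by_cases hv : v ∈ J
    · exact .inr (hJ v hv)
    · exact .inl (hJ' v hv)
  rw [mem_mono]
  intro m hm
  rw [coeff_homogeneousComponent] at hm
  have hmd : m.degree = D := by by_contra h'; simp [h'] at hm
  rw [if_pos hmd] at hm
  by_contra hcon
  push Not at hcon
  apply hm
  rw [← coeff_remG_top G hG h m (hmd ▸ hd), remG_mem G hG _ hh, coeff_zero]
  intro v hv
  exact hcon v (by by_contra h'; exact hv (hJ' v h'))

end rem2

set_option linter.unusedSectionVars false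
section nf
variable {V F : Type*} [Fintype V] [DecidableEq V] [Field F]

/-- a normal form operator for the quotient by `I` -/
structure NormalForm (I : Ideal (MvPolynomial V F)) (J : Finset V) (k : ℕ)
    (nu : MvPolynomial V F →ₗ[F] MvPolynomial V F) : Prop where
  sub : ∀ f, f - nu f ∈ I
  ker : ∀ f ∈ I, nu f = 0
  supp : ∀ f m, coeff m (nu f) ≠ 0 → ∑ v ∈ Jᶜ, m v ≤ k
  fix : ∀ f, (∀ m, coeff m f ≠ 0 → ∑ v ∈ Jᶜ, m v ≤ k) → nu f = f
  mul : ∀ v ∈ J, ∀ f, nu (X v * f) = X v * nu f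
  hom : ∀ f D, f.IsHomogeneous D → (nu f).IsHomogeneous D

variable {I : Ideal (MvPolynomial V F)} {J : Finset V} {k : ℕ}
    {nu : MvPolynomial V F →ₗ[F] MvPolynomial V F}

lemma NormalForm.mul_aeval (h : NormalForm I J k nu) (v : V) (hv : v ∈ J) (q : Polynomial F)
    (f : MvPolynomial V F) :
    nu (Polynomial.aeval (X v) q * f) = Polynomial.aeval (X v) q * nu f := by
  induction q using Polynomial.induction_on' with
  | add p q hp hq => simp only [map_add, add_mul, hp, hq]
  | monomial n a =>
    rw [Polynomial.aeval_monomial, algebraMap_eq, mul_assoc, ← smul_eq_C_mul, map_smul,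
      mul_assoc, ← smul_eq_C_mul]
    congr 1
    induction n with
    | zero => simp
    | succ n ih => rw [pow_succ', mul_assoc, h.mul v hv, ih, mul_assoc]

lemma NormalForm.mem_iff (h : NormalForm I J k nu) (G : V → Polynomial F) (hG : ∀ v ∉ J, G v = 0)
    (x : MvPolynomial V F) :
    x ∈ I ⊔ Ideal.span (Set.range fun v => Polynomial.aeval (X v : MvPolynomial V F) (G v)) ↔
      nu x ∈ Ideal.span (Set.range fun v => Polynomial.aeval (X v : MvPolynomial V F) (G v)) := by
  constructor
  · intro hx
    obtain ⟨a, ha, b, hb, rfl⟩ := Submodule.mem_sup.1 hx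
    rw [map_add, h.ker a ha, zero_add]
    obtain ⟨c, rfl⟩ := (Ideal.mem_span_range_iff_exists_fun).1 hb
    rw [map_sum]
    refine sum_mem fun v _ => ?_
    rw [mul_comm]
    by_cases hv : v ∈ J
    · rw [h.mul_aeval v hv]
      exact Ideal.mul_mem_right _ _ (Ideal.subset_span ⟨v, rfl⟩)
    · simp [hG v hv]
  · intro hx
    have := Submodule.add_mem_sup (h.sub x) hx
    simpa using this

lemma span_image_eq (J : Finset V) (k : V → ℕ) :
    Ideal.span ((fun v => (X v : MvPolynomial V F) ^ k v) '' (J : Set V)) =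
    Ideal.span (Set.range fun v => Polynomial.aeval (X v : MvPolynomial V F)
      (if v ∈ J then (Polynomial.X ^ k v : Polynomial F) else 0)) := by
  apply le_antisymm
  · rw [Ideal.span_le]
    rintro _ ⟨v, hv, rfl⟩
    apply Ideal.subset_span
    refine ⟨v, ?_⟩
    have : v ∈ J := hv
    simp [this]
  · rw [Ideal.span_le]
    rintro _ ⟨v, rfl⟩
    by_cases hv : v ∈ J
    · apply Ideal.subset_span
      refine ⟨v, hv, ?_⟩
      simp [hv]
    · simp [hv]

lemma NormalForm.mem_iff' (h : NormalForm I J k nu) (e : V → ℕ)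
    (x : MvPolynomial V F) :
    x ∈ I ⊔ Ideal.span ((fun v => (X v : MvPolynomial V F) ^ e v) '' (J : Set V)) ↔
      nu x ∈ Ideal.span ((fun v => (X v : MvPolynomial V F) ^ e v) '' (J : Set V)) := by
  rw [span_image_eq]
  exact h.mem_iff _ (fun v hv => by simp [hv]) x

lemma totalDegree_le_iff' (f : MvPolynomial V F) (D : ℕ) :
    f.totalDegree ≤ D ↔ ∀ m, coeff m f ≠ 0 → m.degree ≤ D := by
  rw [totalDegree, Finset.sup_le_iff]
  simp only [mem_support_iff, Finsupp.degree_apply]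
  rfl

lemma NormalForm.comp (h : NormalForm I J k nu) (f : MvPolynomial V F) (D : ℕ) :
    homogeneousComponent D (nu f) = nu (homogeneousComponent D f) := by
  conv_lhs => rw [← sum_homogeneousComponent f, map_sum, map_sum]
  have : ∀ i, homogeneousComponent D (nu (homogeneousComponent i f)) =
      if i = D then nu (homogeneousComponent D f) else 0 := by
    intro i
    have hh := h.hom _ _ (homogeneousComponent_isHomogeneous i f)
    rw [homogeneousComponent_of_mem hh]
    split_ifs with h1 h2 h2
    · rw [h1]
    · exact absurd h1.symm h2
    · exact absurd h2.symm h1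
    · rfl
  simp_rw [this]
  rw [Finset.sum_ite_eq']
  split_ifs with h1
  · rfl
  · rw [homogeneousComponent_eq_zero, map_zero]
    simpa using h1

lemma NormalForm.deg (h : NormalForm I J k nu) (f : MvPolynomial V F) (D : ℕ)
    (hf : f.totalDegree ≤ D) : (nu f).totalDegree ≤ D := by
  conv_lhs => rw [← sum_homogeneousComponent f, map_sum]
  apply totalDegree_finsetSum_le
  intro i hi
  have hh := h.hom _ _ (homogeneousComponent_isHomogeneous i f)
  refine hh.totalDegree_le.trans ?_
  simp at hi; omega

lemma NormalForm.N2 (h : NormalForm I J k nu) (G : V → Polynomial F) (hJ : ∀ v ∈ J, (G v).Monic)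
    (hJ' : ∀ v ∉ J, G v = 0) (D : ℕ) (f : MvPolynomial V F) (hd : f.totalDegree ≤ D)
    (hf : f ∈ I ⊔ Ideal.span (Set.range fun v => Polynomial.aeval (X v : MvPolynomial V F) (G v))) :
    homogeneousComponent D f ∈ I ⊔
      Ideal.span ((fun v => (X v : MvPolynomial V F) ^ (G v).natDegree) '' (J : Set V)) := by
  rw [h.mem_iff', ← h.comp]
  exact top_mem J G hJ hJ' D _ (h.deg f D hd) ((h.mem_iff G hJ' f).1 hf)

lemma NormalForm.N1 (h : NormalForm I J k nu) (G : V → Polynomial F) 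
    (hG : ∀ v, G v = 0 ∨ (G v).Monic) (hJ' : ∀ v ∉ J, G v = 0) (w : V) (hwJ : w ∈ J)
    (hw : G w = 0) (Q : Polynomial F) (hQ : Q.Monic) (f : MvPolynomial V F) 
    (hf : Polynomial.aeval (X w) Q * f ∈ I ⊔ Ideal.span (Set.range fun v => Polynomial.aeval (X v : MvPolynomial V F) (G v))) :
    f ∈ I ⊔ Ideal.span (Set.range fun v => Polynomial.aeval (X v : MvPolynomial V F) (G v)) := by
  rw [h.mem_iff G hJ'] at hf ⊢
  rw [h.mul_aeval w hwJ] at hf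
  exact span_reg G hG w hw Q hQ _ hf

lemma NormalForm.mul_prod (h : NormalForm I J k nu) (e : V → ℕ) (f : MvPolynomial V F) :
    nu ((∏ v ∈ J, X v ^ e v) * f) = (∏ v ∈ J, X v ^ e v) * nu f := by
  suffices ∀ J' ⊆ J, nu ((∏ v ∈ J', X v ^ e v) * f) = (∏ v ∈ J', X v ^ e v) * nu f from
    this J subset_rfl
  intro J' 
  induction J' using Finset.induction_on with
  | empty => simp
  | insert a s ha ih =>
    intro hs
    rw [Finset.prod_insert ha, mul_assoc]
    have := h.mul_aeval a (hs (Finset.mem_insert_self _ _)) (Polynomial.X ^ e a) ((∏ v ∈ s, X v ^ e v) * f)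
    simp only [map_pow, Polynomial.aeval_X] at this
    rw [this, ih ((Finset.subset_insert _ _).trans hs), mul_assoc]

lemma prod_eq_mono (J : Finset V) (e : V → ℕ) :
    (∏ v ∈ J, (X v : MvPolynomial V F) ^ e v) =
      monomial (Finsupp.equivFunOnFinite.symm fun v => if v ∈ J then e v else 0) 1 := by
  rw [monomial_eq, Finsupp.prod_fintype _ _ (by simp)]
  simp [pow_ite]

lemma NormalForm.N3 (h : NormalForm I J k nu) (e e' : V → ℕ) 
    (f : MvPolynomial V F)
    (hf : (∏ v ∈ J, X v ^ e v) * f ∈ 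
      I ⊔ Ideal.span ((fun v => (X v : MvPolynomial V F) ^ (e v + e' v)) '' (J : Set V))) :
    f ∈ I ⊔ Ideal.span ((fun v => (X v : MvPolynomial V F) ^ (e' v)) '' (J : Set V)) := by
  rw [h.mem_iff'] at hf ⊢
  rw [h.mul_prod, mem_mono] at hf
  rw [mem_mono]
  intro m hm
  rw [prod_eq_mono] at hf
  obtain ⟨v, hv, h1⟩ := hf ((Finsupp.equivFunOnFinite.symm fun v => if v ∈ J then e v else 0) + m) 
    (by rw [coeff_monomial_mul, one_mul]; exact hm)
  refine ⟨v, hv, ?_⟩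
  simp [hv] at h1
  exact h1

end nf

set_option linter.unusedSectionVars false
section top
variable {V F : Type*} [Fintype V] [DecidableEq V] [Field F]

lemma top_mul (f g : MvPolynomial V F) (a b : ℕ) (hf : f.totalDegree ≤ a) (hg : g.totalDegree ≤ b) :
    homogeneousComponent (a + b) (f * g) = homogeneousComponent a f * homogeneousComponent b g := by
  rw [totalDegree_le_iff'] at hf hg
  ext m
  rw [coeff_homogeneousComponent, coeff_mul, coeff_mul]
  split_ifs with hm
  · refine Finset.sum_congr rfl fun x hx => ?_
    rw [coeff_homogeneousComponent, coeff_homogeneousComponent]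
    rw [Finset.HasAntidiagonal.mem_antidiagonal] at hx
    rw [← hx, map_add] at hm
    by_cases h1 : coeff x.1 f = 0
    · simp [h1]
    by_cases h2 : coeff x.2 g = 0
    · simp [h2]
    have := hf _ h1
    have := hg _ h2
    rw [if_pos (by omega), if_pos (by omega)]
  · symm
    refine Finset.sum_eq_zero fun x hx => ?_
    rw [coeff_homogeneousComponent, coeff_homogeneousComponent]
    rw [Finset.HasAntidiagonal.mem_antidiagonal] at hx
    rw [← hx, map_add] at hm
    by_cases h1 : x.1.degree = a
    · rw [if_neg (c := x.2.degree = b) (by omega), mul_zero]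
    · rw [if_neg h1, zero_mul]

lemma top_pow (f : MvPolynomial V F) (a : ℕ) (hf : f.totalDegree ≤ a) (q : ℕ) :
    homogeneousComponent (q * a) (f ^ q) = homogeneousComponent a f ^ q := by
  induction q with
  | zero => simp
  | succ q ih =>
    rw [pow_succ, pow_succ, add_mul, one_mul, top_mul _ _ _ _ _ hf, ih]
    exact (totalDegree_pow _ _).trans (Nat.mul_le_mul_left _ hf)

lemma pow_mem_sup {R : Type*} [CommRing R] (p : ℕ) [Fact p.Prime] [CharP R p] {ι : Type*}
    [Fintype ι] (I : Ideal R) (g : ι → R) (z : R) (hz : z ∈ I ⊔ Ideal.span (Set.range g)) (e : ℕ) :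
    z ^ p ^ e ∈ I ⊔ Ideal.span (Set.range fun i => g i ^ p ^ e) := by
  obtain ⟨a, ha, b, hb, rfl⟩ := Submodule.mem_sup.1 hz
  obtain ⟨c, rfl⟩ := (Ideal.mem_span_range_iff_exists_fun).1 hb
  rw [add_pow_char_pow, sum_pow_char_pow]
  refine Submodule.add_mem_sup (Ideal.pow_mem_of_mem _ ha _ (pow_pos (Nat.Prime.pos Fact.out) e)) ?_
  refine sum_mem fun i _ => ?_
  rw [mul_pow]
  exact Ideal.mul_mem_left _ _ (Ideal.subset_span ⟨i, rfl⟩)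

variable {I : Ideal (MvPolynomial V F)} {J : Finset V} {k : ℕ}
    {nu : MvPolynomial V F →ₗ[F] MvPolynomial V F}

/-- Reduction: from a reduced nonzero element get a multiple with good top part. -/
lemma exists_mult (K : V → ℕ) (x : MvPolynomial V F) (hx : x ≠ 0)
    (hJ : (Jᶜ : Finset V).Nonempty)
    (hU : ∀ m, coeff m x ≠ 0 → ∑ v ∈ Jᶜ, m v ≤ k) (hK : ∀ m, coeff m x ≠ 0 → ∀ v ∈ J, m v < K v) :
    ∃ (D : ℕ) (w y β : MvPolynomial V F), y = w * x ∧ y.totalDegree ≤ D ∧ β ≠ 0 ∧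
      (∀ m, coeff m β ≠ 0 → (∀ v ∈ J, m v = 0) ∧ ∑ v ∈ Jᶜ, m v = k) ∧
      homogeneousComponent D y - (∏ v ∈ J, X v ^ (K v - 1)) * β ∈
        Ideal.span ((fun v => (X v : MvPolynomial V F) ^ K v) '' (J : Set V)) := by
  set D0 := x.totalDegree with hD0
  have hdeg := (totalDegree_le_iff' x D0).1 le_rfl
  have hne : (x.support.filter fun m => m.degree = D0).Nonempty := by
    obtain ⟨m, hm, h⟩ := Finset.exists_mem_eq_sup x.support (support_nonempty.2 hx) (fun s => s.sum fun _ e => e)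
    refine ⟨m, Finset.mem_filter.2 ⟨hm, ?_⟩⟩
    rw [Finsupp.degree_apply]
    exact h.symm
  obtain ⟨s0, hs0, hmax⟩ := Finset.exists_max_image _ (fun m => ∑ v ∈ Jᶜ, m v) hne
  rw [Finset.mem_filter, mem_support_iff] at hs0
  obtain ⟨hs0x, hs0D⟩ := hs0
  obtain ⟨v0, hv0⟩ := hJ
  have hv0' : v0 ∉ J := by simpa using hv0
  set r := k - ∑ v ∈ Jᶜ, s0 v with hr
  have hrk : ∑ v ∈ Jᶜ, s0 v + r = k := by have := hU _ hs0x; omega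
  -- the ends part of multiplier
  set w1 : V →₀ ℕ := Finsupp.equivFunOnFinite.symm fun v => if v ∈ J then K v - 1 - s0 v else 0 with hw1
  set ww : V →₀ ℕ := w1 + Finsupp.single v0 r with hww
  set Kf : V →₀ ℕ := Finsupp.equivFunOnFinite.symm fun v => if v ∈ J then K v - 1 else 0 with hKf
  have hwwJ : ∀ v ∈ J, ww v = K v - 1 - s0 v := by
    intro v hv
    have : v0 ≠ v := fun h => hv0' (h ▸ hv)
    simp [hww, hw1, hv, this]
  have hwwJ' : ∀ v ∉ J, ww v = Finsupp.single v0 r v := by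
    intro v hv
    simp [hww, hw1, hv]
  -- beta
  set β : MvPolynomial V F := ∑ s ∈ x.support.filter (fun s => s.degree = D0 ∧ ∀ v ∈ J, s v = s0 v),
    monomial (s + ww - Kf) (coeff s x) with hβ
  have key : ∀ s, (∀ v ∈ J, s v = s0 v) → coeff s x ≠ 0 → ∀ v, (s + ww - Kf) v = if v ∈ J then 0 else s v + Finsupp.single v0 r v := by
    intro s hs hsx v
    split_ifs with hv
    · have := hK s hsx v hv
      have h2 := hs v hv
      simp [hwwJ v hv, hKf, hv]
      omega
    · simp [hwwJ' v hv, hKf, hv]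
  have sumJ : ∀ s : V →₀ ℕ, s.degree = ∑ v ∈ J, s v + ∑ v ∈ Jᶜ, s v := by
    intro s
    rw [deg_eq_sum, Finset.sum_add_sum_compl]
  have hsum0 : ∑ v ∈ Jᶜ, (Finsupp.single v0 r) v = r := by
    rw [Finset.sum_eq_single v0]
    · simp
    · intro b _ hb; simp [Ne.symm hb]
    · intro h; exact absurd hv0 h
  refine ⟨D0 + ww.degree, monomial ww 1, monomial ww 1 * x, β, rfl, ?_, ?_, ?_, ?_⟩
  · refine (totalDegree_mul _ _).trans ?_
    rw [add_comm]
    refine Nat.add_le_add_left ?_ _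
    rw [totalDegree_monomial _ one_ne_zero, Finsupp.degree_apply]
    rfl
  · intro h0
    have : coeff (s0 + ww - Kf) β = coeff s0 x := by
      rw [hβ, coeff_sum, Finset.sum_eq_single s0]
      · rw [coeff_monomial, if_pos rfl]
      · intro s hs hne
        rw [Finset.mem_filter, mem_support_iff] at hs
        rw [coeff_monomial, if_neg]
        intro heq
        apply hne
        ext v
        have h1 := key s hs.2.2 hs.1 v
        have h2 := key s0 (fun _ _ => rfl) hs0x v
        rw [heq, h2] at h1
        by_cases hv : v ∈ J
        · exact hs.2.2 v hv
        · simp [hv] at h1; exact h1.symm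
      · intro h
        exact absurd (Finset.mem_filter.2 ⟨mem_support_iff.2 hs0x, hs0D, fun _ _ => rfl⟩) h
    rw [h0, coeff_zero] at this
    exact hs0x this.symm
  · intro m hm
    rw [hβ, coeff_sum] at hm
    obtain ⟨s, hs, h2⟩ := Finset.exists_ne_zero_of_sum_ne_zero hm
    rw [Finset.mem_filter, mem_support_iff] at hs
    rw [coeff_monomial] at h2
    have h3 : s + ww - Kf = m := by by_contra h'; simp [h'] at h2
    subst h3
    constructor
    · intro v hv
      rw [key s hs.2.2 hs.1 v, if_pos hv]
    · rw [Finset.sum_congr rfl (g := fun v => s v + Finsupp.single v0 r v)]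
      · rw [Finset.sum_add_distrib, hsum0]
        have h4 := sumJ s
        have h5 := sumJ s0
        rw [Finset.sum_congr (g := fun v => s0 v) rfl hs.2.2] at h4
        omega
      · intro v hv
        rw [key s hs.2.2 hs.1 v, if_neg (by simpa using hv)]
  · have hP : (∏ v ∈ J, X v ^ (K v - 1)) = monomial Kf (1:F) := prod_eq_mono J _
    have h1 : (∏ v ∈ J, X v ^ (K v - 1)) * β = ∑ s ∈ x.support.filter (fun s => s.degree = D0 ∧ ∀ v ∈ J, s v = s0 v),
        monomial (s + ww) (coeff s x) := by
      rw [hP, hβ, Finset.mul_sum]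
      refine Finset.sum_congr rfl fun s hs => ?_
      rw [Finset.mem_filter, mem_support_iff] at hs
      rw [monomial_mul, one_mul]
      congr 1
      rw [add_comm, tsub_add_cancel_of_le]
      intro v
      by_cases hv : v ∈ J
      · have := hK s hs.1 v hv
        have h2 := hs.2.2 v hv
        simp [hKf, hv, hwwJ v hv]
        omega
      · simp [hKf, hv]
    have h2 : homogeneousComponent (D0 + ww.degree) (monomial ww 1 * x) =
       ∑ s ∈ x.support.filter (fun s => s.degree = D0), monomial (s + ww) (coeff s x) := by
      rw [add_comm, top_mul _ _ _ _ _ le_rfl, homogeneousComponent_of_mem (isHomogeneous_monomial _ rfl), if_pos rfl, homogeneousComponent_apply, Finset.mul_sum]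
      · refine Finset.sum_congr rfl fun s _ => ?_
        rw [monomial_mul, one_mul, add_comm]
      · rw [totalDegree_monomial _ one_ne_zero, Finsupp.degree_apply]
        rfl
    rw [h1, h2, ← Finset.filter_filter, ← Finset.sum_filter_add_sum_filter_not (x.support.filter (fun s => s.degree = D0)) (fun s => ∀ v ∈ J, s v = s0 v), add_sub_cancel_left]
    refine sum_mem fun s hs => ?_
    rw [Finset.mem_filter, Finset.mem_filter, mem_support_iff] at hs
    obtain ⟨⟨hsx, hsD⟩, hns⟩ := hs
    rw [mem_mono]
    intro m hm
    rw [coeff_monomial] at hm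
    have h3 : s + ww = m := by by_contra h'; simp [h'] at hm
    subst h3
    by_contra hcon
    push Not at hcon
    apply hns
    have h4 : ∀ v ∈ J, s v ≤ s0 v := by
      intro v hv
      have h5 := hcon v hv
      have h6 := hK s hsx v hv
      have h7 := hK s0 hs0x v hv
      rw [Finsupp.add_apply, hwwJ v hv] at h5
      omega
    have h5 := hmax s (Finset.mem_filter.2 ⟨mem_support_iff.2 hsx, hsD⟩)
    have h6 := sumJ s
    have h7 := sumJ s0
    refine (Finset.sum_eq_sum_iff_of_le h4).1 (le_antisymm (Finset.sum_le_sum h4) ?_)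
    omega

end top

set_option linter.unusedSectionVars false
section tc
variable {V F : Type*} [Fintype V] [DecidableEq V] [Field F]
variable {I : Ideal (MvPolynomial V F)} {J : Finset V} {k : ℕ}
    {nu : MvPolynomial V F →ₗ[F] MvPolynomial V F}

lemma NormalForm.tight (h : NormalForm I J k nu) (hJne : (Jᶜ : Finset V).Nonempty)
    (p : ℕ) [Fact p.Prime] [CharP F p] {K' τ : Type*} [Field K'] [CharP K' p] [PerfectRing K' p]
    (φ : MvPolynomial V F →+* MvPolynomial τ K') (hφ : ∀ f, φ f = 0 ↔ f ∈ I)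
    (hE2 : ∀ β : MvPolynomial V F, (∀ m, coeff m β ≠ 0 → (∀ v ∈ J, m v = 0) ∧ ∑ v ∈ Jᶜ, m v = k) →
      φ β ∈ Ideal.span (Set.range fun v : J => φ (X (v : V))) → β = 0)
    (G : V → Polynomial F) (hJ : ∀ v ∈ J, (G v).Monic) (hJ' : ∀ v ∉ J, G v = 0)
    (c x : MvPolynomial V F) (hc : c ∉ I)
    (hx : ∀ e : ℕ, c * x ^ p ^ e ∈ I ⊔ Ideal.span
      (Set.range fun v => Polynomial.aeval (X v : MvPolynomial V F) (G v) ^ p ^ e)) :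
    x ∈ I ⊔ Ideal.span (Set.range fun v => Polynomial.aeval (X v : MvPolynomial V F) (G v)) := by
  have hp : p.Prime := Fact.out
  have hq : ∀ e, 0 < p ^ e := fun e => pow_pos hp.pos e
  have hG : ∀ v, G v = 0 ∨ (G v).Monic := fun v => by
    by_cases hv : v ∈ J
    · exact .inr (hJ v hv)
    · exact .inl (hJ' v hv)
  by_contra hxn
  set x' := remG G (nu x) with hx'
  have hxx' : x - x' ∈ I ⊔ Ideal.span (Set.range fun v => Polynomial.aeval (X v : MvPolynomial V F) (G v)) := by
    have := Submodule.add_mem_sup (h.sub x) (remG_sub G (nu x))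
    simpa using this
  have hx'0 : x' ≠ 0 := by
    intro h0
    rw [h0, sub_zero] at hxx'
    exact hxn hxx'
  have hU : ∀ m, coeff m x' ≠ 0 → ∑ v ∈ Jᶜ, m v ≤ k := by
    intro m hm
    obtain ⟨m', h1, -, h2, -⟩ := supp_remG G hG _ m hm
    refine le_trans (le_of_eq ?_) (h.supp x m' h1)
    refine Finset.sum_congr rfl fun v hv => h2 v (hJ' v (by simpa using hv))
  have hK : ∀ m, coeff m x' ≠ 0 → ∀ v ∈ J, m v < (G v).natDegree := by
    intro m hm v hv
    obtain ⟨m', h1, -, -, h2⟩ := supp_remG G hG _ m hm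
    exact h2 v (hJ v hv).ne_zero
  have hKpos : ∀ v ∈ J, 0 < (G v).natDegree := by
    intro v hv
    obtain ⟨m, hm⟩ := support_nonempty.2 hx'0
    exact (Nat.zero_le _).trans_lt (hK m (mem_support_iff.1 hm) v hv)
  obtain ⟨D, w, y, β, hy, hyD, hβ0, hβ, htop⟩ := exists_mult (k := k) (fun v => (G v).natDegree) x' hx'0 hJne hU hK
  set c' := nu c with hc'
  have hc'0 : c' ≠ 0 := by
    intro h0
    have := h.sub c
    rw [← hc', h0, sub_zero] at this
    exact hc this
  set δ := c'.totalDegree with hδ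
  set c'' := homogeneousComponent δ c' with hc''
  have hc''0 : c'' ≠ 0 := by
    obtain ⟨m, hm, hmd⟩ := Finset.exists_mem_eq_sup c'.support (support_nonempty.2 hc'0) (fun s => s.sum fun _ e => e)
    intro h0
    have := congrArg (coeff m) h0
    rw [hc'', coeff_homogeneousComponent, if_pos, coeff_zero] at this
    · exact mem_support_iff.1 hm this
    · rw [Finsupp.degree_apply]; exact hmd.symm
  have hc''I : c'' ∉ I := by
    intro hmem
    apply hc''0
    rw [← h.ker _ hmem]
    symm
    apply h.fix
    intro m hm
    rw [hc'', coeff_homogeneousComponent] at hm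
    refine h.supp c m ?_
    intro h0
    rw [← hc', ] at h0
    simp [h0] at hm
  -- main membership
  have main : ∀ e : ℕ, φ c'' * φ β ^ p ^ e ∈ Ideal.span (Set.range fun v : J => φ (X (v : V)) ^ p ^ e) := by
    intro e
    set q := p ^ e with hqe
    set Sq := Ideal.span (Set.range fun v => Polynomial.aeval (X v : MvPolynomial V F) (G v) ^ q) with hSq
    have h1 : c * x' ^ q ∈ I ⊔ Sq := by
      have h2 := pow_mem_sup p I _ _ hxx' e
      rw [sub_pow_char_pow] at h2
      have h3 := Ideal.mul_mem_left _ c h2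
      have h4 := sub_mem (hx e) h3
      rwa [mul_sub, sub_sub_cancel] at h4
    have h2 : c' * y ^ q ∈ I ⊔ Sq := by
      have h3 : c * y ^ q ∈ I ⊔ Sq := by
        rw [hy, mul_pow, mul_left_comm]
        exact Ideal.mul_mem_left _ _ h1
      have h4 : (c - c') * y ^ q ∈ I ⊔ Sq :=
        Ideal.mul_mem_right _ _ (Ideal.mem_sup_left (h.sub c))
      have := sub_mem h3 h4
      rwa [← sub_mul, sub_sub_cancel] at this
    have h3 := h.N2 (fun v => G v ^ q) (fun v hv => (hJ v hv).pow q)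
      (fun v hv => by show G v ^ q = 0; rw [hJ' v hv, zero_pow (hq e).ne']) (δ + q * D) (c' * y ^ q)
      ((totalDegree_mul _ _).trans (Nat.add_le_add_left
        ((totalDegree_pow _ _).trans (Nat.mul_le_mul_left _ hyD)) _))
      (by simpa only [map_pow] using h2)
    rw [top_mul _ _ _ _ le_rfl ((totalDegree_pow _ _).trans (Nat.mul_le_mul_left _ hyD)),
      top_pow _ _ hyD] at h3
    simp only [Polynomial.natDegree_pow] at h3
    set T := Ideal.span ((fun v => (X v : MvPolynomial V F) ^ (q * (G v).natDegree)) '' (J : Set V)) with hT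
    have h4 : (homogeneousComponent D y - (∏ v ∈ J, X v ^ ((G v).natDegree - 1)) * β) ^ q ∈ I ⊔ T := by
      rw [Set.image_eq_range] at htop
      have h5 := pow_mem_sup p I (fun v : (J : Set V) => (X (v : V) : MvPolynomial V F) ^ (G v).natDegree) _ (Ideal.mem_sup_right htop) e
      convert h5 using 2
      rw [hT, Set.image_eq_range]
      simp only [← pow_mul, mul_comm, hqe]
    have h5 : (∏ v ∈ J, X v ^ (q * ((G v).natDegree - 1))) * (c'' * β ^ q) ∈ I ⊔ T := by
      rw [sub_pow_char_pow] at h4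
      have := sub_mem h3 (Ideal.mul_mem_left _ c'' h4)
      rw [mul_sub, sub_sub_cancel, mul_pow, ← Finset.prod_pow] at this
      simp only [← pow_mul] at this
      convert this using 1
      simp only [mul_comm q]
      ring
    have h6 := h.N3 (fun v => q * ((G v).natDegree - 1)) (fun v => q) (c'' * β ^ q) (by
      convert h5 using 3
      refine Set.image_congr fun v hv => ?_
      congr 1
      have := hKpos v hv
      obtain ⟨a, ha⟩ : ∃ a, (G v).natDegree = a + 1 := ⟨(G v).natDegree - 1, by omega⟩
      rw [ha]; simp; ring)
    obtain ⟨a, ha, b, hb, hab⟩ := Submodule.mem_sup.1 h6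
    have h7 : φ (c'' * β ^ q) = φ b := by
      rw [← hab, map_add, (hφ a).2 ha, zero_add]
    rw [map_mul, map_pow] at h7
    rw [h7]
    have h8 := Ideal.mem_map_of_mem φ hb
    rw [Ideal.map_span, Set.image_image, Set.image_eq_range] at h8
    simp only [map_pow] at h8
    exact h8
  have h9 := poly_tight p _ (φ c'') (φ β) (fun h0 => hc''I ((hφ _).1 h0)) main
  exact hβ0 (hE2 β hβ h9)

end tc

set_option linter.unusedSectionVars false
section main
variable {V F : Type*} [Fintype V] [DecidableEq V] [Field F]
variable {I : Ideal (MvPolynomial V F)} {J : Finset V} {k : ℕ}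
    {nu : MvPolynomial V F →ₗ[F] MvPolynomial V F}

lemma mk_mem_span {P : Type*} [CommRing P] (I : Ideal P) (S : Set P) (x : P) :
    Ideal.Quotient.mk I x ∈ Ideal.span (Ideal.Quotient.mk I '' S) ↔ x ∈ I ⊔ Ideal.span S := by
  rw [← Ideal.map_span, Ideal.mem_quotient_iff_mem_sup, sup_comm]

lemma span_conv {d : ℕ} (E : Fin d → V) (g : V → MvPolynomial V F) (s : Set (Fin d))
    (g' : V → MvPolynomial V F) (h1 : ∀ i ∈ s, g' (E i) = g (E i)) (h2 : ∀ v, v ∉ E '' s → g' v = 0) :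
    Ideal.span ((fun i => Ideal.Quotient.mk I (g (E i))) '' s) = Ideal.span (Ideal.Quotient.mk I '' (Set.range g')) := by
  apply le_antisymm
  · rw [Ideal.span_le]
    rintro _ ⟨i, hi, rfl⟩
    apply Ideal.subset_span
    exact ⟨_, ⟨E i, rfl⟩, by rw [h1 i hi]⟩
  · rw [Ideal.span_le]
    rintro _ ⟨_, ⟨v, rfl⟩, rfl⟩
    by_cases hv : v ∈ E '' s
    · obtain ⟨i, hi, rfl⟩ := hv
      apply Ideal.subset_span
      exact ⟨i, hi, by rw [h1 i hi]⟩
    · simp [h2 v hv]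

theorem abstract_main (h : NormalForm I J k nu) (hJne : (Jᶜ : Finset V).Nonempty)
    (p : ℕ) [Fact p.Prime] [CharP F p] {K' τ : Type*} [Field K'] [CharP K' p] [PerfectRing K' p]
    (φ : MvPolynomial V F →+* MvPolynomial τ K') (hφ : ∀ f, φ f = 0 ↔ f ∈ I)
    (hE2 : ∀ β : MvPolynomial V F, (∀ m, coeff m β ≠ 0 → (∀ v ∈ J, m v = 0) ∧ ∑ v ∈ Jᶜ, m v = k) →
      φ β ∈ Ideal.span (Set.range fun v : J => φ (X (v : V))) → β = 0)
    (d : ℕ) (E : Fin d → V) (hE : Function.Injective E) (hEJ : ∀ v, v ∈ J ↔ ∃ i, E i = v)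
    (f : Fin d → MvPolynomial V F ⧸ I)
    (hart : IsArtinianRing ((MvPolynomial V F ⧸ I) ⧸ Ideal.span (Set.range f)))
    (x c : MvPolynomial V F ⧸ I) (hc : c ≠ 0)
    (hx : ∀ e : ℕ, c * x ^ p ^ e ∈ frobeniusPower (p ^ e) (Ideal.span (Set.range f))) :
    x ∈ Ideal.span (Set.range f) := by
  classical
  have hp : p.Prime := Fact.out
  have hfin : Module.Finite F ((MvPolynomial V F ⧸ I) ⧸ Ideal.span (Set.range f)) := by
    exact (Module.finite_iff_isArtinianRing F ((MvPolynomial V F ⧸ I) ⧸ Ideal.span (Set.range f))).2 hart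
  have : Nontrivial (MvPolynomial V F ⧸ I) := ⟨c, 0, hc⟩
  have : CharP (MvPolynomial V F ⧸ I) p :=
    charP_of_injective_algebraMap (algebraMap F (MvPolynomial V F ⧸ I)).injective p
  let a : V → ((MvPolynomial V F ⧸ I) ⧸ Ideal.span (Set.range f)) := fun v =>
    Ideal.Quotient.mk _ (Ideal.Quotient.mk _ (X v))
  let G0 : V → Polynomial F := fun v => minpoly F (a v)
  have hG0 : ∀ v, (G0 v).Monic := fun v => minpoly.monic (Algebra.IsIntegral.isIntegral _)
  have hG0f : ∀ v, Ideal.Quotient.mk I (Polynomial.aeval (X v) (G0 v)) ∈ Ideal.span (Set.range f) := by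
    intro v
    rw [← Ideal.Quotient.eq_zero_iff_mem]
    have h1 := minpoly.aeval F (a v)
    have h2 : a v = (Ideal.Quotient.mkₐ F (Ideal.span (Set.range f))).comp (Ideal.Quotient.mkₐ F I) (X v) := rfl
    rw [h2, Polynomial.aeval_algHom_apply] at h1
    exact h1
  let G : V → Polynomial F := fun v => if v ∈ J then G0 v else 0
  have hGJ : ∀ v ∈ J, (G v).Monic := fun v hv => by simp only [G, hv, if_true]; exact hG0 v
  have hGJ' : ∀ v ∉ J, G v = 0 := fun v hv => by simp only [G, hv, if_false]
  have hEmem : ∀ i, E i ∈ J := fun i => (hEJ _).2 ⟨i, rfl⟩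
  let gP : V → MvPolynomial V F := fun v => Polynomial.aeval (X v) (G0 v)
  let g : Fin d → MvPolynomial V F ⧸ I := fun i => Ideal.Quotient.mk I (gP (E i))
  have hgspan : ∀ n : ℕ, 0 < n → Ideal.span (Set.range fun i => g i ^ n) = Ideal.span (Ideal.Quotient.mk I ''
      (Set.range fun v => Polynomial.aeval (X v : MvPolynomial V F) (G v) ^ n)) := by
    intro n hn
    have := span_conv (I := I) E (fun v => gP v ^ n) Set.univ
      (fun v => Polynomial.aeval (X v : MvPolynomial V F) (G v) ^ n)
      (fun i _ => by simp only [gP, G, hEmem i, if_true]) (fun v hv => by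
        have : v ∉ J := fun h' => hv (by simpa using (hEJ v).1 h')
        simp only [hGJ' v this, map_zero, zero_pow hn.ne'])
    rw [← this, Set.image_univ]
    simp only [map_pow, g]
  have hgspan1 : Ideal.span (Set.range g) = Ideal.span (Ideal.Quotient.mk I ''
      (Set.range fun v => Polynomial.aeval (X v : MvPolynomial V F) (G v))) := by
    simpa using hgspan 1 one_pos
  have key := linkage d (⊥ : Ideal (MvPolynomial V F ⧸ I)) f g
    (by intro i; rw [bot_sup_eq]; exact hG0f _) ?_ x ?_
  · rwa [bot_sup_eq] at key
  · intro i r hr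
    rw [bot_sup_eq] at hr ⊢
    obtain ⟨r, rfl⟩ := Ideal.Quotient.mk_surjective r
    let G' : V → Polynomial F := fun v => if v ∈ E '' {j | j < i} then G0 v else 0
    have hsp := span_conv (I := I) E gP {j | j < i} (fun v => Polynomial.aeval (X v : MvPolynomial V F) (G' v))
      (fun j hj => by
        have : E j ∈ E '' {j | j < i} := ⟨j, hj, rfl⟩
        simp only [gP, G', this, if_true])
      (fun v hv => by simp only [G', hv, if_false, map_zero])
    change _ ∈ Ideal.span ((fun i => Ideal.Quotient.mk I (gP (E i))) '' {j | j < i}) at hr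
    change _ ∈ Ideal.span ((fun i => Ideal.Quotient.mk I (gP (E i))) '' {j | j < i})
    rw [hsp] at hr ⊢
    change Ideal.Quotient.mk I (gP (E i)) * _ ∈ _ at hr
    rw [← map_mul, mk_mem_span] at hr
    rw [mk_mem_span]
    refine h.N1 G' ?_ ?_ (E i) (hEmem i) ?_ (G0 (E i)) (hG0 _) r hr
    · intro v
      by_cases hv : v ∈ E '' {j | j < i}
      · right; simp only [G', hv, if_true]; exact hG0 v
      · left; simp only [G', hv, if_false]
    · intro v hv
      have : v ∉ E '' {j | j < i} := by
        rintro ⟨j, -, rfl⟩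
        exact hv (hEmem j)
      simp only [G', this, if_false]
    · have : E i ∉ E '' {j | j < i} := by
        rintro ⟨j, hj, hji⟩
        rw [hE hji] at hj
        exact lt_irrefl i (by simpa using hj)
      simp only [G', this, if_false]
  · intro y hy
    rw [bot_sup_eq] at hy ⊢
    have hzy : ∀ z ∈ Ideal.span (Set.range f), z * y ∈ Ideal.span (Set.range g) := by
      intro z hz
      obtain ⟨cc, rfl⟩ := (Ideal.mem_span_range_iff_exists_fun).1 hz
      rw [Finset.sum_mul]
      refine sum_mem fun i _ => ?_
      rw [mul_assoc]
      exact Ideal.mul_mem_left _ _ (hy i)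
    have hq : ∀ e : ℕ, c * (x * y) ^ p ^ e ∈ Ideal.span (Set.range fun i => g i ^ p ^ e) := by
      intro e
      rw [mul_pow, ← mul_assoc]
      have : ∀ u ∈ frobeniusPower (p ^ e) (Ideal.span (Set.range f)), u * y ^ p ^ e ∈ Ideal.span (Set.range fun i => g i ^ p ^ e) := by
        intro u hu
        rw [frobeniusPower] at hu
        induction hu using Submodule.span_induction with
        | mem w hw =>
          obtain ⟨z, hz, rfl⟩ := hw
          have := pow_mem_sup p ⊥ g (z * y) (Ideal.mem_sup_right (hzy z hz)) e
          rw [bot_sup_eq, mul_pow] at this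
          exact this
        | zero => simp
        | add a b _ _ ha hb => rw [add_mul]; exact add_mem ha hb
        | smul r a _ ha => rw [smul_eq_mul, mul_assoc]; exact Ideal.mul_mem_left _ _ ha
      exact this _ (hx e)
    obtain ⟨w, hw⟩ := Ideal.Quotient.mk_surjective (x * y)
    obtain ⟨c, rfl⟩ := Ideal.Quotient.mk_surjective c
    rw [← hw] at hq ⊢
    rw [hgspan1, mk_mem_span]
    refine h.tight hJne p φ hφ hE2 G hGJ hGJ' c w (fun hcI => hc (Ideal.Quotient.eq_zero_iff_mem.2 hcI)) ?_
    intro e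
    have h1 := hq e
    rw [hgspan _ (pow_pos hp.pos e), ← map_pow, ← map_mul, mk_mem_span] at h1
    exact h1

end main

set_option linter.unusedSectionVars false
set_option maxHeartbeats 1000000
section mk
variable {V F : Type*} [Fintype V] [DecidableEq V] [Field F]

theorem exists_nf (I : Ideal (MvPolynomial V F)) (J : Finset V) (k : ℕ)
    (hspan : ∀ m : V →₀ ℕ, Ideal.Quotient.mk I (monomial m 1) ∈ Submodule.span F
      {r | ∃ m' : V →₀ ℕ, ∑ v ∈ Jᶜ, m' v ≤ k ∧ m'.degree = m.degree ∧ r = Ideal.Quotient.mk I (monomial m' (1:F))})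
    {S : Type*} [CommRing S] [Algebra F S] (φ : MvPolynomial V F →ₐ[F] S)
    (hφ : ∀ f ∈ I, φ f = 0)
    (hli : LinearIndependent F (fun m : {m : V →₀ ℕ // ∑ v ∈ Jᶜ, m v ≤ k} => φ (monomial m.1 1))) :
    ∃ nu, NormalForm I J k nu ∧ ∀ f, φ f = 0 ↔ f ∈ I := by
  let U := {m : V →₀ ℕ // ∑ v ∈ Jᶜ, m v ≤ k}
  let u : U → MvPolynomial V F ⧸ I := fun m => Ideal.Quotient.mk I (monomial m.1 1)
  let mk := Ideal.Quotient.mkₐ F I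
  have hu : LinearIndependent F u := by
    apply LinearIndependent.of_comp (Ideal.Quotient.liftₐ I φ hφ).toLinearMap
    exact hli
  have hmono : ∀ m : V →₀ ℕ, Ideal.Quotient.mk I (monomial m 1) ∈ Submodule.span F (Set.range u) := by
    intro m
    refine Submodule.span_mono ?_ (hspan m)
    rintro _ ⟨m', h1, h2, rfl⟩
    exact ⟨⟨m', h1⟩, rfl⟩
  have htop : ⊤ ≤ Submodule.span F (Set.range u) := by
    rintro r -
    obtain ⟨f, rfl⟩ := Ideal.Quotient.mk_surjective r
    revert f
    apply mono_induct
    · exact hmono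
    · intro a b ha hb; rw [map_add]; exact add_mem ha hb
    · intro c a ha
      have : Ideal.Quotient.mk I (c • a) = c • Ideal.Quotient.mk I a := map_smul mk c a
      rw [this]; exact Submodule.smul_mem _ c ha
  let b := Module.Basis.mk hu htop
  have hb : ∀ m, b m = u m := fun m => Module.Basis.mk_apply hu htop m
  let nu0 : (MvPolynomial V F ⧸ I) →ₗ[F] MvPolynomial V F := b.constr F (fun m => monomial m.1 1)
  have hnu0 : ∀ m : U, nu0 (u m) = monomial m.1 1 := by
    intro m; rw [← hb]; exact b.constr_basis F _ m
  let nu : MvPolynomial V F →ₗ[F] MvPolynomial V F := nu0.comp mk.toLinearMap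
  have hnu : ∀ f, nu f = nu0 (Ideal.Quotient.mk I f) := fun f => rfl
  have hmk : ∀ r, Ideal.Quotient.mk I (nu0 r) = r := by
    have : mk.toLinearMap.comp nu0 = LinearMap.id := by
      apply b.ext
      intro m
      rw [LinearMap.comp_apply, hb, hnu0]
      rfl
    exact fun r => LinearMap.congr_fun this r
  have hhom : ∀ m : V →₀ ℕ, (nu (monomial m 1)).IsHomogeneous m.degree := by
    intro m
    rw [hnu]
    have h1 := Submodule.mem_map_of_mem (f := nu0) (hspan m)
    rw [← mem_homogeneousSubmodule]
    revert h1
    rw [Submodule.map_span]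
    intro h1
    refine (Submodule.span_le.2 ?_) h1
    rintro _ ⟨_, ⟨m', h1, h2, rfl⟩, rfl⟩
    have := hnu0 ⟨m', h1⟩
    rw [show nu0 (Ideal.Quotient.mk I (monomial m' 1)) = monomial m' 1 from this]
    rw [SetLike.mem_coe, mem_homogeneousSubmodule]
    exact isHomogeneous_monomial _ h2
  have hsupp : ∀ f m, coeff m (nu f) ≠ 0 → ∑ v ∈ Jᶜ, m v ≤ k := by
    intro f m hm
    have h1 : ∀ r, nu0 r ∈ restrictSupport F {m : V →₀ ℕ | ∑ v ∈ Jᶜ, m v ≤ k} := by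
      intro r
      have : r ∈ Submodule.span F (Set.range u) := htop trivial
      induction this using Submodule.span_induction with
      | mem x h =>
        obtain ⟨m, rfl⟩ := h
        rw [hnu0, mem_restrictSupport_iff]
        intro m' hm'
        have := support_monomial_subset hm'
        rw [Finset.mem_singleton] at this
        subst this
        exact m.2
      | zero => rw [map_zero]; exact zero_mem _
      | add a b _ _ ha hb => rw [map_add]; exact add_mem ha hb
      | smul c a _ ha => rw [map_smul]; exact Submodule.smul_mem _ _ ha
    have h2 := h1 (Ideal.Quotient.mk I f)
    rw [mem_restrictSupport_iff] at h2
    exact h2 (mem_support_iff.2 hm)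
  have hsub : ∀ f, f - nu f ∈ I := by
    intro f
    rw [← Ideal.Quotient.eq, hnu, hmk]
  refine ⟨nu, ⟨hsub, ?_, hsupp, ?_, ?_, ?_⟩, ?_⟩
  · intro f hf
    rw [hnu, Ideal.Quotient.eq_zero_iff_mem.2 hf, map_zero]
  · intro f hf
    conv_lhs => rw [f.as_sum, map_sum]
    conv_rhs => rw [f.as_sum]
    refine Finset.sum_congr rfl fun m hm => ?_
    have : monomial m (coeff m f) = coeff m f • monomial m (1:F) := by simp [smul_monomial]
    rw [this, map_smul]
    congr 1
    exact hnu0 ⟨m, hf m (mem_support_iff.1 hm)⟩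
  · intro v hv f
    have : nu0.comp (LinearMap.mulLeft F (Ideal.Quotient.mk I (X v))) = (LinearMap.mulLeft F (X v)).comp nu0 := by
      apply b.ext
      intro m
      rw [LinearMap.comp_apply, LinearMap.comp_apply, hb, hnu0, LinearMap.mulLeft_apply, LinearMap.mulLeft_apply]
      have h1 : X v * monomial m.1 (1:F) = monomial (Finsupp.single v 1 + m.1) 1 := by
        rw [X, monomial_mul, one_mul]
      rw [h1]
      have h2 : ∑ w ∈ Jᶜ, (Finsupp.single v 1 + m.1 : V →₀ ℕ) w ≤ k := by
        refine le_trans (le_of_eq ?_) m.2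
        refine Finset.sum_congr rfl fun w hw => ?_
        have : v ≠ w := by rintro rfl; simp [hv] at hw
        simp [this]
      have h3 := hnu0 ⟨_, h2⟩
      rw [← h3]
      congr 1
      simp only [u]
      rw [← map_mul, h1]
    have h2 := LinearMap.congr_fun this (Ideal.Quotient.mk I f)
    rw [hnu, hnu, map_mul]
    exact h2
  · intro f D hf
    rw [f.as_sum, map_sum]
    apply IsHomogeneous.sum
    intro m hm
    have h1 : monomial m (coeff m f) = coeff m f • monomial m (1:F) := by simp [smul_monomial]
    rw [h1, map_smul, ← mem_homogeneousSubmodule]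
    apply Submodule.smul_mem
    rw [mem_homogeneousSubmodule]
    have h2 := hf (mem_support_iff.1 hm)
    have := hhom m
    rw [Finsupp.degree_eq_weight_one] at this
    exact h2 ▸ this
  · intro f
    refine ⟨fun h0 => ?_, hφ f⟩
    suffices nu f = 0 by have h2 := hsub f; rwa [this, sub_zero] at h2
    have h1 : φ (nu f) = 0 := by
      have := hφ _ (hsub f)
      rw [map_sub, h0, zero_sub, neg_eq_zero] at this
      exact this
    have h2 : Ideal.Quotient.liftₐ I φ hφ (Ideal.Quotient.mk I f) = 0 := h0
    have h3 : Function.Injective (Ideal.Quotient.liftₐ I φ hφ).toLinearMap := by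
      exact LinearMap.injective_of_linearIndependent (v := u) (top_le_iff.1 htop) hli
    have h4 : Ideal.Quotient.mk I f = 0 := h3 (by rw [map_zero]; exact h2)
    rw [hnu, h4, map_zero]

end mk

set_option linter.unusedSectionVars false
set_option maxHeartbeats 1000000
section spanning

lemma rearr {k : ℕ} (y : Fin (k+1) → ℤ) (hy : StrictMono y) (π : Equiv.Perm (Fin (k+1))) (hπ : π ≠ 1) :
    ∑ r, y r ^ 2 - 2 * ∑ r, y r * ((r : ℕ) : ℤ) + ∑ r : Fin (k+1), (((r : ℕ) : ℤ)) ^ 2 <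
    ∑ r, (y r - ((π r : ℕ) : ℤ)) ^ 2 := by
  have h1 : ∑ r, (y r - ((π r : ℕ) : ℤ)) ^ 2 = ∑ r, y r ^ 2 - 2 * ∑ r, y r * ((π r : ℕ) : ℤ) + ∑ r : Fin (k+1), (((r : ℕ) : ℤ)) ^ 2 := by
    have : ∑ r : Fin (k+1), (((r : ℕ) : ℤ)) ^ 2 = ∑ r : Fin (k+1), (((π r : ℕ) : ℤ)) ^ 2 :=
      (Equiv.sum_comp π (fun r : Fin (k+1) => (((r : ℕ) : ℤ)) ^ 2)).symm
    rw [this, Finset.mul_sum, ← Finset.sum_sub_distrib, ← Finset.sum_add_distrib]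
    refine Finset.sum_congr rfl fun r _ => ?_
    ring
  have hm : Monovary y (fun r : Fin (k+1) => ((r : ℕ) : ℤ)) := by
    intro i j hij
    apply hy.monotone
    have : (i:ℕ) < (j:ℕ) := by simpa using hij
    exact Fin.le_of_lt this
  have h2 : ∑ r, y r * ((π r : ℕ) : ℤ) < ∑ r, y r * ((r : ℕ) : ℤ) := by
    have := (hm.sum_mul_comp_perm_lt_sum_mul_iff (σ := π)).2 ?_
    · exact this
    · intro hmon
      apply hπ
      have hmono : Monotone π := by
        intro i j hij
        by_contra hlt
        push Not at hlt
        have h3 := hmon (i := j) (j := i) (by simpa using hlt)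
        have h4 := hy.le_iff_le.1 h3
        have : i = j := le_antisymm hij h4
        subst this
        exact lt_irrefl _ hlt
      have hs : StrictMono π := hmono.strictMono_of_injective π.injective
      ext i
      have : (π : Fin (k+1) → Fin (k+1)) = id := (StrictMono.range_inj hs strictMono_id).1 (by simp)
      rw [this]; rfl
  linarith

/-- quadratic weight of an exponent -/
def wtW {M : ℕ} (m : Fin M →₀ ℕ) : ℕ := ∑ v : Fin M, (v : ℕ) ^ 2 * m v

lemma wtW_add {M : ℕ} (m m' : Fin M →₀ ℕ) : wtW (m + m') = wtW m + wtW m' := by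
  simp [wtW, mul_add, Finset.sum_add_distrib]

lemma wtW_single {M : ℕ} (v : Fin M) : wtW (Finsupp.single v 1) = (v : ℕ) ^ 2 := by
  rw [wtW, Finset.sum_eq_single v]
  · simp
  · intro b _ hb; simp [Ne.symm hb]
  · simp

lemma wtW_sum {M : ℕ} {ι : Type*} (s : Finset ι) (f : ι → (Fin M →₀ ℕ)) :
    wtW (∑ i ∈ s, f i) = ∑ i ∈ s, wtW (f i) := by
  classical
  induction s using Finset.induction_on with
  | empty => simp [wtW]
  | insert a s ha ih => rw [Finset.sum_insert ha, Finset.sum_insert ha, wtW_add, ih]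

lemma wtW_le {M : ℕ} (m : Fin M →₀ ℕ) : wtW m ≤ M ^ 2 * m.degree := by
  rw [wtW, Finsupp.degree_eq_sum, Finset.mul_sum]
  refine Finset.sum_le_sum fun v _ => Nat.mul_le_mul_right _ (Nat.pow_le_pow_left v.2.le 2)

/-- extract a sorted sequence of indices from a set of positions. -/
lemma exists_sorted {M : ℕ} (S : Finset (Fin M)) (m : Fin M →₀ ℕ) (k : ℕ) (h : k ≤ ∑ v ∈ S, m v) :
    ∃ c : Fin k → Fin M, Monotone c ∧ (∀ r, c r ∈ S) ∧ ∑ r, Finsupp.single (c r) 1 ≤ m := by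
  classical
  let ms : Multiset (Fin M) := ∑ v ∈ S, m v • {v}
  have hcard : ms.card = ∑ v ∈ S, m v := by simp [ms]
  let l := ms.sort (· ≤ ·)
  have hl : l.length = ∑ v ∈ S, m v := by simp [l, hcard]
  let c : Fin k → Fin M := fun r => l[(r:ℕ)]'(by have := r.2; omega)
  have hcount : ∀ v, ms.count v = if v ∈ S then m v else 0 := by
    intro v
    simp only [ms, Multiset.count_sum', Multiset.count_nsmul, Multiset.count_singleton]
    simp
  refine ⟨c, ?_, ?_, ?_⟩
  · intro i j hij
    have hs : l.Pairwise (· ≤ ·) := Multiset.pairwise_sort ms (· ≤ ·)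
    exact hs.sortedLE.monotone_get (a := ⟨i, by have := i.2; omega⟩) (b := ⟨j, by have := j.2; omega⟩) hij
  · intro r
    have h1 : c r ∈ l := List.getElem_mem _
    have h2 : c r ∈ ms := by simpa [l] using h1
    rw [← Multiset.count_pos, hcount] at h2
    by_contra h3
    simp [h3] at h2
  · intro v
    have h1 : (∑ r, Finsupp.single (c r) 1 : Fin M →₀ ℕ) v = (l.take k).count v := by
      have h2 : l.take k = List.ofFn c := by
        apply List.ext_getElem
        · simp; omega
        · intro i h1 h2
          simp [c]
      rw [h2, Finsupp.finsetSum_apply]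
      rw [← Multiset.coe_count, ← Fin.univ_val_map, Multiset.count_map]
      simp only [Finsupp.single_apply, Finset.sum_boole, Nat.cast_id]
      rw [Finset.card_def, Finset.filter_val]
      simp only [eq_comm]
    rw [h1]
    refine ((List.take_sublist k l).count_le v).trans ?_
    rw [← Multiset.coe_count]
    simp only [l, Multiset.sort_eq]
    rw [hcount]
    split_ifs <;> omega

end spanning

set_option linter.unusedSectionVars false
set_option maxHeartbeats 1000000

lemma prod_X_eq {V F : Type*} [Field F] {k : ℕ} (l : Fin k → V) :
    (∏ r, (X (l r) : MvPolynomial V F)) = monomial (∑ r, Finsupp.single (l r) 1) 1 := by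
  rw [monomial_sum_one]
  rfl

lemma degree_sum_single {V : Type*} {k : ℕ} (l : Fin k → V) :
    (∑ r, Finsupp.single (l r) 1 : V →₀ ℕ).degree = k := by
  rw [map_sum]; simp

theorem hankel_span {F : Type*} [Field F] (k n : ℕ) (hkn : k + 1 ≤ n)
    (H : Matrix (Fin (k + 1)) (Fin n) (MvPolynomial (Fin (n + k)) F))
    (hH : ∀ a b, H a b = X ⟨(a : ℕ) + (b : ℕ), by have := a.2; have := b.2; omega⟩)
    (I : Ideal (MvPolynomial (Fin (n + k)) F))
    (hI : ∀ g : Fin (k + 1) → Fin n, (H.submatrix id g).det ∈ I)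
    (J : Finset (Fin (n + k))) (hJ : ∀ v, v ∈ J ↔ (v : ℕ) < k ∨ n ≤ (v : ℕ))
    (m : Fin (n + k) →₀ ℕ) :
    Ideal.Quotient.mk I (monomial m 1) ∈ Submodule.span F
      {r | ∃ m' : Fin (n + k) →₀ ℕ, ∑ v ∈ Jᶜ, m' v ≤ k ∧ m'.degree = m.degree ∧
        r = Ideal.Quotient.mk I (monomial m' (1:F))} := by
  obtain ⟨B, hB⟩ : ∃ B, B = (n + k) ^ 2 * m.degree - wtW m := ⟨_, rfl⟩
  induction B using Nat.strong_induction_on generalizing m with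
  | _ B ih =>
  by_cases hm : ∑ v ∈ Jᶜ, m v ≤ k
  · exact Submodule.subset_span ⟨m, hm, rfl, rfl⟩
  push Not at hm
  obtain ⟨c, hmono, hcS, hcm⟩ := exists_sorted Jᶜ m (k + 1) hm
  have hc1 : ∀ r, k ≤ (c r : ℕ) ∧ (c r : ℕ) < n := by
    intro r
    have := hcS r
    rw [Finset.mem_compl, hJ] at this
    omega
  obtain ⟨m1, hm1⟩ := le_iff_exists_add.1 hcm
  let g : Fin (k + 1) → Fin n := fun r => ⟨(c r : ℕ) - k + r, by have := hc1 r; have := r.2; omega⟩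
  let u : Equiv.Perm (Fin (k + 1)) → Fin (k + 1) → Fin (n + k) := fun σ r =>
    ⟨(σ r : ℕ) + ((c r : ℕ) - k + r), by have := hc1 r; have := r.2; have := (σ r).2; omega⟩
  have hdet : (H.submatrix id g).det = ∑ σ : Equiv.Perm (Fin (k + 1)),
      Equiv.Perm.sign σ • monomial (∑ r, Finsupp.single (u σ r) 1) (1 : F) := by
    rw [Matrix.det_apply]
    refine Finset.sum_congr rfl fun σ _ => ?_
    rw [← prod_X_eq]
    congr 1
    refine Finset.prod_congr rfl fun r _ => ?_
    rw [Matrix.submatrix_apply, hH]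
    rfl
  have hurev : u Fin.revPerm = c := by
    funext r
    apply Fin.ext
    have := hc1 r
    have := r.2
    simp only [u, Fin.revPerm_apply, Fin.val_rev]
    omega
  have hW : ∀ σ : Equiv.Perm (Fin (k + 1)), σ ≠ Fin.revPerm →
      wtW (∑ r, Finsupp.single (c r) 1) < wtW (∑ r, Finsupp.single (u σ r) 1) := by
    intro σ hσ
    rw [wtW_sum, wtW_sum]
    simp only [wtW_single]
    let π : Equiv.Perm (Fin (k + 1)) := σ.trans Fin.revPerm
    have hπ : π ≠ 1 := by
      intro h1
      apply hσ
      ext r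
      have h2 := congrArg (fun e : Equiv.Perm (Fin (k + 1)) => (Fin.revPerm (e r))) h1
      simp only [π, Equiv.trans_apply, Fin.revPerm_apply, Fin.rev_rev, Equiv.Perm.one_apply] at h2
      rw [h2, Fin.revPerm_apply]
    let y : Fin (k + 1) → ℤ := fun r => ((c r : ℕ) : ℤ) + ((r : ℕ) : ℤ)
    have hy : StrictMono y := by
      intro i j hij
      have h1 : (c i : ℕ) ≤ c j := hmono hij.le
      have h2 : (i : ℕ) < j := hij
      simp only [y]
      omega
    have h := rearr y hy π hπ
    have h1 : ∑ r, (y r - ((π r : ℕ) : ℤ)) ^ 2 = ((∑ r, (u σ r : ℕ) ^ 2 : ℕ) : ℤ) := by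
      push_cast
      refine Finset.sum_congr rfl fun r _ => ?_
      congr 1
      have h3 := hc1 r
      have h4 := r.2
      have h5 := (σ r).2
      simp only [y, π, u, Equiv.trans_apply, Fin.revPerm_apply, Fin.val_rev]
      omega
    have h2 : ∑ r, y r ^ 2 - 2 * ∑ r, y r * ((r : ℕ) : ℤ) + ∑ r : Fin (k+1), (((r : ℕ) : ℤ)) ^ 2
        = ((∑ r, (c r : ℕ) ^ 2 : ℕ) : ℤ) := by
      push_cast
      rw [Finset.mul_sum, ← Finset.sum_sub_distrib, ← Finset.sum_add_distrib]
      refine Finset.sum_congr rfl fun r _ => ?_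
      simp only [y]
      ring
    rw [h1, h2] at h
    exact_mod_cast h
  have hrel : ∑ σ : Equiv.Perm (Fin (k + 1)), Equiv.Perm.sign σ •
      Ideal.Quotient.mk I (monomial (∑ r, Finsupp.single (u σ r) 1 + m1) (1 : F)) = 0 := by
    have h1 := Ideal.mul_mem_right (monomial m1 (1:F)) I (hI g)
    rw [← Ideal.Quotient.eq_zero_iff_mem, hdet, Finset.sum_mul, map_sum] at h1
    rw [← h1]
    refine Finset.sum_congr rfl fun σ _ => ?_
    rw [smul_mul_assoc, monomial_mul, one_mul]
    rcases Int.units_eq_one_or (Equiv.Perm.sign σ) with h2 | h2 <;> simp [h2]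
  rw [← Finset.add_sum_erase _ _ (Finset.mem_univ (Fin.revPerm : Equiv.Perm (Fin (k + 1)))), hurev, ← hm1] at hrel
  have h3 := eq_neg_of_add_eq_zero_left hrel
  set Sp := Submodule.span F
      {r | ∃ m' : Fin (n + k) →₀ ℕ, ∑ v ∈ Jᶜ, m' v ≤ k ∧ m'.degree = m.degree ∧
        r = Ideal.Quotient.mk I (monomial m' (1:F))} with hSp
  have hsign : ∀ (σ : Equiv.Perm (Fin (k + 1))) (r : MvPolynomial (Fin (n + k)) F ⧸ I),
      r ∈ Sp ↔ Equiv.Perm.sign σ • r ∈ Sp := by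
    intro σ r
    rcases Int.units_eq_one_or (Equiv.Perm.sign σ) with h2 | h2 <;> simp [h2]
  rw [hsign Fin.revPerm, h3]
  refine neg_mem (sum_mem fun σ hσ => ?_)
  rw [← hsign]
  have hdeg : (∑ r, Finsupp.single (u σ r) 1 + m1).degree = m.degree := by
    rw [hm1, map_add, map_add, degree_sum_single, degree_sum_single]
  have h4 := hW σ (Finset.ne_of_mem_erase hσ)
  have h5 := ih _ ?_ (∑ r, Finsupp.single (u σ r) 1 + m1) rfl
  · rw [hdeg] at h5
    exact h5
  · rw [hB, hdeg]
    have h6 := wtW_le (∑ r, Finsupp.single (u σ r) 1 + m1)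
    rw [hdeg] at h6
    have h7 : wtW m < wtW (∑ r, Finsupp.single (u σ r) 1 + m1) := by
      rw [hm1, wtW_add, wtW_add]; omega
    omega

set_option linter.unusedSectionVars false
set_option maxHeartbeats 1000000

/-- greedy condition: the nonzero entries are covered by `k` disjoint consecutive pairs -/
def tcond : ℕ → List ℕ → Prop
  | _, [] => True
  | k, 0 :: L => tcond k L
  | k, (_ + 1) :: [] => 1 ≤ k
  | k, (_ + 1) :: _ :: L => 1 ≤ k ∧ tcond (k - 1) L

/-- the combinatorial injection -/
def psi : List ℕ → List ℕ → List ℕ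
  | E, [] => E
  | E, 0 :: L => 0 :: psi E L
  | e :: e' :: E, (x + 1) :: L => (e + 1) :: e' :: psi E (x :: L)
  | [], (_ + 1) :: _ => []
  | [_], (_ + 1) :: _ => []
termination_by E L => E.length + L.length

lemma tcond_of_length : ∀ (L : List ℕ) (k : ℕ), L.length ≤ 2 * k → tcond k L
  | [], k, _ => by simp [tcond]
  | 0 :: L, k, h => by
    rw [tcond]; exact tcond_of_length L k (by simp at h; omega)
  | [x + 1], k, h => by simp [tcond]; simp at h; omega
  | (x + 1) :: y :: L, k, h => by
    rw [tcond]
    simp at h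
    exact ⟨by omega, tcond_of_length L (k - 1) (by omega)⟩

lemma psi_spec : ∀ (E L : List ℕ) (k : ℕ), E.length = 2 * k → L.sum ≤ k →
    (psi E L).length = E.length + L.length ∧ (psi E L).sum = E.sum + L.sum ∧ tcond k (psi E L)
  | E, [], k, h, _ => by
    rw [psi]; simpa using tcond_of_length E k h.le
  | E, 0 :: L, k, h, hs => by
    rw [psi, tcond]
    obtain ⟨h1, h2, h3⟩ := psi_spec E L k h (by simpa using hs)
    simp [h1, h2, h3]
    omega
  | e :: e' :: E, (x + 1) :: L, k, h, hs => by
    rw [psi, tcond]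
    simp at h hs
    obtain ⟨h1, h2, h3⟩ := psi_spec E (x :: L) (k - 1) (by omega) (by simp; omega)
    simp at h1 h2
    refine ⟨by simp [h1]; omega, by simp [h2]; omega, by omega, h3⟩
  | [], (x + 1) :: L, k, h, hs => by simp at h hs; omega
  | [e], (x + 1) :: L, k, h, hs => by simp at h hs; omega
termination_by E L => E.length + L.length

lemma psi_inj : ∀ (E L E' L' : List ℕ) (k : ℕ), E.length = 2 * k → E'.length = 2 * k → L.sum ≤ k →
    L'.sum ≤ k → L.length = L'.length → psi E L = psi E' L' → E = E' ∧ L = L'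
  | E, [], E', [], k, h, h', _, _, _, heq => by
    rw [psi, psi] at heq; exact ⟨heq, rfl⟩
  | E, [], E', x :: L', k, h, h', _, _, hl, heq => by simp at hl
  | E, x :: L, E', [], k, h, h', _, _, hl, heq => by simp at hl
  | E, 0 :: L, E', 0 :: L', k, h, h', hs, hs', hl, heq => by
    rw [psi, psi] at heq
    obtain ⟨h1, h2⟩ := psi_inj E L E' L' k h h' (by simpa using hs) (by simpa using hs') (by simpa using hl) (by simpa using heq)
    exact ⟨h1, by rw [h2]⟩
  | E, 0 :: L, e :: e' :: E', (x + 1) :: L', k, h, h', hs, hs', hl, heq => by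
    rw [psi, psi] at heq; simp at heq
  | e :: e' :: E, (x + 1) :: L, E', 0 :: L', k, h, h', hs, hs', hl, heq => by
    rw [psi, psi] at heq; simp at heq
  | e :: e' :: E, (x + 1) :: L, f :: f' :: E', (x' + 1) :: L', k, h, h', hs, hs', hl, heq => by
    rw [psi, psi] at heq
    simp at heq h h' hs hs' hl
    obtain ⟨h1, h2⟩ := psi_inj E (x :: L) E' (x' :: L') (k - 1) (by omega) (by omega)
      (by simp; omega) (by simp; omega) (by simpa using hl) heq.2.2
    simp at h2
    exact ⟨by rw [heq.1, heq.2.1, h1], by rw [h2.1, h2.2]⟩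
  | [], (x + 1) :: L, _, _, k, h, _, hs, _, _, _ => by simp at h hs; omega
  | [e], (x + 1) :: L, _, _, k, h, _, hs, _, _, _ => by simp at h hs; omega
  | _, _, [], (x + 1) :: L, k, _, h, _, hs, _, _ => by simp at h hs; omega
  | _, _, [e], (x + 1) :: L, k, _, h, _, hs, _, _ => by simp at h hs; omega
termination_by E L => E.length + L.length

lemma tcond_pairs : ∀ (L : List ℕ) (k : ℕ), tcond k L → ∃ a : Fin k → ℕ,
    (∀ i j, i < j → a i + 2 ≤ a j) ∧ ∀ v, L.getD v 0 ≠ 0 → ∃ j, v = a j ∨ v = a j + 1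
  | [], k, _ => ⟨fun j => 2 * j, fun i j h => by have : (i:ℕ) < j := h; simp; omega, fun v hv => by simp at hv⟩
  | 0 :: L, k, h => by
    rw [tcond] at h
    obtain ⟨a, h1, h2⟩ := tcond_pairs L k h
    refine ⟨fun j => a j + 1, fun i j hij => by have := h1 i j hij; show a i + 1 + 2 ≤ a j + 1; omega, ?_⟩
    intro v hv
    cases v with
    | zero => simp at hv
    | succ v =>
      obtain ⟨j, hj⟩ := h2 v (by simpa using hv)
      exact ⟨j, by show v + 1 = a j + 1 ∨ v + 1 = a j + 1 + 1; omega⟩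
  | [x + 1], k, h => by
    rw [tcond] at h
    refine ⟨fun j => 2 * j, fun i j h => by have : (i:ℕ) < j := h; simp; omega, fun v hv => ?_⟩
    cases v with
    | zero => exact ⟨⟨0, h⟩, by simp⟩
    | succ v => simp at hv
  | (x + 1) :: y :: L, k, h => by
    rw [tcond] at h
    obtain ⟨hk, h⟩ := h
    obtain ⟨k, rfl⟩ : ∃ k', k = k' + 1 := ⟨k - 1, by omega⟩
    obtain ⟨a, h1, h2⟩ := tcond_pairs L k (by simpa using h)
    refine ⟨Fin.cons 0 (fun j => a j + 2), ?_, ?_⟩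
    · intro i j hij
      cases j using Fin.cases with
      | zero => simp at hij
      | succ j =>
        cases i using Fin.cases with
        | zero => simp
        | succ i => simp; exact h1 i j (by simpa using hij)
    · intro v hv
      match v with
      | 0 => exact ⟨0, by simp⟩
      | 1 => exact ⟨0, by simp⟩
      | v + 2 =>
        obtain ⟨j, hj⟩ := h2 v (by simpa using hv)
        exact ⟨j.succ, by simp; omega⟩

set_option linter.unusedSectionVars false
set_option maxHeartbeats 1000000

/-- monomials supported on `k` disjoint consecutive pairs -/
def Tmon (k : ℕ) {M : ℕ} (m : Fin M →₀ ℕ) : Prop :=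
  ∃ a : Fin k → ℕ, (∀ i j, i < j → a i + 2 ≤ a j) ∧
    ∀ v : Fin M, m v ≠ 0 → ∃ j, (v : ℕ) = a j ∨ (v : ℕ) = a j + 1

/-- enumeration of the end variables -/
def endV (k n : ℕ) (hkn : k + 1 ≤ n) (i : Fin (2 * k)) : Fin (n + k) :=
  if h : (i : ℕ) < k then ⟨i, by omega⟩ else ⟨(i : ℕ) - k + n, by omega⟩

/-- enumeration of the middle variables -/
def midV (k n : ℕ) (i : Fin (n - k)) : Fin (n + k) := ⟨k + i, by omega⟩

lemma endV_inj (k n : ℕ) (hkn : k + 1 ≤ n) : Function.Injective (endV k n hkn) := by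
  intro i j h
  unfold endV at h
  apply Fin.ext
  split_ifs at h <;> (simp at h; omega)

lemma endV_val (k n : ℕ) (hkn : k + 1 ≤ n) (i : Fin (2 * k)) :
    (endV k n hkn i : ℕ) < k ∨ n ≤ (endV k n hkn i : ℕ) := by
  unfold endV
  split_ifs <;> simp <;> omega

lemma endV_surj (k n : ℕ) (hkn : k + 1 ≤ n) (v : Fin (n + k)) (h : (v : ℕ) < k ∨ n ≤ (v : ℕ)) :
    ∃ i, endV k n hkn i = v := by
  by_cases hv : (v : ℕ) < k
  · refine ⟨⟨v, by omega⟩, ?_⟩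
    simp [endV, hv]
  · refine ⟨⟨(v : ℕ) - n + k, by omega⟩, ?_⟩
    apply Fin.ext
    simp [endV]
    omega

lemma sum_end_mid (k n : ℕ) (hkn : k + 1 ≤ n) (m : Fin (n + k) → ℕ) :
    ∑ i, m (endV k n hkn i) + ∑ i, m (midV k n i) = ∑ v, m v := by
  have hb : Function.Bijective (Sum.elim (endV k n hkn) (midV k n)) := by
    rw [Fintype.bijective_iff_injective_and_card]
    constructor
    · rintro (i | i) (j | j) h
      · simp at h; rw [endV_inj k n hkn h]
      · exfalso
        simp at h
        have := endV_val k n hkn i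
        rw [h] at this
        simp [midV] at this
        omega
      · exfalso
        simp at h
        have := endV_val k n hkn j
        rw [← h] at this
        simp [midV] at this
        omega
      · simp [midV] at h
        rw [Fin.ext h]
    · simp
      omega
  rw [← hb.sum_comp, Fintype.sum_sum_type]
  rfl

lemma sum_mid (k n : ℕ) (J : Finset (Fin (n + k)))
    (hJ : ∀ v, v ∈ J ↔ (v : ℕ) < k ∨ n ≤ (v : ℕ)) (m : Fin (n + k) → ℕ) :
    ∑ i, m (midV k n i) = ∑ v ∈ Jᶜ, m v := by
  have : Jᶜ = Finset.univ.image (midV k n) := by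
    ext v
    rw [Finset.mem_compl, hJ]
    simp only [Finset.mem_image, Finset.mem_univ, true_and]
    constructor
    · intro h
      exact ⟨⟨v - k, by omega⟩, Fin.ext (by simp [midV]; omega)⟩
    · rintro ⟨i, rfl⟩
      simp [midV]
      omega
  rw [this, Finset.sum_image]
  intro i _ j _ h
  simp [midV] at h
  exact Fin.ext h

lemma sum_getD_eq {N : ℕ} (l : List ℕ) (h : l.length = N) : ∑ v : Fin N, l.getD v 0 = l.sum := by
  subst h
  conv_rhs => rw [← List.ofFn_getElem (xs := l)]
  rw [List.sum_ofFn]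
  refine Finset.sum_congr rfl fun i _ => ?_
  simp

theorem exists_inj (k n : ℕ) (hkn : k + 1 ≤ n) (J : Finset (Fin (n + k)))
    (hJ : ∀ v, v ∈ J ↔ (v : ℕ) < k ∨ n ≤ (v : ℕ)) :
    ∃ Ψ : (Fin (n + k) →₀ ℕ) → (Fin (n + k) →₀ ℕ),
      Set.InjOn Ψ {m | ∑ v ∈ Jᶜ, m v ≤ k} ∧
      ∀ m : Fin (n + k) →₀ ℕ, ∑ v ∈ Jᶜ, m v ≤ k → (Ψ m).degree = m.degree ∧ Tmon k (Ψ m) := by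
  let EL : (Fin (n + k) →₀ ℕ) → List ℕ := fun m => List.ofFn fun i => m (endV k n hkn i)
  let LL : (Fin (n + k) →₀ ℕ) → List ℕ := fun m => List.ofFn fun i => m (midV k n i)
  let P : (Fin (n + k) →₀ ℕ) → List ℕ := fun m => psi (EL m) (LL m)
  have hEl : ∀ m, (EL m).length = 2 * k := fun m => by simp [EL]
  have hLl : ∀ m, (LL m).length = n - k := fun m => by simp [LL]
  have hLs : ∀ m, (LL m).sum = ∑ v ∈ Jᶜ, m v := fun m => by
    simp only [LL, List.sum_ofFn]
    rw [sum_mid k n J hJ]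
  have hspec : ∀ m : Fin (n + k) →₀ ℕ, ∑ v ∈ Jᶜ, m v ≤ k →
      (P m).length = n + k ∧ (P m).sum = m.degree ∧ tcond k (P m) := by
    intro m hm
    obtain ⟨h1, h2, h3⟩ := psi_spec (EL m) (LL m) k (hEl m) (by rw [hLs]; exact hm)
    refine ⟨by rw [h1, hEl, hLl]; omega, ?_, h3⟩
    rw [h2, Finsupp.degree_eq_sum, ← sum_end_mid k n hkn]
    simp [EL, LL, List.sum_ofFn]
  refine ⟨fun m => Finsupp.equivFunOnFinite.symm fun v => (P m).getD v 0, ?_, ?_⟩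
  · intro m hm m' hm' heq
    have h1 := hspec m hm
    have h2 := hspec m' hm'
    have hP : P m = P m' := by
      apply List.ext_getElem (by rw [h1.1, h2.1])
      intro i hi hi'
      have := DFunLike.congr_fun heq ⟨i, by omega⟩
      simpa [hi, hi'] using this
    obtain ⟨hE, hL⟩ := psi_inj _ _ _ _ k (hEl m) (hEl m') (by rw [hLs]; exact hm) (by rw [hLs]; exact hm')
      (by rw [hLl, hLl]) hP
    ext v
    by_cases hv : (v : ℕ) < k ∨ n ≤ (v : ℕ)
    · obtain ⟨i, rfl⟩ := endV_surj k n hkn v hv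
      exact congrFun (List.ofFn_injective hE) i
    · have := congrFun (List.ofFn_injective hL) ⟨v - k, by omega⟩
      have hv' : midV k n ⟨v - k, by omega⟩ = v := Fin.ext (by simp [midV]; omega)
      rwa [hv'] at this
  · intro m hm
    obtain ⟨h1, h2, h3⟩ := hspec m hm
    constructor
    · rw [← h2, Finsupp.degree_eq_sum]
      simp only [Finsupp.equivFunOnFinite_symm_apply_apply]
      exact sum_getD_eq (P m) h1
    · obtain ⟨a, ha1, ha2⟩ := tcond_pairs _ _ h3
      exact ⟨a, ha1, fun v hv => ha2 v (by simpa using hv)⟩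

set_option linter.unusedSectionVars false
set_option maxHeartbeats 1000000

/-- the parametrisation of the secant variety -/
noncomputable def secant (k n : ℕ) (F K' : Type*) [Field F] [Field K'] [Algebra F K'] :
    MvPolynomial (Fin (n + k)) F →ₐ[F] MvPolynomial (Fin k ⊕ Fin k) K' :=
  aeval (fun v : Fin (n + k) => ∑ j : Fin k,
    (X (Sum.inl j) : MvPolynomial (Fin k ⊕ Fin k) K') ^ (n + k - 1 - (v : ℕ)) * X (Sum.inr j) ^ (v : ℕ))

lemma secant_X {k n : ℕ} {F K' : Type*} [Field F] [Field K'] [Algebra F K'] (v : Fin (n + k)) :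
    secant k n F K' (X v) = ∑ j : Fin k,
    (X (Sum.inl j) : MvPolynomial (Fin k ⊕ Fin k) K') ^ (n + k - 1 - (v : ℕ)) * X (Sum.inr j) ^ (v : ℕ) := by
  simp [secant]

lemma secant_det {k n : ℕ} {F K' : Type*} [Field F] [Field K'] [Algebra F K']
    (H : Matrix (Fin (k + 1)) (Fin n) (MvPolynomial (Fin (n + k)) F))
    (hH : ∀ a b, H a b = X ⟨(a : ℕ) + (b : ℕ), by have := a.2; have := b.2; omega⟩)
    (g : Fin (k + 1) → Fin n) : secant k n F K' (H.submatrix id g).det = 0 := by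
  have h := (secant k n F K').map_det (H.submatrix id g)
  rw [h]
  let A : Matrix (Fin (k + 1)) (Fin (k + 1)) (MvPolynomial (Fin k ⊕ Fin k) K') := fun a =>
    Fin.snoc (fun j : Fin k => X (Sum.inl j) ^ (k - (a : ℕ)) * X (Sum.inr j) ^ (a : ℕ)) 0
  let B : Matrix (Fin (k + 1)) (Fin (k + 1)) (MvPolynomial (Fin k ⊕ Fin k) K') := fun j b =>
    (Fin.snoc (fun j : Fin k => X (Sum.inl j) ^ (n - 1 - (g b : ℕ)) * X (Sum.inr j) ^ (g b : ℕ)) 0 :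
      Fin (k + 1) → MvPolynomial (Fin k ⊕ Fin k) K') j
  have hAB : (secant k n F K').mapMatrix (H.submatrix id g) = A * B := by
    ext1 a b
    rw [Matrix.mul_apply, Fin.sum_univ_castSucc]
    simp only [AlgHom.mapMatrix_apply, Matrix.map_apply, Matrix.submatrix_apply, id, hH, secant_X, A, B,
      Fin.snoc_castSucc, Fin.snoc_last, mul_zero, add_zero]
    refine Finset.sum_congr rfl fun j _ => ?_
    have h1 := a.2
    have h2 := (g b).2
    have : n + k - 1 - ((a : ℕ) + (g b : ℕ)) = (k - a) + (n - 1 - (g b : ℕ)) := by omega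
    rw [this, pow_add, pow_add]
    ring
  rw [hAB, Matrix.det_mul, Matrix.det_eq_zero_of_column_eq_zero (Fin.last k), zero_mul]
  intro a
  simp [A]

set_option linter.unusedSectionVars false
set_option maxHeartbeats 1000000

/-- `L` is the leading form of `f`, of weight `c` -/
def Lead {τ K : Type*} [Field K] (w : (τ →₀ ℕ) →+ ℤ) (f : MvPolynomial τ K) (c : ℤ)
    (L : MvPolynomial τ K) : Prop :=
  (∀ s, coeff s L ≠ 0 → w s = c) ∧ (∀ s, coeff s (f - L) ≠ 0 → w s < c)

lemma coeff_mul_ne {τ K : Type*} [Field K] {f g : MvPolynomial τ K} {s : τ →₀ ℕ}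
    (h : coeff s (f * g) ≠ 0) : ∃ a b, a + b = s ∧ coeff a f ≠ 0 ∧ coeff b g ≠ 0 := by
  classical
  rw [coeff_mul] at h
  obtain ⟨⟨a, b⟩, h1, h2⟩ := Finset.exists_ne_zero_of_sum_ne_zero h
  exact ⟨a, b, Finset.HasAntidiagonal.mem_antidiagonal.1 h1, left_ne_zero_of_mul h2, right_ne_zero_of_mul h2⟩

lemma coeff_add_ne {τ K : Type*} [Field K] {f g : MvPolynomial τ K} {s : τ →₀ ℕ}
    (h : coeff s (f + g) ≠ 0) : coeff s f ≠ 0 ∨ coeff s g ≠ 0 := by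
  by_contra hc
  push Not at hc
  rw [coeff_add, hc.1, hc.2, add_zero] at h
  exact h rfl

section
variable {τ K : Type*} [Field K] {w : (τ →₀ ℕ) →+ ℤ}

lemma Lead.le {f L : MvPolynomial τ K} {c : ℤ} (h : Lead w f c L) {s} (hs : coeff s f ≠ 0) : w s ≤ c := by
  have : f = L + (f - L) := by ring
  rw [this] at hs
  rcases coeff_add_ne hs with h1 | h1
  · exact (h.1 s h1).le
  · exact (h.2 s h1).le

lemma Lead.one : Lead w (1 : MvPolynomial τ K) 0 1 := by
  classical
  constructor
  · intro s hs
    rw [coeff_one] at hs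
    split_ifs at hs with h
    · rw [← h, map_zero]
    · exact absurd rfl hs
  · intro s hs
    simp at hs

lemma Lead.mul {f g L M : MvPolynomial τ K} {c d : ℤ} (h : Lead w f c L) (h' : Lead w g d M) :
    Lead w (f * g) (c + d) (L * M) := by
  constructor
  · intro s hs
    obtain ⟨a, b, rfl, ha, hb⟩ := coeff_mul_ne hs
    rw [map_add, h.1 a ha, h'.1 b hb]
  · intro s hs
    have : f * g - L * M = (f - L) * g + L * (g - M) := by ring
    rw [this] at hs
    rcases coeff_add_ne hs with hs | hs
    · obtain ⟨a, b, rfl, ha, hb⟩ := coeff_mul_ne hs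
      rw [map_add]
      have := h.2 a ha
      have := h'.le hb
      omega
    · obtain ⟨a, b, rfl, ha, hb⟩ := coeff_mul_ne hs
      rw [map_add]
      have := h.1 a ha
      have := h'.2 b hb
      omega

lemma Lead.pow {f L : MvPolynomial τ K} {c : ℤ} (h : Lead w f c L) (e : ℕ) :
    Lead w (f ^ e) (e * c) (L ^ e) := by
  induction e with
  | zero => simpa using Lead.one
  | succ e ih =>
    rw [pow_succ, pow_succ]
    have := ih.mul h
    convert this using 1
    push_cast; ring

lemma Lead.prod {ι : Type*} (s : Finset ι) {f L : ι → MvPolynomial τ K} {c : ι → ℤ}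
    (h : ∀ i ∈ s, Lead w (f i) (c i) (L i)) : Lead w (∏ i ∈ s, f i) (∑ i ∈ s, c i) (∏ i ∈ s, L i) := by
  classical
  induction s using Finset.induction_on with
  | empty => simpa using Lead.one
  | insert i s hi ih =>
    rw [Finset.prod_insert hi, Finset.prod_insert hi, Finset.sum_insert hi]
    exact (h i (Finset.mem_insert_self i s)).mul (ih fun j hj => h j (Finset.mem_insert_of_mem hj))

lemma Lead.coeff_eq {f L : MvPolynomial τ K} {c : ℤ} (h : Lead w f c L) {s} (hs : w s = c) :
    coeff s f = coeff s L := by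
  by_contra hne
  have := h.2 s (by rw [coeff_sub]; exact sub_ne_zero.2 hne)
  omega

lemma Lead.coeff_zero {f L : MvPolynomial τ K} {c : ℤ} (h : Lead w f c L) {s} (hs : c < w s) :
    coeff s f = 0 := by
  by_contra hne
  have := h.le hne
  omega
end

/-- exponent of `Y_j^(N-v) Z_j^v` -/
noncomputable def expo (k N : ℕ) (v : ℕ) (j : Fin k) : (Fin k ⊕ Fin k) →₀ ℕ :=
  Finsupp.single (Sum.inl j) (N - v) + Finsupp.single (Sum.inr j) v

lemma secant_X' {k n : ℕ} {F K' : Type*} [Field F] [Field K'] [Algebra F K'] (v : Fin (n + k)) :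
    secant k n F K' (X v) = ∑ j : Fin k, monomial (expo k (n + k - 1) v j) 1 := by
  rw [secant_X]
  refine Finset.sum_congr rfl fun j _ => ?_
  rw [X_pow_eq_monomial, X_pow_eq_monomial, monomial_mul, one_mul, expo]

/-- the additive functional on exponents with given values on the variables -/
noncomputable def functl {τ : Type*} (c : τ → ℤ) : (τ →₀ ℕ) →+ ℤ :=
  Finsupp.liftAddHom (fun t => (AddMonoidHom.mulLeft (c t)).comp (Nat.castAddMonoidHom ℤ))

lemma functl_single {τ : Type*} (c : τ → ℤ) (t : τ) (e : ℕ) :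
    functl c (Finsupp.single t e) = c t * e := by
  simp [functl]

theorem T_indep {k n : ℕ} (hk : 1 ≤ k) (hn : 1 ≤ n) (F K' : Type*) [Field F] [Field K'] [Algebra F K'] :
    LinearIndependent F (fun m : {m : Fin (n + k) →₀ ℕ // Tmon k m} =>
      secant k n F K' (monomial m.1 1)) := by
  classical
  rw [linearIndependent_iff']
  intro S g hg
  by_contra hcon
  push Not at hcon
  obtain ⟨m1, hm1, hgm1⟩ := hcon
  obtain ⟨m0, hm0, hmax⟩ := Finset.exists_max_image (S.filter fun m => g m ≠ 0) (fun m => wtW m.1)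
    ⟨m1, by simp [hm1, hgm1]⟩
  rw [Finset.mem_filter] at hm0
  obtain ⟨a, ha, hcov⟩ := m0.2
  obtain ⟨N, hN⟩ : ∃ N, N = n + k - 1 := ⟨_, rfl⟩
  have hN1 : 1 ≤ N := by omega
  have hvN : ∀ v : Fin (n + k), (v : ℕ) ≤ N := fun v => by omega
  let cv : Fin (n + k) → Fin k → Prop := fun v j => (v : ℕ) = a j ∨ (v : ℕ) = a j + 1
  have huniq : ∀ v i j, cv v i → cv v j → i = j := by
    intro v i j hi hj
    rcases lt_trichotomy i j with h | h | h
    · have := ha i j h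
      simp only [cv] at hi hj; omega
    · exact h
    · have := ha j i h
      simp only [cv] at hi hj; omega
  have hjf : ∀ v, ∃ j, (∃ j, cv v j) → cv v j := by
    intro v
    by_cases h : ∃ j, cv v j
    · obtain ⟨j, hj⟩ := h
      exact ⟨j, fun _ => hj⟩
    · exact ⟨⟨0, hk⟩, fun h' => absurd h' h⟩
  choose jf hjf using hjf
  let w := functl (Sum.elim (fun j : Fin k => -((a j : ℤ) * (a j + 1)))
    (fun j : Fin k => (N : ℤ) * (2 * a j + 1) - a j * (a j + 1)))
  have hw : ∀ (v : Fin (n + k)) j, w (expo k N v j) = N * ((v : ℤ) ^ 2 - (v - a j) * (v - a j - 1)) := by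
    intro v j
    simp only [w, expo, map_add, functl_single, Sum.elim_inl, Sum.elim_inr]
    rw [Nat.cast_sub (hvN v)]
    ring
  let ℓ : Fin (n + k) → MvPolynomial (Fin k ⊕ Fin k) K' := fun v =>
    ∑ j ∈ Finset.univ.filter (cv v), monomial (expo k N v j) 1
  have hlead1 : ∀ v, Lead w (secant k n F K' (X v)) (N * (v : ℤ) ^ 2) (ℓ v) := by
    intro v
    have hsum : ∀ (A : Finset (Fin k)) s,
        coeff s (∑ j ∈ A, monomial (expo k N v j) (1 : K')) ≠ 0 → ∃ j ∈ A, expo k N v j = s := by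
      intro A s hs
      rw [coeff_sum] at hs
      obtain ⟨j, hj, h⟩ := Finset.exists_ne_zero_of_sum_ne_zero hs
      refine ⟨j, hj, ?_⟩
      by_contra hne
      rw [coeff_monomial, if_neg hne] at h
      exact h rfl
    constructor
    · intro s hs
      obtain ⟨j, hj, rfl⟩ := hsum _ s hs
      rw [hw]
      rw [Finset.mem_filter] at hj
      rcases hj.2 with h | h
      · rw [h]; ring
      · rw [h]; push_cast; ring
    · intro s hs
      have : secant k n F K' (X v) - ℓ v = ∑ j ∈ Finset.univ.filter (fun j => ¬ cv v j),
          monomial (expo k N v j) 1 := by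
        rw [secant_X', ← hN, sub_eq_iff_eq_add']
        exact (Finset.sum_filter_add_sum_filter_not _ _ _).symm
      rw [this] at hs
      obtain ⟨j, hj, rfl⟩ := hsum _ s hs
      rw [hw]
      rw [Finset.mem_filter] at hj
      have h1 : (0 : ℤ) < ((v : ℤ) - a j) * (v - a j - 1) := by
        have := hj.2
        simp only [cv, not_or] at this
        rcases lt_or_gt_of_ne this.1 with h | h
        · apply mul_pos_of_neg_of_neg <;> omega
        · have h2 := this.2
          apply mul_pos <;> omega
      have : (0 : ℤ) < N := by exact_mod_cast hN1
      nlinarith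
  have hlead : ∀ m : Fin (n + k) →₀ ℕ, Lead w (secant k n F K' (monomial m 1)) (N * wtW m : ℤ)
      (∏ v, ℓ v ^ m v) := by
    intro m
    have h1 : secant k n F K' (monomial m 1) = ∏ v, (secant k n F K' (X v)) ^ m v := by
      rw [monomial_eq, C_1, one_mul, Finsupp.prod_fintype _ _ (by simp), map_prod]
      simp
    have h2 : (N * wtW m : ℤ) = ∑ v : Fin (n + k), (m v : ℤ) * (N * (v : ℤ) ^ 2) := by
      rw [wtW]; push_cast; rw [Finset.mul_sum]
      exact Finset.sum_congr rfl fun v _ => by ring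
    rw [h1, h2]
    exact Lead.prod _ fun v _ => (hlead1 v).pow (m v)
  have hℓ1 : ∀ v, (∃ j, cv v j) → ℓ v = monomial (expo k N v (jf v)) 1 := by
    intro v hv
    have : Finset.univ.filter (cv v) = {jf v} := by
      ext j
      simp only [Finset.mem_filter, Finset.mem_univ, true_and, Finset.mem_singleton]
      exact ⟨fun h => huniq v _ _ h (hjf v hv), fun h => h ▸ hjf v hv⟩
    simp only [ℓ, this, Finset.sum_singleton]
  have hℓ0 : ∀ v, (¬ ∃ j, cv v j) → ℓ v = 0 := by
    intro v hv
    apply Finset.sum_eq_zero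
    intro j hj
    rw [Finset.mem_filter] at hj
    exact absurd ⟨j, hj.2⟩ hv
  let e : (Fin (n + k) →₀ ℕ) → (Fin k ⊕ Fin k →₀ ℕ) := fun m => ∑ v, m v • expo k N v (jf v)
  have hprod1 : ∀ m : Fin (n + k) →₀ ℕ, (∀ v, m v ≠ 0 → ∃ j, cv v j) →
      ∏ v, ℓ v ^ m v = monomial (e m) 1 := by
    intro m hm
    rw [monomial_sum_one]
    refine Finset.prod_congr rfl fun v _ => ?_
    by_cases h : m v = 0
    · rw [h]; simp
    · rw [hℓ1 v (hm v h), monomial_pow, one_pow]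
  have hprod0 : ∀ m : Fin (n + k) →₀ ℕ, (¬ ∀ v, m v ≠ 0 → ∃ j, cv v j) → ∏ v, ℓ v ^ m v = 0 := by
    intro m hm
    push Not at hm
    obtain ⟨v, hv, h⟩ := hm
    apply Finset.prod_eq_zero (Finset.mem_univ v)
    rw [hℓ0 v (by push Not; exact h), zero_pow hv]
  have hΛ : ∀ v, (∃ j, cv v j) → ∃ Λ : (Fin k ⊕ Fin k →₀ ℕ) →+ ℤ, ∀ u, (∃ j, cv u j) →
      Λ (expo k N u (jf u)) = if u = v then (N : ℤ) else 0 := by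
    intro v hv
    have hjv := hjf v hv
    set j := jf v with hj
    have key : ∀ (α β : ℤ) (u : Fin (n + k)), functl (Sum.elim (fun i => if i = j then α else 0) (fun i => if i = j then β else 0))
        (expo k N u (jf u)) = if jf u = j then α * (N - u) + β * u else 0 := by
      intro α β u
      simp only [expo, map_add, functl_single, Sum.elim_inl, Sum.elim_inr]
      rw [Nat.cast_sub (hvN u)]
      split_ifs <;> ring
    rcases hjv with h | h
    · refine ⟨functl (Sum.elim (fun i => if i = j then (a j + 1 : ℤ) else 0)
        (fun i => if i = j then (a j + 1 - N : ℤ) else 0)), fun u hu => ?_⟩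
      rw [key]
      have hju := hjf u hu
      by_cases hc : jf u = j
      · rw [if_pos hc]
        rw [hc] at hju
        rcases hju with h' | h'
        · rw [if_pos (Fin.ext (by omega)), h']; ring
        · rw [if_neg (fun h'' => by rw [h''] at h'; omega), h']; push_cast; ring
      · rw [if_neg hc, if_neg]
        rintro rfl
        exact hc hj.symm
    · refine ⟨functl (Sum.elim (fun i => if i = j then (- a j : ℤ) else 0)
        (fun i => if i = j then (N - a j : ℤ) else 0)), fun u hu => ?_⟩
      rw [key]
      have hju := hjf u hu
      by_cases hc : jf u = j
      · rw [if_pos hc]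
        rw [hc] at hju
        rcases hju with h' | h'
        · rw [if_neg (fun h'' => by rw [h''] at h'; omega), h']; ring
        · rw [if_pos (Fin.ext (by omega)), h']; push_cast; ring
      · rw [if_neg hc, if_neg]
        rintro rfl
        exact hc hj.symm
  have heinj : ∀ m m' : Fin (n + k) →₀ ℕ, (∀ v, m v ≠ 0 → ∃ j, cv v j) → (∀ v, m' v ≠ 0 → ∃ j, cv v j) →
      e m = e m' → m = m' := by
    intro m m' hm hm' h
    ext v
    by_cases hv : ∃ j, cv v j
    · obtain ⟨Λ, hΛv⟩ := hΛ v hv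
      have h1 : ∀ m : Fin (n + k) →₀ ℕ, (∀ v, m v ≠ 0 → ∃ j, cv v j) → Λ (e m) = m v * N := by
        intro m hm
        simp only [e, map_sum, map_nsmul]
        rw [Finset.sum_eq_single v]
        · rw [hΛv v hv, if_pos rfl]; simp
        · intro u _ hu
          by_cases hmu : m u = 0
          · rw [hmu]; simp
          · rw [hΛv u (hm u hmu), if_neg hu]; simp
        · intro h; exact absurd (Finset.mem_univ v) h
      have h2 := h1 m hm
      rw [h, h1 m' hm'] at h2
      have hN0 : (N : ℤ) ≠ 0 := by omega
      exact_mod_cast (mul_right_cancel₀ hN0 h2).symm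
    · have h1 : m v = 0 := by by_contra hc; exact hv (hm v hc)
      have h2 : m' v = 0 := by by_contra hc; exact hv (hm' v hc)
      rw [h1, h2]
  have hs0 : w (e m0.1) = (N * wtW m0.1 : ℤ) := by
    apply (hlead m0.1).1
    rw [hprod1 m0.1 hcov, coeff_monomial, if_pos rfl]
    exact one_ne_zero
  have hfin := congrArg (coeff (e m0.1)) hg
  rw [coeff_sum, coeff_zero, Finset.sum_eq_single m0] at hfin
  · rw [coeff_smul, (hlead m0.1).coeff_eq hs0, hprod1 m0.1 hcov, coeff_monomial, if_pos rfl] at hfin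
    rcases smul_eq_zero.1 hfin with h | h
    · exact hm0.2 h
    · exact one_ne_zero h
  · intro m hm hne
    rw [coeff_smul]
    by_cases hgm : g m = 0
    · rw [hgm, zero_smul]
    have hle := hmax m (by simp [hm, hgm])
    rcases hle.lt_or_eq with hlt | heq
    · rw [(hlead m.1).coeff_zero, smul_zero]
      rw [hs0]
      have : (0 : ℤ) < N := by exact_mod_cast hN1
      have : (wtW m.1 : ℤ) < wtW m0.1 := by exact_mod_cast hlt
      nlinarith
    · rw [(hlead m.1).coeff_eq (by rw [hs0, heq])]
      by_cases hmc : ∀ v, m.1 v ≠ 0 → ∃ j, cv v j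
      · rw [hprod1 m.1 hmc, coeff_monomial, if_neg, smul_zero]
        intro h
        exact hne (Subtype.ext (heinj _ _ hmc hcov h))
      · rw [hprod0 m.1 hmc]; simp
  · intro h; exact absurd hm0.1 h

set_option linter.unusedSectionVars false
set_option maxHeartbeats 1000000

theorem U_indep {k n : ℕ} (hk : 1 ≤ k) (hkn : k + 1 ≤ n) (F K' : Type*) [Field F] [Field K'] [Algebra F K']
    (J : Finset (Fin (n + k))) (hJ : ∀ v, v ∈ J ↔ (v : ℕ) < k ∨ n ≤ (v : ℕ)) :
    LinearIndependent F (fun m : {m : Fin (n + k) →₀ ℕ // ∑ v ∈ Jᶜ, m v ≤ k} =>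
      secant k n F K' (monomial m.1 1)) := by
  classical
  let v : (Fin (n + k) →₀ ℕ) → MvPolynomial (Fin k ⊕ Fin k) K' := fun m => secant k n F K' (monomial m 1)
  have hspan : ∀ m, v m ∈ Submodule.span F
      {r | ∃ m' : Fin (n + k) →₀ ℕ, ∑ v ∈ Jᶜ, m' v ≤ k ∧ m'.degree = m.degree ∧ r = v m'} := by
    intro m
    let H : Matrix (Fin (k + 1)) (Fin n) (MvPolynomial (Fin (n + k)) F) := fun a b =>
      X ⟨(a : ℕ) + (b : ℕ), by have := a.2; have := b.2; omega⟩
    let I : Ideal (MvPolynomial (Fin (n + k)) F) := RingHom.ker (secant k n F K')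
    have h := hankel_span k n hkn H (fun a b => rfl) I (fun g => secant_det H (fun a b => rfl) g) J hJ m
    let φ := (Ideal.Quotient.liftₐ I (secant k n F K') (fun x hx => hx)).toLinearMap
    have h2 := Submodule.mem_map_of_mem (f := φ) h
    rw [Submodule.map_span] at h2
    refine Submodule.span_mono ?_ h2
    rintro _ ⟨_, ⟨m', h1, h3, rfl⟩, rfl⟩
    exact ⟨m', h1, h3, rfl⟩
  have hD : ∀ D : ℕ, LinearIndependent F
      (fun m : {m : Fin (n + k) →₀ ℕ // ∑ v ∈ Jᶜ, m v ≤ k ∧ m.degree ≤ D} => v m.1) := by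
    intro D
    have hfin : {m : Fin (n + k) →₀ ℕ | m.degree ≤ D}.Finite := Finsupp.finite_of_degree_le D
    haveI : Finite {m : Fin (n + k) →₀ ℕ // ∑ v ∈ Jᶜ, m v ≤ k ∧ m.degree ≤ D} :=
      (hfin.subset (fun m hm => hm.2) : {m : Fin (n + k) →₀ ℕ | ∑ v ∈ Jᶜ, m v ≤ k ∧ m.degree ≤ D}.Finite)
    haveI : Finite {m : Fin (n + k) →₀ ℕ // Tmon k m ∧ m.degree ≤ D} :=
      (hfin.subset (fun m hm => hm.2) : {m : Fin (n + k) →₀ ℕ | Tmon k m ∧ m.degree ≤ D}.Finite)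
    letI := Fintype.ofFinite {m : Fin (n + k) →₀ ℕ // ∑ v ∈ Jᶜ, m v ≤ k ∧ m.degree ≤ D}
    letI := Fintype.ofFinite {m : Fin (n + k) →₀ ℕ // Tmon k m ∧ m.degree ≤ D}
    rw [linearIndependent_iff_card_le_finrank_span]
    obtain ⟨Ψ, hinj, hΨ⟩ := exists_inj k n hkn J hJ
    have h1 : Fintype.card {m : Fin (n + k) →₀ ℕ // ∑ v ∈ Jᶜ, m v ≤ k ∧ m.degree ≤ D} ≤
        Fintype.card {m : Fin (n + k) →₀ ℕ // Tmon k m ∧ m.degree ≤ D} := by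
      apply Fintype.card_le_of_injective
        (fun m => ⟨Ψ m.1, (hΨ m.1 m.2.1).2, by rw [(hΨ m.1 m.2.1).1]; exact m.2.2⟩)
      intro m m' h
      exact Subtype.ext (hinj m.2.1 m'.2.1 (congrArg Subtype.val h))
    refine h1.trans ?_
    let W := Submodule.span F (Set.range
      (fun m : {m : Fin (n + k) →₀ ℕ // ∑ v ∈ Jᶜ, m v ≤ k ∧ m.degree ≤ D} => v m.1))
    haveI : FiniteDimensional F W := FiniteDimensional.span_of_finite F (Set.finite_range _)
    have hW : ∀ m : {m : Fin (n + k) →₀ ℕ // Tmon k m ∧ m.degree ≤ D}, v m.1 ∈ W := by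
      intro m
      refine Submodule.span_mono ?_ (hspan m.1)
      rintro _ ⟨m', h2, h3, rfl⟩
      exact ⟨⟨m', h2, h3 ▸ m.2.2⟩, rfl⟩
    have hT : LinearIndependent F
        (fun m : {m : Fin (n + k) →₀ ℕ // Tmon k m ∧ m.degree ≤ D} => (⟨v m.1, hW m⟩ : W)) := by
      apply LinearIndependent.of_comp W.subtype
      exact (T_indep hk (by omega) F K').comp
        (fun m : {m : Fin (n + k) →₀ ℕ // Tmon k m ∧ m.degree ≤ D} => ⟨m.1, m.2.1⟩)
        (fun m m' h => Subtype.ext (Subtype.mk.inj h))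
    exact hT.fintype_card_le_finrank
  rw [linearIndependent_iff_finset_linearIndependent]
  intro S
  refine (hD (S.sup fun m => m.1.degree)).comp
    (fun m : S => ⟨m.1.1, m.1.2, Finset.le_sup (f := fun m : {m : Fin (n + k) →₀ ℕ // ∑ v ∈ Jᶜ, m v ≤ k} => m.1.degree) m.2⟩) ?_
  intro m m' h
  exact Subtype.ext (Subtype.ext (Subtype.mk.inj h))

set_option linter.unusedSectionVars false
set_option maxHeartbeats 1000000

lemma expo_add (k N v : ℕ) (hv : v ≤ N) (i j : Fin k) :
    expo k N v i (Sum.inl j) + expo k N v i (Sum.inr j) = if i = j then N else 0 := by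
  classical
  simp only [expo, Finsupp.add_apply, Finsupp.single_apply, Sum.inl.injEq, Sum.inr.injEq, reduceCtorEq, if_false]
  split_ifs <;> omega

lemma sum_expo_inr {k N : ℕ} (l : Fin k → ℕ) (j : Fin k) : (∑ i, expo k N (l i) i) (Sum.inr j) = l j := by
  classical
  simp [expo, Finsupp.finsetSum_apply, Finsupp.single_apply]

lemma sum_expo_inl {k N : ℕ} (l : Fin k → ℕ) (j : Fin k) : (∑ i, expo k N (l i) i) (Sum.inl j) = N - l j := by
  classical
  rw [Finsupp.finsetSum_apply, Finset.sum_eq_single j]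
  · simp [expo]
  · intro i _ hi
    simp [expo, Finsupp.single_apply, hi]
  · intro h; exact absurd (Finset.mem_univ j) h

lemma expo_le_sum {k N : ℕ} (l : Fin k → ℕ) (hl : ∀ i, l i ≤ N) (v : ℕ) (hv : v ≤ N) (j : Fin k)
    (h : expo k N v j ≤ ∑ i, expo k N (l i) i) : v = l j := by
  have h1 := h (Sum.inl j)
  have h2 := h (Sum.inr j)
  rw [sum_expo_inl] at h1
  rw [sum_expo_inr] at h2
  simp [expo] at h1 h2
  have := hl j
  omega

lemma matching {k N : ℕ} (hN : 1 ≤ N) (l0 l : Fin k → ℕ) (hl0 : ∀ i, l0 i ≤ N) (hl : ∀ i, l i ≤ N)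
    (f : Fin k → Fin k) :
    (∑ r, expo k N (l r) (f r) = ∑ i, expo k N (l0 i) i) ↔ (Function.Bijective f ∧ l = l0 ∘ f) := by
  classical
  constructor
  · intro h
    have hlf : ∀ r, l r = l0 (f r) := by
      intro r
      apply expo_le_sum l0 hl0 _ (hl r)
      rw [← h]
      exact Finset.single_le_sum (f := fun r => expo k N (l r) (f r)) (fun _ _ => zero_le) (Finset.mem_univ r)
    refine ⟨?_, funext hlf⟩
    apply Function.Surjective.bijective_of_finite
    intro j
    by_contra hc
    push Not at hc
    have h1 := DFunLike.congr_fun h (Sum.inl j)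
    have h2 := DFunLike.congr_fun h (Sum.inr j)
    rw [sum_expo_inl, Finsupp.finsetSum_apply] at h1
    rw [sum_expo_inr, Finsupp.finsetSum_apply] at h2
    have h3 : ∑ r, (expo k N (l r) (f r) (Sum.inl j) + expo k N (l r) (f r) (Sum.inr j)) = 0 := by
      apply Finset.sum_eq_zero
      intro r _
      rw [expo_add _ _ _ (hl r), if_neg (hc r)]
    rw [Finset.sum_add_distrib, h1, h2] at h3
    have := hl0 j
    omega
  · rintro ⟨hf, rfl⟩
    exact hf.sum_comp (fun i => expo k N (l0 i) i)

lemma coeff_secant_prod {k n : ℕ} (hn : 1 ≤ n) {F K' : Type*} [Field F] [Field K'] [Algebra F K'] (hk : 1 ≤ k)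
    (l0 l : Fin k → Fin (n + k)) : 
    coeff (∑ i, expo k (n + k - 1) (l0 i) i) (secant k n F K' (∏ r, X (l r))) =
      (Nat.card {f : Fin k → Fin k // Function.Bijective f ∧ l = l0 ∘ f} : K') := by
  classical
  rw [map_prod]
  simp only [secant_X']
  rw [Finset.prod_univ_sum]
  rw [coeff_sum, Nat.card_eq_fintype_card, Fintype.card_subtype, Finset.card_filter]
  push_cast
  rw [Fintype.piFinset_univ]
  refine Finset.sum_congr rfl fun f _ => ?_
  rw [← monomial_sum_one, coeff_monomial]
  have := matching (k := k) (N := n + k - 1) (by omega) (fun i => (l0 i : ℕ)) (fun i => (l i : ℕ))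
    (fun i => by omega) (fun i => by omega) f
  have h2 : (l = l0 ∘ f) ↔ ((fun i => (l i : ℕ)) = (fun i => (l0 i : ℕ)) ∘ f) := by
    constructor
    · rintro rfl; rfl
    · intro h; funext i; exact Fin.ext (congrFun h i)
  exact if_congr (this.trans (and_congr_right fun _ => h2.symm)) rfl rfl

lemma card_stab_dvd {k : ℕ} {V : Type*} (l : Fin k → V) :
    Nat.card {f : Fin k → Fin k // Function.Bijective f ∧ l = l ∘ f} ∣ k.factorial := by
  let G : Subgroup (Equiv.Perm (Fin k)) :=
    { carrier := {σ | l = l ∘ σ}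
      mul_mem' := by
        intro a b ha hb
        simp only [Set.mem_setOf_eq] at ha hb ⊢
        rw [Equiv.Perm.coe_mul, ← Function.comp_assoc, ← ha, ← hb]
      one_mem' := by simp
      inv_mem' := by
        intro a ha
        simp only [Set.mem_setOf_eq] at ha ⊢
        conv_rhs => rw [ha]
        funext x
        simp }
  have h := G.card_subgroup_dvd_card
  rw [Nat.card_perm, Nat.card_fin] at h
  convert h using 1
  refine Nat.card_congr ⟨fun f => ⟨Equiv.ofBijective f.1 f.2.1, f.2.2⟩,
    fun σ => ⟨σ.1, σ.1.bijective, σ.2⟩, fun f => rfl, fun σ => ?_⟩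
  apply Subtype.ext
  ext x
  rfl

theorem E2_hyp {k n : ℕ} (hk : 1 ≤ k) (hkn : k + 1 ≤ n) (F K' : Type*) [Field F] [Field K'] [Algebra F K']
    (p : ℕ) (hp : p.Prime) [CharP K' p] (hkp : k + 1 ≤ p)
    (J : Finset (Fin (n + k)))
    (β : MvPolynomial (Fin (n + k)) F)
    (hβ : ∀ m, coeff m β ≠ 0 → (∀ v ∈ J, m v = 0) ∧ ∑ v ∈ Jᶜ, m v = k)
    (hmem : secant k n F K' β ∈ Ideal.span (Set.range fun v : J => secant k n F K' (X (v : Fin (n + k))))) :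
    β = 0 := by
  classical
  have hsort : ∀ m, coeff m β ≠ 0 → ∃ c : Fin k → Fin (n + k), (∀ r, c r ∈ Jᶜ) ∧
      m = ∑ r, Finsupp.single (c r) 1 := by
    intro m hm
    obtain ⟨h1, h2⟩ := hβ m hm
    obtain ⟨c, -, hc, hle⟩ := exists_sorted Jᶜ m k h2.ge
    refine ⟨c, hc, ?_⟩
    obtain ⟨m1, hm1⟩ := le_iff_exists_add.1 hle
    have hd : m.degree = k := by
      rw [Finsupp.degree_eq_sum, ← Finset.sum_add_sum_compl J, h2, Finset.sum_eq_zero h1, zero_add]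
    have hd2 := congrArg Finsupp.degree hm1
    rw [map_add, degree_sum_single, hd] at hd2
    have : m1.degree = 0 := by omega
    rw [Finsupp.degree_eq_zero_iff] at this
    rw [hm1, this, add_zero]
  ext b0
  rw [coeff_zero]
  by_contra hb0
  obtain ⟨l0, hl0, rfl⟩ := hsort b0 hb0
  have hz : coeff (∑ i, expo k (n + k - 1) (l0 i) i) (secant k n F K' β) = 0 := by
    obtain ⟨c, hc⟩ := Ideal.mem_span_range_iff_exists_fun.1 hmem
    rw [← hc, coeff_sum]
    apply Finset.sum_eq_zero
    intro v _
    by_contra hne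
    obtain ⟨a, b, hab, -, hb⟩ := coeff_mul_ne hne
    rw [secant_X', coeff_sum] at hb
    obtain ⟨j, -, hj⟩ := Finset.exists_ne_zero_of_sum_ne_zero hb
    rw [coeff_monomial] at hj
    split_ifs at hj with hjb
    · have := expo_le_sum (fun i => (l0 i : ℕ)) (fun i => by have := (l0 i).2; show _ ≤ n + k - 1; omega) v.1
        (by have := v.1.2; omega) j (by rw [hjb, ← hab]; exact le_add_self)
      have h2 := hl0 j
      rw [← Fin.ext this, Finset.mem_compl] at h2
      exact h2 v.2
    · exact hj rfl
  have hexp : secant k n F K' β = ∑ m ∈ β.support, coeff m β • secant k n F K' (monomial m 1) := by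
    conv_lhs => rw [β.as_sum, map_sum]
    refine Finset.sum_congr rfl fun m _ => ?_
    rw [← map_smul, smul_monomial, smul_eq_mul, mul_one]
  rw [hexp, coeff_sum, Finset.sum_eq_single (∑ r, Finsupp.single (l0 r) 1)] at hz
  · rw [coeff_smul, ← prod_X_eq, coeff_secant_prod (by omega) hk] at hz
    rcases smul_eq_zero.1 hz with h | h
    · exact hb0 h
    · rw [CharP.cast_eq_zero_iff K' p] at h
      have := (hp.dvd_factorial).1 (h.trans (card_stab_dvd l0))
      omega
  · intro m hm hne
    obtain ⟨l, -, rfl⟩ := hsort m (mem_support_iff.1 hm)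
    rw [coeff_smul, ← prod_X_eq, coeff_secant_prod (by omega) hk]
    have : IsEmpty {f : Fin k → Fin k // Function.Bijective f ∧ l = l0 ∘ f} := by
      constructor
      rintro ⟨f, hf, rfl⟩
      exact hne (hf.sum_comp (fun r => Finsupp.single (l0 r) 1))
    rw [Nat.card_of_isEmpty]
    simp
  · intro h
    exact absurd (mem_support_iff.2 hb0) h

theorem hankel_aux (F : Type*) [Field F] (p k n : ℕ) [CharP F p]
    (hp : p.Prime) (hpt : k + 1 ≤ p) (hk : 1 ≤ k) (hkn : k + 1 ≤ n)
    (H : Matrix (Fin (k + 1)) (Fin n) (MvPolynomial (Fin (n + k)) F))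
    (hH : ∀ a b, H a b = X ⟨(a : ℕ) + (b : ℕ), by have := a.2; have := b.2; omega⟩)
    (I : Ideal (MvPolynomial (Fin (n + k)) F))
    (hI : I = Ideal.span (Set.range fun g : Fin (k + 1) → Fin n => (H.submatrix id g).det))
    (f : Fin (2 * k) → (MvPolynomial (Fin (n + k)) F ⧸ I))
    (hart : IsArtinianRing ((MvPolynomial (Fin (n + k)) F ⧸ I) ⧸ Ideal.span (Set.range f)))
    (x c : MvPolynomial (Fin (n + k)) F ⧸ I) (hc : c ≠ 0)
    (hx : ∀ e : ℕ, c * x ^ (p ^ e) ∈ frobeniusPower (p ^ e) (Ideal.span (Set.range f))) :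
    x ∈ Ideal.span (Set.range f) := by
  classical
  haveI : Fact p.Prime := ⟨hp⟩
  haveI : CharP (AlgebraicClosure F) p := charP_of_injective_algebraMap (algebraMap F (AlgebraicClosure F)).injective p
  haveI : PerfectRing (AlgebraicClosure F) p := PerfectField.toPerfectRing p
  let J : Finset (Fin (n + k)) := Finset.univ.filter fun v => (v : ℕ) < k ∨ n ≤ (v : ℕ)
  have hJ : ∀ v, v ∈ J ↔ (v : ℕ) < k ∨ n ≤ (v : ℕ) := fun v => by simp [J]
  have hdet : ∀ g : Fin (k + 1) → Fin n, (H.submatrix id g).det ∈ I := fun g => by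
    rw [hI]; exact Ideal.subset_span ⟨g, rfl⟩
  have hker : ∀ f ∈ I, secant k n F (AlgebraicClosure F) f = 0 := by
    have : I ≤ RingHom.ker (secant k n F (AlgebraicClosure F)) := by
      rw [hI, Ideal.span_le]
      rintro _ ⟨g, rfl⟩
      exact secant_det H hH g
    exact fun f hf => this hf
  obtain ⟨nu, hnf, hφ⟩ := exists_nf I J k (hankel_span k n hkn H hH I hdet J hJ)
    (secant k n F (AlgebraicClosure F)) hker (U_indep hk hkn F (AlgebraicClosure F) J hJ)
  refine abstract_main hnf ⟨⟨k, by omega⟩, ?_⟩ p (secant k n F (AlgebraicClosure F)).toRingHom hφ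
    (fun β hβ hmem => E2_hyp hk hkn F (AlgebraicClosure F) p hp hpt J β hβ hmem)
    (2 * k) (endV k n hkn) (endV_inj k n hkn) ?_ f hart x c hc hx
  · rw [Finset.mem_compl, hJ]; simp; omega
  · intro v
    rw [hJ]
    exact ⟨endV_surj k n hkn v, by rintro ⟨i, rfl⟩; exact endV_val k n hkn i⟩

/-- Over a field of characteristic `p ≥ t`, the Hankel determinantal ring
`R = F[x_1,...,x_{n+t-1}]/I_t(H)` is `F`-rational: every ideal generated by a system of
parameters (a family of `2t-2 = dim R` elements whose quotient is Artinian) is tightly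
closed. -/
theorem hankel_F_rational (F : Type*) [Field F] (p t n : ℕ) [CharP F p]
    (hp : p.Prime) (hpt : t ≤ p) (ht : 2 ≤ t) (htn : t ≤ n)
    (H : Matrix (Fin t) (Fin n) (MvPolynomial (Fin (n + t - 1)) F))
    (hH : ∀ a b, H a b = X ⟨(a : ℕ) + (b : ℕ), by have := a.2; have := b.2; omega⟩)
    (I : Ideal (MvPolynomial (Fin (n + t - 1)) F))
    (hI : I = Ideal.span (Set.range fun g : Fin t → Fin n => (H.submatrix id g).det)) :
    ∀ f : Fin (2 * t - 2) → (MvPolynomial (Fin (n + t - 1)) F ⧸ I),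
      IsArtinianRing ((MvPolynomial (Fin (n + t - 1)) F ⧸ I) ⧸ Ideal.span (Set.range f)) →
      ∀ x : MvPolynomial (Fin (n + t - 1)) F ⧸ I,
        (∃ c : MvPolynomial (Fin (n + t - 1)) F ⧸ I, c ≠ 0 ∧
          ∀ e : ℕ, c * x ^ (p ^ e) ∈ frobeniusPower (p ^ e) (Ideal.span (Set.range f))) →
        x ∈ Ideal.span (Set.range f) := by
  intro f hart x hx
  obtain ⟨c, hc, hx⟩ := hx
  obtain ⟨k, rfl⟩ : ∃ k, t = k + 1 := ⟨t - 1, by omega⟩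
  exact hankel_aux F p k n hp hpt (by omega) htn H hH I hI f hart x c hc hx
end

section
/- Let A = F[x_1,...,x_{s+r-1}] be a polynomial ring over a field, H the r×s Hankel matrix in the x_i, I = I_t(H) with 1 ≤ t ≤ min{r,s}, and let d ≥ 1. If δ_1,...,δ_m are minors (of various sizes) of H with m ≤ d and Σ_i deg(δ_i) ≥ t·d, then δ_1···δ_m ∈ I^d. -/
set_option synthInstance.maxHeartbeats 1000000
set_option maxHeartbeats 1000000

open MvPolynomial Matrix


namespace HankelAux

variable {R : Type*} [CommRing R] (x : ℕ → R)

/-- Hankel minor with rows `a` and columns `b`. -/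
def D {k : ℕ} (a b : Fin k → ℕ) : R := (Matrix.of fun i j => x (a i + b j)).det

/-- Ideal of `k`-minors of the `p × q` Hankel matrix. -/
def K (k p q : ℕ) : Ideal R :=
  Ideal.span {y | ∃ a b : Fin k → ℕ, (∀ i, a i < p) ∧ (∀ i, b i < q) ∧ y = D x a b}

lemma D_mem {k p q : ℕ} {a b : Fin k → ℕ} (ha : ∀ i, a i < p) (hb : ∀ i, b i < q) :
    D x a b ∈ K x k p q := Ideal.subset_span ⟨a, b, ha, hb, rfl⟩

lemma D_comm {k : ℕ} (a b : Fin k → ℕ) : D x a b = D x b a := by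
  unfold D
  rw [← Matrix.det_transpose]
  congr 1
  ext i j
  simp [add_comm]

lemma K_comm (k p q : ℕ) : K x k p q = K x k q p := by
  unfold K
  congr 1
  ext y
  constructor
  · rintro ⟨a, b, ha, hb, rfl⟩
    exact ⟨b, a, hb, ha, D_comm x a b⟩
  · rintro ⟨a, b, ha, hb, rfl⟩
    exact ⟨b, a, hb, ha, D_comm x a b⟩

lemma D_zero_left {k : ℕ} {a b : Fin k → ℕ} {i j : Fin k} (hij : i ≠ j) (h : a i = a j) :
    D x a b = 0 := by
  unfold D
  apply Matrix.det_zero_of_row_eq hij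
  ext l
  simp [h]

lemma D_zero_right {k : ℕ} {a b : Fin k → ℕ} {i j : Fin k} (hij : i ≠ j) (h : b i = b j) :
    D x a b = 0 := by
  rw [D_comm]; exact D_zero_left x hij h

/-- shift the entries in `E` by one -/
def sh {k : ℕ} (E : Finset (Fin k)) (a : Fin k → ℕ) : Fin k → ℕ :=
  fun i => a i + if i ∈ E then 1 else 0

open Polynomial in
lemma expand {k : ℕ} (a b : Fin k → ℕ) :
    (Matrix.of fun i j => (Polynomial.C (x (a i + b j)) + Polynomial.X * Polynomial.C (x (a i + b j + 1)) : R[X])).det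
      = ∑ E : Finset (Fin k), Polynomial.X ^ E.card * Polynomial.C (D x (sh E a) b) := by
  have h1 : (Matrix.of fun i j => (Polynomial.C (x (a i + b j)) + Polynomial.X * Polynomial.C (x (a i + b j + 1)) : R[X]))
     = (fun i => (Polynomial.X : R[X]) • (fun j => (Polynomial.C (x (a i + b j + 1)) : R[X])))
      + (fun i => (fun j => (Polynomial.C (x (a i + b j)) : R[X]))) := by
    ext1 i j
    simp [add_comm]
  have h2 := (Matrix.detRowAlternating (n := Fin k) (R := R[X])).toMultilinearMap.map_add_univ
     (fun i => (Polynomial.X : R[X]) • (fun j => (Polynomial.C (x (a i + b j + 1)) : R[X])))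
      (fun i => (fun j => (Polynomial.C (x (a i + b j)) : R[X])))
  rw [h1]
  refine h2.trans (Finset.sum_congr rfl fun E _ => ?_)
  have h3 := (Matrix.detRowAlternating (n := Fin k) (R := R[X])).toMultilinearMap.map_piecewise_smul
     (fun _ => (Polynomial.X : R[X]))
     (fun i j => (Polynomial.C (x (sh E a i + b j)) : R[X])) E
  have h4 : E.piecewise (fun i => (Polynomial.X : R[X]) • (fun j => (Polynomial.C (x (a i + b j + 1)) : R[X])))
      (fun i => (fun j => (Polynomial.C (x (a i + b j)) : R[X]))) =
      E.piecewise (fun i => (Polynomial.X : R[X]) • (fun j => (Polynomial.C (x (sh E a i + b j)) : R[X])))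
       (fun i j => (Polynomial.C (x (sh E a i + b j)) : R[X])) := by
    ext1 i
    by_cases hi : i ∈ E
    · simp [hi, sh, add_right_comm]
    · simp [hi, sh]
  rw [h4]
  refine h3.trans ?_
  rw [Finset.prod_const, smul_eq_mul]
  congr 1
  unfold D
  rw [RingHom.map_det]
  rfl

lemma shift_sum {k : ℕ} (a b : Fin k → ℕ) (l : ℕ) :
    ∑ E : Finset (Fin k) with E.card = l, D x (sh E a) b
      = ∑ E : Finset (Fin k) with E.card = l, D x a (sh E b) := by
  have h1 := expand x a b
  have h2 := expand x b a
  rw [← Matrix.det_transpose] at h2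
  have h3 : (Matrix.of fun i j => (Polynomial.C (x (b i + a j)) + Polynomial.X * Polynomial.C (x (b i + a j + 1)) : Polynomial R))ᵀ
    = (Matrix.of fun i j => (Polynomial.C (x (a i + b j)) + Polynomial.X * Polynomial.C (x (a i + b j + 1)) : Polynomial R)) := by
    ext1 i j
    simp [add_comm]
  rw [h3, h1] at h2
  have h4 := congrArg (fun p => Polynomial.coeff p l) h2
  simp only [Polynomial.finsetSum_coeff, Polynomial.coeff_mul_C, Polynomial.coeff_X_pow] at h4
  rw [Finset.sum_filter, Finset.sum_filter]
  simp only [ite_mul, one_mul, zero_mul] at h4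
  simp only [eq_comm (b := l)]
  rw [h4]
  exact Finset.sum_congr rfl fun E _ => by rw [D_comm]

lemma reshape_aux {k p q : ℕ} (a : Fin k → ℕ) (ha : ∀ i, a i < p) (l : ℕ) (hl : l ≤ q) :
    ∀ b : Fin k → ℕ, (∀ i, b i < q + 1) → (∀ i, b i ≠ q - l) → D x a b ∈ K x k (p + 1) q := by
  induction l using Nat.strong_induction_on with
  | _ l ih =>
  intro b hb hbl
  by_cases hinj : Function.Injective b
  swap
  · simp only [Function.Injective] at hinj
    push Not at hinj
    obtain ⟨i, j, h1, h2⟩ := hinj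
    rw [D_zero_right x h2 h1]
    exact Ideal.zero_mem _
  by_cases hex : ∃ l' < l, ∀ i, b i ≠ q - l'
  · obtain ⟨l', hl', h⟩ := hex
    exact ih l' hl' (by omega) b hb h
  push Not at hex
  set top : Finset (Fin k) := Finset.univ.filter fun j => q - l < b j with htop
  have htopmem : ∀ j, j ∈ top ↔ q - l < b j := by intro j; simp [htop]
  have hcard : top.card = l := by
    have : top.image b = Finset.Ioc (q - l) q := by
      ext y
      simp only [Finset.mem_image, Finset.mem_Ioc, htopmem]
      constructor
      · rintro ⟨j, hj, rfl⟩
        exact ⟨hj, by have := hb j; omega⟩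
      · rintro ⟨h1, h2⟩
        obtain ⟨i, hi⟩ := hex (q - y) (by omega)
        exact ⟨i, by omega, by omega⟩
    have h2 := Finset.card_image_of_injective top hinj
    rw [this, Nat.card_Ioc] at h2
    omega
  set b' : Fin k → ℕ := fun j => if j ∈ top then b j - 1 else b j with hb'
  have hb'q : ∀ j, b' j < q := by
    intro j
    have h1 := hb j
    have h2 := hbl j
    have h3 := htopmem j
    simp only [hb']
    split_ifs with h
    · have := h3.1 h; omega
    · have := mt h3.2 h; omega
  have hsh : sh top b' = b := by
    ext j
    have h3 := htopmem j
    simp only [sh, hb']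
    split_ifs with h
    · have := h3.1 h; omega
    · rfl
  have hsum := shift_sum x a b' l
  have hR : ∑ E : Finset (Fin k) with E.card = l, D x (sh E a) b' ∈ K x k (p + 1) q := by
    refine Ideal.sum_mem _ fun E _ => D_mem x (fun i => ?_) hb'q
    have := ha i
    simp only [sh]
    split_ifs <;> omega
  rw [hsum, ← Finset.add_sum_erase _ _ (a := top) (by simp [hcard]), hsh] at hR
  refine (Ideal.add_mem_iff_left _ (Ideal.sum_mem _ fun E hE => ?_)).1 hR
  simp only [Finset.mem_erase, Finset.mem_filter, Finset.mem_univ, true_and] at hE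
  obtain ⟨hne, hEc⟩ := hE
  have hns : (top \ E).Nonempty := by
    rw [Finset.sdiff_nonempty]
    intro hsub
    exact hne (Finset.eq_of_subset_of_card_le hsub (by omega)).symm
  obtain ⟨j, hj, hmax⟩ := Finset.exists_max_image _ b hns
  rw [Finset.mem_sdiff] at hj
  have hjt := (htopmem j).1 hj.1
  have hjq := hb j
  refine ih (q - b j) (by omega) (by omega) _ ?_ ?_
  · intro i
    have := hb'q i
    simp only [sh]
    split_ifs <;> omega
  · intro i hi
    have hi' : sh E b' i = b j := by omega
    have h3 := htopmem i
    have h4 := hbl i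
    simp only [sh, hb'] at hi'
    by_cases hit : i ∈ top
    · have h5 := h3.1 hit
      by_cases hiE : i ∈ E
      · simp only [hit, hiE, if_true] at hi'
        have : i = j := hinj (by omega)
        exact hj.2 (this ▸ hiE)
      · have := hmax i (by simp [hit, hiE])
        simp only [hit, hiE, if_true, if_false] at hi'
        omega
    · have := mt h3.2 hit
      simp only [hit, if_false] at hi'
      split_ifs at hi' <;> omega

lemma reshape_one {k p q : ℕ} (hk : k ≤ q) : K x k p (q + 1) ≤ K x k (p + 1) q := by
  unfold K
  rw [Ideal.span_le]
  rintro _ ⟨a, b, ha, hb, rfl⟩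
  -- some value in `0..q` is missed by `b`
  have : ∃ y ∈ Finset.range (q + 1), y ∉ Finset.univ.image b := by
    by_contra! h
    have h1 := Finset.card_le_card h
    have h2 : (Finset.univ.image b).card ≤ _ := Finset.card_image_le
    simp only [Finset.card_range, Finset.card_univ, Fintype.card_fin] at h1 h2
    omega
  obtain ⟨y, hy, hyb⟩ := this
  simp only [Finset.mem_range, Finset.mem_image, Finset.mem_univ, true_and, not_exists] at hy hyb
  refine reshape_aux x a ha (q - y) (by omega) b hb fun i hi => hyb i (by omega)

lemma reshape_add {k p q : ℕ} (e : ℕ) (hk : k ≤ q) : K x k p (q + e) ≤ K x k (p + e) q := by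
  induction e generalizing p with
  | zero => exact le_rfl
  | succ e ih =>
    refine (reshape_one x (q := q + e) (by omega)).trans ?_
    have := ih (p := p + 1)
    rwa [show p + (e + 1) = p + 1 + e by omega]

lemma reshape {k p q p' q' : ℕ} (h : p + q = p' + q') (h1 : k ≤ p') (h2 : k ≤ q') :
    K x k p q ≤ K x k p' q' := by
  rcases le_total q' q with hq | hq
  · obtain ⟨e, rfl⟩ := Nat.exists_eq_add_of_le hq
    obtain rfl : p' = p + e := by omega
    exact reshape_add x e h2
  · obtain ⟨e, rfl⟩ := Nat.exists_eq_add_of_le hq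
    obtain rfl : p = p' + e := by omega
    rw [K_comm x k (p' + e), K_comm x k p']
    exact reshape_add x e h1

lemma exchange {u w : ℕ} (a b : Fin u → ℕ) (a' b' : Fin (w + 1) → ℕ) (i0 : Fin (w + 1))
    (h : ∀ i, ∃ i', i' ≠ i0 ∧ a' i' = a i) :
    ∑ j : Fin (w + 1), (-1) ^ (i0 + j : ℕ) * (D x (Fin.cons (a' i0) a : Fin (u + 1) → ℕ) (Fin.cons (b' j) b : Fin (u + 1) → ℕ) *
      D x (a' ∘ i0.succAbove) (b' ∘ j.succAbove)) = D x a b * D x a' b' := by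
  have hrow : ∀ y : ℕ, ∑ j : Fin (w + 1), (-1) ^ (i0 + j : ℕ) * x (y + b' j) * D x (a' ∘ i0.succAbove) (b' ∘ j.succAbove)
      = D x (Function.update a' i0 y) b' := by
    intro y
    conv_rhs => rw [D, Matrix.det_succ_row _ i0]
    refine Finset.sum_congr rfl fun j _ => ?_
    simp only [Matrix.of_apply, Function.update_self]
    congr 1
    unfold D
    congr 1
    ext i l
    simp [Function.update_of_ne (Fin.succAbove_ne i0 i)]
  have hz : ∀ i, D x (Function.update a' i0 (a i)) b' = 0 := by
    intro i
    obtain ⟨i', hne, hi'⟩ := h i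
    refine D_zero_left x hne ?_
    simp [Function.update_of_ne hne, hi']
  have hcol : ∀ c : ℕ, D x (Fin.cons (a' i0) a : Fin (u + 1) → ℕ) (Fin.cons c b : Fin (u + 1) → ℕ)
      = x (a' i0 + c) * D x a b + ∑ i : Fin u, (-1) ^ (i + 1 : ℕ) * x (a i + c) *
        D x ((Fin.cons (a' i0) a : Fin (u + 1) → ℕ) ∘ i.succ.succAbove) b := by
    intro c
    conv_lhs => rw [D, Matrix.det_succ_column_zero, Fin.sum_univ_succ]
    congr 1
    · simp only [Matrix.of_apply, Fin.cons_zero, Fin.val_zero, pow_zero, one_mul]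
      congr 1
  simp only [hcol, add_mul, mul_add, Finset.sum_add_distrib, Finset.sum_mul, Finset.mul_sum]
  rw [Finset.sum_comm]
  have e1 : ∑ j : Fin (w+1), (-1) ^ (i0 + j : ℕ) * (x (a' i0 + b' j) * D x a b * D x (a' ∘ i0.succAbove) (b' ∘ j.succAbove))
     = D x a b * D x a' b' := by
    have := hrow (a' i0)
    rw [Function.update_eq_self] at this
    rw [← this, Finset.mul_sum]
    exact Finset.sum_congr rfl fun j _ => by ring
  rw [e1, add_eq_left]
  refine Finset.sum_eq_zero fun i _ => ?_
  have := hrow (a i)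
  rw [hz] at this
  rw [← mul_zero ((-1) ^ (i + 1 : ℕ) * D x ((Fin.cons (a' i0) a : Fin (u + 1) → ℕ) ∘ i.succ.succAbove) b),
    ← this, Finset.mul_sum]
  exact Finset.sum_congr rfl fun j _ => by ring

lemma exchange_ideal {u w q q' : ℕ} (huw : u ≤ w) (hq : q' ≤ q) :
    K x u (u + 1) q * K x (w + 1) (w + 1) q' ≤ K x (u + 1) (u + 1) q * K x w (w + 1) q' := by
  conv_lhs => rw [K, K, Ideal.span_mul_span']
  rw [Ideal.span_le]
  rintro _ ⟨_, ⟨a, b, ha, hb, rfl⟩, _, ⟨a', b', ha', hb', rfl⟩, rfl⟩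
  simp only
  by_cases hinj : Function.Injective a'
  swap
  · simp only [Function.Injective] at hinj
    push Not at hinj
    obtain ⟨i, j, h1, h2⟩ := hinj
    rw [D_zero_left x h2 h1, mul_zero]
    exact Ideal.zero_mem _
  have hsurj : ∀ y < w + 1, ∃ i, a' i = y := by
    have : Finset.univ.image a' = Finset.range (w + 1) := by
      apply Finset.eq_of_subset_of_card_le
      · intro y hy
        simp only [Finset.mem_image, Finset.mem_univ, true_and] at hy
        obtain ⟨i, rfl⟩ := hy
        simpa using ha' i
      · rw [Finset.card_image_of_injective _ hinj]; simp
    intro y hy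
    have h : y ∈ Finset.univ.image a' := by rw [this]; simpa using hy
    simpa using h
  have : ∃ y ∈ Finset.range (u + 1), y ∉ Finset.univ.image a := by
    by_contra! h
    have h1 := Finset.card_le_card h
    have h2 : (Finset.univ.image a).card ≤ _ := Finset.card_image_le
    simp only [Finset.card_range, Finset.card_univ, Fintype.card_fin] at h1 h2
    omega
  obtain ⟨y, hy, hya⟩ := this
  simp only [Finset.mem_range, Finset.mem_image, Finset.mem_univ, true_and, not_exists] at hy hya
  obtain ⟨i0, hi0⟩ := hsurj y (by omega)
  have hex := exchange x a b a' b' i0 (by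
    intro i
    obtain ⟨i', hi'⟩ := hsurj (a i) (by have := ha i; omega)
    refine ⟨i', ?_, hi'⟩
    rintro rfl
    exact hya i (by omega))
  rw [SetLike.mem_coe, ← hex]
  refine Ideal.sum_mem _ fun j _ => Ideal.mul_mem_left _ _ (Ideal.mul_mem_mul ?_ ?_)
  · refine D_mem x (fun i => ?_) (fun i => ?_)
    · refine Fin.cases ?_ (fun i => ?_) i
      · simp only [Fin.cons_zero]; omega
      · simpa using ha i
    · refine Fin.cases ?_ (fun i => ?_) i
      · have := hb' j
        simp only [Fin.cons_zero]; omega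
      · simpa using hb i
  · exact D_mem x (fun i => ha' _) (fun i => hb' _)

lemma K_exchange {r s u v : ℕ} (huv : u < v) (hr : v ≤ r) (hs : v ≤ s) :
    K x u r s * K x v r s ≤ K x (u + 1) r s * K x (v - 1) r s := by
  obtain ⟨w, rfl⟩ : ∃ w, v = w + 1 := ⟨v - 1, by omega⟩
  have h1 : K x u r s ≤ K x u (u + 1) (r + s - (u + 1)) := reshape x (by omega) (by omega) (by omega)
  have h2 : K x (w + 1) r s ≤ K x (w + 1) (w + 1) (r + s - (w + 1)) :=
    reshape x (by omega) (by omega) (by omega)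
  have h3 : K x (u + 1) (u + 1) (r + s - (u + 1)) ≤ K x (u + 1) r s :=
    reshape x (by omega) (by omega) (by omega)
  have h4 : K x w (w + 1) (r + s - (w + 1)) ≤ K x w r s :=
    reshape x (by omega) (by omega) (by omega)
  exact (Ideal.mul_mono h1 h2).trans
    ((exchange_ideal x (by omega) (by omega)).trans (Ideal.mul_mono h3 h4))

lemma K_anti {r s k : ℕ} : K x (k + 1) r s ≤ K x k r s := by
  conv_lhs => rw [K]
  rw [Ideal.span_le]
  rintro _ ⟨a, b, ha, hb, rfl⟩
  rw [SetLike.mem_coe, D, Matrix.det_succ_row_zero]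
  refine Ideal.sum_mem _ fun j _ => Ideal.mul_mem_left _ _ ?_
  exact D_mem x (a := a ∘ Fin.succ) (b := b ∘ j.succAbove) (fun i => ha _) (fun i => hb _)

lemma balance {ι : Type*} [Fintype ι] [DecidableEq ι] (J : ℕ → Ideal R) (B t : ℕ)
    (hJ : ∀ u v, u < v → v ≤ B → J u * J v ≤ J (u + 1) * J (v - 1))
    (hanti : Antitone J) (N : ℕ) :
    ∀ u : ι → ℕ, (∀ i, u i ≤ B) → t * Fintype.card ι ≤ ∑ i, u i → ∑ i, (t - u i) = N →
      ∏ i, J (u i) ≤ J t ^ Fintype.card ι := by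
  induction N with
  | zero =>
    intro u _ _ h0
    have h : ∀ i, t ≤ u i := by
      intro i
      have := (Finset.sum_eq_zero_iff.1 h0) i (Finset.mem_univ i)
      omega
    calc ∏ i, J (u i) ≤ ∏ _i : ι, J t := Finset.prod_le_prod' fun i _ => hanti (h i)
      _ = _ := by simp
  | succ N ih =>
    intro u hB hsum hN
    obtain ⟨i, hi⟩ : ∃ i, u i < t := by
      by_contra! h
      rw [Finset.sum_eq_zero (fun i _ => by have := h i; omega)] at hN
      omega
    obtain ⟨j, hj⟩ : ∃ j, t < u j := by
      by_contra! h
      have : ∑ i, u i < ∑ _i : ι, t :=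
        Finset.sum_lt_sum (fun i _ => h i) ⟨i, Finset.mem_univ i, hi⟩
      simp only [Finset.sum_const, Finset.card_univ, smul_eq_mul] at this
      rw [mul_comm] at this
      omega
    have hij : j ≠ i := by rintro rfl; omega
    set u' : ι → ℕ := fun l => if l = i then u i + 1 else if l = j then u j - 1 else u l with hu'
    have hui : u' i = u i + 1 := by simp [hu']
    have huj : u' j = u j - 1 := by simp [hu', hij]
    have huo : ∀ l ∈ (Finset.univ.erase i).erase j, u' l = u l := by
      intro l hl
      simp only [Finset.mem_erase] at hl
      simp [hu', hl.1, hl.2.1]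
    have hjm : j ∈ Finset.univ.erase i := by simp [hij]
    have key := ih u' ?_ ?_ ?_
    · refine le_trans ?_ key
      rw [← Finset.mul_prod_erase _ _ (Finset.mem_univ i), ← Finset.mul_prod_erase _ _ hjm,
        ← Finset.mul_prod_erase _ (fun l => J (u' l)) (Finset.mem_univ i),
        ← Finset.mul_prod_erase _ (fun l => J (u' l)) hjm, ← mul_assoc, ← mul_assoc, hui, huj,
        Finset.prod_congr rfl (fun l hl => congrArg J (huo l hl))]
      exact Ideal.mul_mono_left (hJ _ _ (by omega) (hB j))
    · intro l
      have := hB l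
      have := hB j
      simp only [hu']
      split_ifs <;> omega
    · rw [← Finset.add_sum_erase _ _ (Finset.mem_univ i), ← Finset.add_sum_erase _ _ hjm] at hsum ⊢
      rw [hui, huj, Finset.sum_congr rfl huo]
      change _ ≤ u i + 1 + (u j - 1 + ∑ l ∈ (Finset.univ.erase i).erase j, u l)
      omega
    · rw [← Finset.add_sum_erase _ _ (Finset.mem_univ i), ← Finset.add_sum_erase _ _ hjm] at hN ⊢
      rw [hui, huj, Finset.sum_congr rfl (fun l hl => by rw [huo l hl])]
      omega

end HankelAux

/-- If `δ_1,...,δ_m` are minors (of sizes `u 1,...,u m`) of the `r×s` Hankel matrix `H`, with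
`m ≤ d` and `Σ u i ≥ t·d`, then `δ_1···δ_m ∈ I_t(H)^d`. -/
theorem hankel_minor_product_mem_power (F : Type*) [Field F] (r s t d m : ℕ)
    (hr : 1 ≤ r) (htr : t ≤ r) (hts : t ≤ s) (h1t : 1 ≤ t) (hd : 1 ≤ d)
    (H : Matrix (Fin r) (Fin s) (MvPolynomial (Fin (s + r - 1)) F))
    (hH : ∀ a b, H a b = X ⟨(a : ℕ) + (b : ℕ), by have := a.2; have := b.2; omega⟩)
    (I : Ideal (MvPolynomial (Fin (s + r - 1)) F))
    (hI : I = Ideal.span {x | ∃ (f : Fin t → Fin r) (g : Fin t → Fin s),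
      x = (H.submatrix f g).det})
    (u : Fin m → ℕ) (f : ∀ i, Fin (u i) → Fin r) (g : ∀ i, Fin (u i) → Fin s)
    (hf : ∀ i, StrictMono (f i)) (hg : ∀ i, StrictMono (g i))
    (hm : m ≤ d) (hdeg : t * d ≤ ∑ i, u i) :
    (∏ i, (H.submatrix (f i) (g i)).det) ∈ I ^ d := by
  classical
  let x : ℕ → MvPolynomial (Fin (s + r - 1)) F := fun i => if h : i < s + r - 1 then X ⟨i, h⟩ else 0
  have hHx : ∀ a b, H a b = x ((a : ℕ) + (b : ℕ)) := by
    intro a b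
    have h : (a : ℕ) + (b : ℕ) < s + r - 1 := by have := a.2; have := b.2; omega
    rw [hH]
    simp only [x, dif_pos h]
  have hdet : ∀ (k : ℕ) (f : Fin k → Fin r) (g : Fin k → Fin s),
      (H.submatrix f g).det = HankelAux.D x (fun i => (f i : ℕ)) (fun i => (g i : ℕ)) := by
    intro k f g
    unfold HankelAux.D
    congr 1
    ext1 i j
    simp [hHx]
  have hKI : HankelAux.K x t r s ≤ I := by
    rw [hI, HankelAux.K]
    apply Ideal.span_mono
    rintro _ ⟨a, b, ha, hb, rfl⟩
    exact ⟨fun i => ⟨a i, ha i⟩, fun i => ⟨b i, hb i⟩, by rw [hdet]⟩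
  have hur : ∀ i, u i ≤ r := fun i => by
    simpa using Fintype.card_le_of_injective _ (hf i).injective
  have hus : ∀ i, u i ≤ s := fun i => by
    simpa using Fintype.card_le_of_injective _ (hg i).injective
  have key := HankelAux.balance (ι := Fin m ⊕ Fin (d - m)) (fun k => HankelAux.K x k r s)
    (min r s) t
    (fun a b hab hb => HankelAux.K_exchange x hab (hb.trans (min_le_left _ _))
      (hb.trans (min_le_right _ _)))
    (antitone_nat_of_succ_le fun k => HankelAux.K_anti x) _
    (Sum.elim u fun _ => 0) ?_ ?_ rfl
  · have h0 : HankelAux.K x 0 r s = 1 := by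
      rw [Ideal.one_eq_top, Ideal.eq_top_iff_one]
      have := HankelAux.D_mem x (k := 0) (p := r) (q := s) (a := Fin.elim0) (b := Fin.elim0)
        (fun i => i.elim0) (fun i => i.elim0)
      simpa [HankelAux.D] using this
    simp only [Fintype.prod_sum_type, Sum.elim_inl, Sum.elim_inr, h0, Finset.prod_const_one,
      mul_one, Fintype.card_sum, Fintype.card_fin] at key
    rw [show m + (d - m) = d by omega] at key
    refine Ideal.pow_right_mono hKI d (key ?_)
    refine Ideal.prod_mem_prod fun i _ => ?_
    rw [hdet]
    exact HankelAux.D_mem x (fun j => (f i j).2) (fun j => (g i j).2)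
  · rintro (i | i)
    · exact le_min (hur i) (hus i)
    · exact Nat.zero_le _
  · simp only [Fintype.sum_sum_type, Sum.elim_inl, Sum.elim_inr, Finset.sum_const_zero, add_zero,
      Fintype.card_sum, Fintype.card_fin]
    rwa [show m + (d - m) = d by omega]
end
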